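/- The Hochschild cohomology algebra HH^•(FK(3)) is a finitely generated k-algebra; in fact it admits a minimal generating set consisting of exactly 14 homogeneous elements, of cohomological degrees 0,0,0,1,1,1,1,1,2,2,2,2,3,4 respectively. -/

import Mathlib

/-!
The Hochschild cohomology algebra `HH^•(FK(3)) = ⊕ₙ Extⁿ_{A^e}(A,A)` (with the cup product,
which coincides with the Yoneda composition product) is a finitely generated `k`-algebra;
it admits a minimal generating set of exactly `14` homogeneous elements, of cohomological
degrees `0,0,0,1,1,1,1,1,2,2,2,2,3,4`.
-/

open FreeAlgebra CategoryTheory CategoryTheory.Abelian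
open scoped TensorProduct

/-- The defining relations of the Fomin–Kirillov algebra `FK(3)`. -/
inductive FKRel (k : Type) [Field k] : FreeAlgebra k (Fin 3) → FreeAlgebra k (Fin 3) → Prop
  | sq_a : FKRel k (ι k (0 : Fin 3) * ι k (0 : Fin 3)) 0
  | sq_b : FKRel k (ι k (1 : Fin 3) * ι k (1 : Fin 3)) 0
  | sq_c : FKRel k (ι k (2 : Fin 3) * ι k (2 : Fin 3)) 0
  | rel1 : FKRel k (ι k (0 : Fin 3) * ι k (1 : Fin 3) + ι k (1 : Fin 3) * ι k (2 : Fin 3) +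
      ι k (2 : Fin 3) * ι k (0 : Fin 3)) 0
  | rel2 : FKRel k (ι k (1 : Fin 3) * ι k (0 : Fin 3) + ι k (0 : Fin 3) * ι k (2 : Fin 3) +
      ι k (2 : Fin 3) * ι k (1 : Fin 3)) 0

/-- The Fomin–Kirillov algebra on three generators. -/
abbrev FK3 (k : Type) [Field k] := RingQuot (FKRel k)

variable (k : Type) [Field k]

/-- The enveloping algebra `A^e = A ⊗ₖ Aᵒᵖ` of `A = FK(3)`. -/
abbrev FKAe := FK3 k ⊗[k] (FK3 k)ᵐᵒᵖ

noncomputable instance : Module (FKAe k) (FK3 k) := TensorProduct.Algebra.module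

/-- `A = FK(3)` as a bimodule over itself, i.e. as an `A^e`-module. -/
noncomputable abbrev AAmod : ModuleCat.{0} (FKAe k) := ModuleCat.of (FKAe k) (FK3 k)

noncomputable instance : HasDerivedCategory.{1} (ModuleCat.{0} (FKAe k)) :=
  HasDerivedCategory.standard _

instance : HasExt.{1} (ModuleCat.{0} (FKAe k)) :=
  hasExt_of_hasDerivedCategory.{1} (ModuleCat.{0} (FKAe k))

/-- The Hochschild cohomology `HHⁿ(FK(3)) = Extⁿ_{A^e}(A,A)`. -/
abbrev HHExt (n : ℕ) : Type 1 := Ext (AAmod k) (AAmod k) n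

/-- The cohomological degrees `0,0,0,1,1,1,1,1,2,2,2,2,3,4` of the 14 generators. -/
def hhDegs : Fin 14 → ℕ := ![0, 0, 0, 1, 1, 1, 1, 1, 2, 2, 2, 2, 3, 4]

/-- The graded subalgebra of `HH^•(FK(3))` generated (over `k`) by a family of homogeneous
elements: the closure of the family under addition, negation, `k`-scalars (via composition with
`c • 𝟙`) and the cup (Yoneda composition) product. -/
inductive ExtGen (S : ∀ n : ℕ, Set (HHExt k n)) : ∀ n : ℕ, HHExt k n → Prop
  | of {n : ℕ} (x : HHExt k n) (hx : x ∈ S n) : ExtGen S n x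
  | zero (n : ℕ) : ExtGen S n 0
  | one : ExtGen S 0 (Ext.mk₀ (𝟙 (AAmod k)))
  | add {n : ℕ} (x y : HHExt k n) : ExtGen S n x → ExtGen S n y → ExtGen S n (x + y)
  | neg {n : ℕ} (x : HHExt k n) : ExtGen S n x → ExtGen S n (-x)
  | smul {n : ℕ} (c : k) (x : HHExt k n) :
      ExtGen S n x → ExtGen S n ((Ext.mk₀ (c • 𝟙 (AAmod k))).comp x (zero_add n))
  | mul {a b : ℕ} (x : HHExt k a) (y : HHExt k b) :
      ExtGen S a x → ExtGen S b y → ExtGen S (a + b) (x.comp y rfl)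

/-- The set of the homogeneous elements `g i`, `i ∈ T`, of the respective degrees. -/
def famSet (g : ∀ i : Fin 14, HHExt k (hhDegs i)) (T : Set (Fin 14)) :
    ∀ n : ℕ, Set (HHExt k n) :=
  fun n => {x | ∃ i ∈ T, ∃ h : hhDegs i = n, x = h ▸ g i}

set_option linter.unusedSectionVars false

/-- Formal integral combinations of indices. -/
abbrev LC := List (ℤ × ℕ)

namespace LC

/-- Multiply all coefficients by `c`. -/
def scale (c : ℤ) (L : LC) : LC := L.map fun p => (c * p.1, p.2)

/-- Substitute the combination `t i` for every index `i`. -/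
def subst (L : LC) (t : ℕ → LC) : LC := L.flatMap fun p => scale p.1 (t p.2)

/-- Rename the indices. -/
def rename (f : ℕ → ℕ) (L : LC) : LC := L.map fun p => (p.1, f p.2)

/-- Insert a term in a combination sorted by index, merging equal indices. -/
def ins (c : ℤ) (i : ℕ) : LC → LC
  | [] => [(c, i)]
  | p :: L => if Nat.blt i p.2 then (c, i) :: p :: L
      else if Nat.beq i p.2 then (c + p.1, i) :: L else p :: ins c i L

/-- Collect the terms of a combination. -/
def collect (L : LC) : LC := L.foldr (fun p acc => ins p.1 p.2 acc) []

/-- All the collected coefficients vanish. -/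
def isZero (L : LC) : Bool := (collect L).all fun p => p.1 == 0

/-- The first `N` members of a family of combinations vanish. -/
def allZero (N : ℕ) (f : ℕ → LC) : Bool := (List.range N).all fun i => isZero (f i)

/-- Discard a family of combinations from index `N` on. -/
def cut (N : ℕ) (t : ℕ → LC) (i : ℕ) : LC := if Nat.blt i N then t i else []

/-- The difference of two combinations. -/
def sub (L L' : LC) : LC := L ++ scale (-1) L'

section Eval

variable {V W : Type*} [AddCommGroup V] [AddCommGroup W] (e : ℕ → V) (f : ℕ → W)

/-- The value of a combination at a family of vectors. -/
def ev (L : LC) : V := (L.map fun p => p.1 • e p.2).sum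

@[simp] theorem ev_nil : ev e [] = 0 := rfl

@[simp] theorem ev_cons (p : ℤ × ℕ) (L : LC) : ev e (p :: L) = p.1 • e p.2 + ev e L := by
  simp [ev]

@[simp] theorem ev_append (L L' : LC) : ev e (L ++ L') = ev e L + ev e L' := by
  simp [ev]

@[simp] theorem ev_scale (c : ℤ) (L : LC) : ev e (scale c L) = c • ev e L := by
  induction L with
  | nil => simp [scale]
  | cons p L ih =>
    have : scale c (p :: L) = (c * p.1, p.2) :: scale c L := rfl
    rw [this, ev_cons, ev_cons, ih, smul_add, mul_smul]

theorem ev_flatMap {α : Type*} (L : List α) (t : α → LC) :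
    ev e (L.flatMap t) = (L.map fun a => ev e (t a)).sum := by
  induction L with
  | nil => rfl
  | cons p L ih => simp [ih]

theorem ev_subst (L : LC) (t : ℕ → LC) : ev e (subst L t) = ev (fun i => ev e (t i)) L := by
  rw [subst, ev_flatMap]
  simp only [ev_scale]
  rfl

theorem ev_rename (g : ℕ → ℕ) (L : LC) : ev e (rename g L) = ev (fun i => e (g i)) L := by
  simp [rename, ev, Function.comp_def]

theorem ev_sub (L L' : LC) : ev e (sub L L') = ev e L - ev e L' := by
  simp [sub, sub_eq_add_neg]

theorem ev_ins (c : ℤ) (i : ℕ) (L : LC) : ev e (ins c i L) = c • e i + ev e L := by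
  induction L with
  | nil => simp [ins]
  | cons p L ih =>
    rw [ins]
    split_ifs with h1 h2
    · simp
    · have : i = p.2 := Nat.eq_of_beq_eq_true h2
      subst this
      simp [add_smul, add_assoc]
    · simp only [ev_cons, ih]; abel

theorem ev_collect (L : LC) : ev e (collect L) = ev e L := by
  induction L with
  | nil => rfl
  | cons p L ih =>
    have : collect (p :: L) = ins p.1 p.2 (collect L) := rfl
    rw [this, ev_ins, ih, ev_cons]

theorem ev_eq_zero {L : LC} (h : isZero L = true) : ev e L = 0 := by
  rw [← ev_collect]
  rw [isZero, List.all_eq_true] at h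
  refine List.sum_eq_zero fun x hx => ?_
  obtain ⟨p, hp, rfl⟩ := List.mem_map.1 hx
  have := h p hp
  simp only [beq_iff_eq] at this
  simp [this]

theorem ev_eq_ev {L L' : LC} (h : isZero (sub L L') = true) : ev e L = ev e L' := by
  rw [← sub_eq_zero, ← ev_sub, ev_eq_zero e h]

theorem ev_map {F : Type*} [FunLike F V W] [AddMonoidHomClass F V W] (φ : F) (L : LC) :
    φ (ev e L) = ev (fun i => φ (e i)) L := by
  simp [ev, map_list_sum, Function.comp_def]

theorem ev_zero_fun (L : LC) : ev (fun _ => (0 : V)) L = 0 := by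
  simp [ev]

theorem ev_mem {R : Type*} [Ring R] [Module R V] (S : Submodule R V) (h : ∀ i, e i ∈ S) (L : LC) :
    ev e L ∈ S := by
  refine S.toAddSubgroup.list_sum_mem fun x hx => ?_
  obtain ⟨p, -, rfl⟩ := List.mem_map.1 hx
  exact S.toAddSubgroup.zsmul_mem (h _) _

/-- The additive map `φ` is described by the family `t` on the given families of vectors. -/
def Tab {F : Type*} [FunLike F V W] (φ : F) (t : ℕ → LC) : Prop := ∀ i, φ (e i) = ev f (t i)

variable {e f}

theorem Tab.ev {F : Type*} [FunLike F V W] [AddMonoidHomClass F V W] {φ : F} {t : ℕ → LC}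
    (h : Tab e f φ t) (L : LC) : φ (LC.ev e L) = LC.ev f (subst L t) := by
  rw [ev_map, ev_subst]
  congr 1
  exact funext h

end Eval

end LC

namespace Module.Basis

open LC

variable {k V W : Type*} [Field k] [AddCommGroup V] [Module k V] [AddCommGroup W] [Module k W]
variable {N N' : ℕ} (b : Basis (Fin N) k V) (b' : Basis (Fin N') k W)

/-- The basis vectors, extended by zero. -/
noncomputable def e (i : ℕ) : V := if h : i < N then b ⟨i, h⟩ else 0

theorem e_of_lt {i : ℕ} (h : i < N) : b.e i = b ⟨i, h⟩ := dif_pos h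

theorem e_of_le {i : ℕ} (h : N ≤ i) : b.e i = 0 := dif_neg (by omega)

theorem ext_of_e {φ ψ : V →ₗ[k] W} (h : ∀ i < N, φ (b.e i) = ψ (b.e i)) : φ = ψ :=
  b.ext fun i => by simpa [e_of_lt b i.2] using h i i.2

theorem map_mem_of_e (φ : V →ₗ[k] W) (S : Submodule k W) (h : ∀ i, φ (b.e i) ∈ S) (v : V) :
    φ v ∈ S := by
  rw [← b.sum_repr v, map_sum]
  refine S.sum_mem fun i _ => ?_
  rw [map_smul]
  exact S.smul_mem _ (by simpa [e_of_lt b i.2] using h i)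

/-- The linear map with prescribed values on the basis. -/
noncomputable def lmap (t : ℕ → LC) : V →ₗ[k] W :=
  b.constr k fun i => ev b'.e (t i)

theorem tab_lmap (t : ℕ → LC) : Tab b.e b'.e (b.lmap b' t) (cut N t) := by
  intro i
  by_cases h : i < N
  · rw [e_of_lt b h, lmap, Module.Basis.constr_basis, cut, if_pos (by simpa using h)]
  · rw [e_of_le b (by omega), map_zero, cut, if_neg (by simpa using h), ev_nil]

theorem eq_of_allZero {φ ψ : V →ₗ[k] W} {t s : ℕ → LC} {f : ℕ → W} (h : Tab b.e f φ t)
    (h' : Tab b.e f ψ s) (hz : allZero N (fun i => sub (t i) (s i)) = true) : φ = ψ := by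
  refine b.ext_of_e fun i hi => ?_
  rw [h i, h' i]
  rw [allZero, List.all_eq_true] at hz
  exact ev_eq_ev _ (hz i (List.mem_range.2 hi))

/-- The standard basis of a finite power. -/
noncomputable def pow (r : ℕ) : Basis (Fin (r * N)) k (Fin r → V) :=
  ((Pi.basis fun _ : Fin r => b).reindex (Equiv.sigmaEquivProd _ _)).reindex finProdFinEquiv

theorem pow_e (r i : ℕ) (w : Fin r) : (b.pow r).e i w =
    if w.1 = i / N then b.e (i % N) else 0 := by
  classical
  rcases Nat.eq_zero_or_pos N with hN | hN
  · subst hN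
    rw [e_of_le _ (by simp), e_of_le _ (by simp)]
    simp
  by_cases h : i < r * N
  · rw [e_of_lt _ h]
    have h1 : i / N < r := Nat.div_lt_of_lt_mul (by rwa [mul_comm])
    rw [e_of_lt b (Nat.mod_lt _ hN)]
    simp only [pow, Module.Basis.reindex_apply]
    have : finProdFinEquiv.symm (⟨i, h⟩ : Fin (r * N)) =
        (⟨i / N, h1⟩, ⟨i % N, Nat.mod_lt _ hN⟩) := rfl
    rw [this]
    simp only [Equiv.sigmaEquivProd_symm_apply, Pi.basis_apply]
    by_cases hw : w.1 = i / N
    · have : w = ⟨i / N, h1⟩ := Fin.ext hw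
      subst this
      simp
    · rw [if_neg hw, Pi.single_eq_of_ne]
      exact fun h => hw (congrArg Fin.val h)
  · rw [e_of_le _ (by simpa using h)]
    have := (Nat.le_div_iff_mul_le hN).2 (not_lt.1 h)
    rw [if_neg (by omega)]; rfl

end Module.Basis

namespace FKAlg

open LC Module

/-- The multiplication table of the Fomin–Kirillov algebra in the basis of the words
`1, a, b, c, ab, bc, ba, ac, aba, abc, bac, abac`. -/
def mulTable : List (List LC) := [
    [[(1, 0)], [(1, 1)], [(1, 2)], [(1, 3)], [(1, 4)], [(1, 5)], [(1, 6)], [(1, 7)], [(1, 8)],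
      [(1, 9)], [(1, 10)], [(1, 11)]],
    [[(1, 1)], [], [(1, 4)], [(1, 7)], [], [(1, 9)], [(1, 8)], [], [], [], [(1, 11)], []],
    [[(1, 2)], [(1, 6)], [], [(1, 5)], [(1, 8)], [], [], [(1, 10)], [], [(1, 11)], [], []],
    [[(1, 3)], [(-1, 4), (-1, 5)], [(-1, 6), (-1, 7)], [], [(1, 10)], [(-1, 10)], [(1, 9)],
      [(-1, 9)], [(-1, 11)], [], [], []],
    [[(1, 4)], [(1, 8)], [], [(1, 9)], [], [], [], [(1, 11)], [], [], [], []],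
    [[(1, 5)], [(-1, 8)], [(-1, 10)], [], [], [], [(1, 11)], [(-1, 11)], [], [], [], []],
    [[(1, 6)], [], [(1, 8)], [(1, 10)], [], [(1, 11)], [], [], [], [], [], []],
    [[(1, 7)], [(-1, 9)], [(-1, 8)], [], [(1, 11)], [(-1, 11)], [], [], [], [], [], []],
    [[(1, 8)], [], [], [(1, 11)], [], [], [], [], [], [], [], []],
    [[(1, 9)], [], [(-1, 11)], [], [], [], [], [], [], [], [], []],
    [[(1, 10)], [(-1, 11)], [], [], [], [], [], [], [], [], [], []],
    [[(1, 11)], [], [], [], [], [], [], [], [], [], [], []]]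

/-- The product of two basis words. -/
def mulW (i j : ℕ) : LC := (mulTable.getD i []).getD j []

/-- The product of two basis vectors of the enveloping algebra; the index `12 * u + v` stands for
the tensor of the words `u` and `v`. -/
def mulE (i j : ℕ) : LC :=
  (mulW (i / 12) (j / 12)).flatMap fun p =>
    (mulW (j % 12) (i % 12)).map fun q => (p.1 * q.1, 12 * p.2 + q.2)

/-- The action of a basis vector of the enveloping algebra on a word. -/
def actW (i j : ℕ) : LC := subst (mulW (i / 12) j) fun l => mulW l (i % 12)

theorem mulW_lt (i j : ℕ) : ∀ p ∈ mulW i j, p.2 < 12 := by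
  have h : (mulTable.all fun r => r.all fun L => L.all fun p => Nat.blt p.2 12) = true := by
    decide +kernel
  intro p hp
  rw [mulW] at hp
  simp only [List.all_eq_true] at h
  by_cases hi : i < mulTable.length
  · rw [List.getD_eq_getElem _ _ hi] at hp
    by_cases hj : j < mulTable[i].length
    · rw [List.getD_eq_getElem _ _ hj] at hp
      simpa using h _ (List.getElem_mem hi) _ (List.getElem_mem hj) p hp
    · rw [List.getD_eq_default _ _ (not_lt.1 hj)] at hp
      simp at hp
  · rw [List.getD_eq_default _ _ (not_lt.1 hi)] at hp
    simp at hp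

theorem mulE_lt (i j : ℕ) : ∀ p ∈ mulE i j, p.2 < 144 := by
  intro p hp
  simp only [mulE, List.mem_flatMap, List.mem_map] at hp
  obtain ⟨q, hq, r, hr, rfl⟩ := hp
  have := mulW_lt _ _ q hq
  have := mulW_lt _ _ r hr
  dsimp only
  omega

theorem actW_lt (i j : ℕ) : ∀ p ∈ actW i j, p.2 < 12 := by
  intro p hp
  simp only [actW, subst, scale, List.mem_flatMap, List.mem_map] at hp
  obtain ⟨q, hq, r, hr, rfl⟩ := hp
  exact mulW_lt _ _ r hr

/-- A module over an algebra which looks like the Fomin–Kirillov algebra, as a module over its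
enveloping algebra, in the bases of words. -/
structure BasedBimodule (k E M : Type*) [Field k] [Ring E] [Algebra k E] [AddCommGroup M]
    [Module k M] [Module E M] where
  /-- the basis of the enveloping algebra -/
  bE : Basis (Fin 144) k E
  /-- the basis of the bimodule -/
  bM : Basis (Fin 12) k M
  mul_e : ∀ i < 144, ∀ j < 144, bE.e i * bE.e j = ev bE.e (mulE i j)
  smul_e : ∀ i < 144, ∀ j < 12, bE.e i • bM.e j = ev bM.e (actW i j)
  one_e : bE.e 0 = 1

variable {k E M : Type*} [Field k] [Ring E] [Algebra k E] [AddCommGroup M]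
    [Module k M] [Module E M] [IsScalarTower k E M]

/-- The linear map out of a free module given by the images of the standard basis. -/
noncomputable def lc {W : Type*} [AddCommGroup W] [Module E W] {r : ℕ} (D : Fin r → W) :
    (Fin r → E) →ₗ[E] W := Fintype.linearCombination E D

theorem lc_apply {W : Type*} [AddCommGroup W] [Module E W] {r : ℕ} (D : Fin r → W)
    (x : Fin r → E) : lc D x = ∑ w, x w • D w := rfl

theorem lc_single {W : Type*} [AddCommGroup W] [Module E W] {r : ℕ} (D : Fin r → W)
    (w : Fin r) : lc D (Pi.single w (1 : E)) = D w := by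
  rw [lc, Fintype.linearCombination_apply_single, one_smul]

theorem lc_ext {W : Type*} [AddCommGroup W] [Module E W] {r : ℕ} {f g : (Fin r → E) →ₗ[E] W}
    (h : ∀ w, f (Pi.single w 1) = g (Pi.single w 1)) : f = g :=
  LinearMap.pi_ext' fun w => LinearMap.ext_ring (h w)

theorem lc_eta {W : Type*} [AddCommGroup W] [Module E W] {r : ℕ} (f : (Fin r → E) →ₗ[E] W) :
    lc (fun w => f (Pi.single w 1)) = f :=
  lc_ext fun w => lc_single _ w

/-- Precomposition with the map of free modules given by `D`, on the level of vectors. -/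
noncomputable def pull {r s : ℕ} (D : Fin s → Fin r → E) : (Fin r → M) →ₗ[k] (Fin s → M) where
  toFun c w := lc c (D w)
  map_add' c c' := by
    funext w
    simp [lc_apply, Finset.sum_add_distrib]
  map_smul' a c := by
    funext w
    simp only [lc_apply, Pi.smul_apply, Finset.smul_sum, RingHom.id_apply]
    refine Finset.sum_congr rfl fun i _ => ?_
    rw [← algebraMap_smul E a (c i), ← algebraMap_smul E a (_ : M), ← mul_smul, ← mul_smul,
      Algebra.commutes]

theorem lc_pull {r s : ℕ} (D : Fin s → Fin r → E) (c : Fin r → M) :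
    lc (pull (k := k) D c) = (lc c).comp (lc D) := by
  refine lc_ext fun w => ?_
  rw [LinearMap.comp_apply, lc_single, lc_single]
  rfl

/-- The vectors given by a list of combinations. -/
noncomputable def vecs {V : Type*} [AddCommGroup V] (e : ℕ → V) (s : ℕ) (D : List LC)
    (w : Fin s) : V :=
  ev e (D.getD w [])

/-- The table of the linear map between free modules given by a list of combinations. -/
def lcT (D : List LC) (i : ℕ) : LC :=
  subst (D.getD (i / 144) []) fun q => rename (fun l => q / 144 * 144 + l) (mulE (i % 144) (q % 144))

/-- The table of the precomposition with the linear map between free modules given by a list of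
combinations. -/
def pullT (s : ℕ) (D : List LC) (i : ℕ) : LC :=
  (List.range s).flatMap fun w => (D.getD w []).flatMap fun p =>
    if Nat.beq (p.2 / 144) (i / 12) then
      rename (fun l => w * 12 + l) (scale p.1 (actW (p.2 % 144) (i % 12))) else []

namespace BasedBimodule

variable (B : BasedBimodule k E M)

/-- The basis vectors of a free module. -/
noncomputable abbrev bK (r : ℕ) : Basis (Fin (r * 144)) k (Fin r → E) := B.bE.pow r

/-- The basis vectors of a power of the bimodule. -/
noncomputable abbrev bC (r : ℕ) : Basis (Fin (r * 12)) k (Fin r → M) := B.bM.pow r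

theorem ev_congr {V : Type*} [AddCommGroup V] {e e' : ℕ → V} {L : LC}
    (h : ∀ p ∈ L, e p.2 = e' p.2) : ev e L = ev e' L := by
  unfold ev
  congr 1
  exact List.map_congr_left fun p hp => by rw [h p hp]

theorem ev_pi {r : ℕ} {V : Type*} [AddCommGroup V] (e : ℕ → Fin r → V) (L : LC) (w : Fin r) :
    ev e L w = ev (fun i => e i w) L := by
  exact ev_map e (Pi.evalAddMonoidHom (fun _ : Fin r => V) w) L

theorem list_sum_apply {r : ℕ} {V : Type*} [AddCommGroup V] (L : List (Fin r → V)) (w : Fin r) :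
    L.sum w = (L.map fun f => f w).sum :=
  map_list_sum (Pi.evalAddMonoidHom (fun _ : Fin r => V) w) L

theorem smul_bK {r : ℕ} {i : ℕ} (hi : i < 144) (q : ℕ) : B.bE.e i • (B.bK r).e q =
    ev (B.bK r).e (rename (fun l => q / 144 * 144 + l) (mulE i (q % 144))) := by
  rw [ev_rename]
  funext w
  rw [Pi.smul_apply, ev_pi, Basis.pow_e]
  by_cases h : w.1 = q / 144
  · rw [if_pos h, smul_eq_mul, B.mul_e _ hi _ (Nat.mod_lt _ (by norm_num))]
    refine ev_congr fun p hp => ?_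
    have := mulE_lt _ _ p hp
    rw [Basis.pow_e, if_pos (by omega)]
    congr 1
    omega
  · rw [if_neg h, smul_zero]
    symm
    rw [← ev_zero_fun (mulE i (q % 144))]
    refine ev_congr fun p hp => ?_
    have := mulE_lt _ _ p hp
    rw [Basis.pow_e, if_neg (by omega)]

theorem lc_bK {W : Type*} [AddCommGroup W] [Module E W] {r : ℕ} (D : Fin r → W) {i : ℕ}
    (hi : i / 144 < r) : lc D ((B.bK r).e i) = B.bE.e (i % 144) • D ⟨i / 144, hi⟩ := by
  rw [lc_apply, Finset.sum_eq_single ⟨i / 144, hi⟩]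
  · rw [Basis.pow_e, if_pos rfl]
  · intro w _ hw
    rw [Basis.pow_e, if_neg, zero_smul]
    exact fun h => hw (Fin.ext h)
  · simp

theorem bK_e_mul {r : ℕ} (w : Fin r) :
    (B.bK r).e (w * 144) = Pi.single w 1 := by
  funext v
  rw [Basis.pow_e, Nat.mul_mod_left, Nat.mul_div_left _ (by norm_num), B.one_e, Pi.single_apply]
  simp [Fin.ext_iff]

theorem tab_lc {r s : ℕ} (D : List LC) : Tab (B.bK s).e (B.bK r).e
    ((lc (vecs (B.bK r).e s D)).restrictScalars k) (cut (s * 144) (lcT D)) := by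
  intro i
  by_cases h : i < s * 144
  · have h1 : i / 144 < s := by omega
    rw [cut, if_pos (by simpa using h), lcT, LinearMap.restrictScalars_apply, B.lc_bK _ h1, vecs,
      ev_subst, ← DistribSMul.toAddMonoidHom_apply, ev_map]
    refine ev_congr fun p _ => ?_
    rw [DistribSMul.toAddMonoidHom_apply, B.smul_bK (Nat.mod_lt _ (by norm_num))]
  · rw [cut, if_neg (by simpa using h), Basis.e_of_le _ (by omega), map_zero, ev_nil]

theorem lc_bC {r : ℕ} {i : ℕ} (hi : i / 12 < r) (q : ℕ) : lc ((B.bC r).e i) ((B.bK r).e q) =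
    ev B.bM.e (if Nat.beq (q / 144) (i / 12) then actW (q % 144) (i % 12) else []) := by
  by_cases h : q / 144 = i / 12
  · rw [if_pos (by simpa using h), B.lc_bK _ (h ▸ hi), Basis.pow_e, if_pos h,
      B.smul_e _ (Nat.mod_lt _ (by norm_num)) _ (Nat.mod_lt _ (by norm_num))]
  · rw [if_neg (by simpa using h), ev_nil]
    by_cases hq : q / 144 < r
    · rw [B.lc_bK _ hq, Basis.pow_e, if_neg h, smul_zero]
    · rw [Basis.e_of_le (B.bK r) (by omega), map_zero]

theorem ev_bC {r : ℕ} (L : LC) (hL : ∀ p ∈ L, p.2 < 12) (w : ℕ) (v : Fin r) :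
    ev (B.bC r).e (rename (fun l => w * 12 + l) L) v = if v.1 = w then ev B.bM.e L else 0 := by
  rw [ev_rename, ev_pi]
  split_ifs with h
  · refine ev_congr fun p hp => ?_
    have := hL p hp
    rw [Basis.pow_e, if_pos (by omega)]
    congr 1
    omega
  · rw [← ev_zero_fun L]
    refine ev_congr fun p hp => ?_
    have := hL p hp
    rw [Basis.pow_e, if_neg (by omega)]

theorem tab_pull {r s : ℕ} (D : List LC) : Tab (B.bC r).e (B.bC s).e
    (pull (k := k) (M := M) (vecs (B.bK r).e s D)) (cut (r * 12) (pullT s D)) := by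
  intro i
  by_cases h : i < r * 12
  · have h1 : i / 12 < r := by omega
    rw [cut, if_pos (by simpa using h), pullT, ev_flatMap]
    funext v
    have h2 : ∀ w, ev (B.bC s).e ((D.getD w []).flatMap fun p =>
      if Nat.beq (p.2 / 144) (i / 12) then
        rename (fun l => w * 12 + l) (scale p.1 (actW (p.2 % 144) (i % 12))) else []) v =
        if v.1 = w then lc ((B.bC r).e i) (ev (B.bK r).e (D.getD w [])) else 0 := by
      intro w
      rw [ev_map, ev_flatMap, list_sum_apply, List.map_map]
      have : ∀ p : ℤ × ℕ, ev (B.bC s).e (if Nat.beq (p.2 / 144) (i / 12) then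
          rename (fun l => w * 12 + l) (scale p.1 (actW (p.2 % 144) (i % 12))) else []) v =
          if v.1 = w then p.1 • lc ((B.bC r).e i) ((B.bK r).e p.2) else 0 := by
        intro p
        rw [B.lc_bC h1]
        by_cases hp : Nat.beq (p.2 / 144) (i / 12) = true
        · rw [if_pos hp, if_pos hp, ev_bC, ev_scale]
          intro q hq
          simp only [scale, List.mem_map] at hq
          obtain ⟨q', hq', rfl⟩ := hq
          exact actW_lt _ _ q' hq'
        · rw [if_neg hp, if_neg hp]
          simp
      simp only [Function.comp_def, this]
      split_ifs
      · rfl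
      · simp
    rw [list_sum_apply, List.map_map]
    simp only [Function.comp_def, h2]
    rw [← List.sum_toFinset _ (List.nodup_range)]
    simp [List.toFinset_range, Finset.sum_ite_eq, pull, vecs]
  · rw [cut, if_neg (by simpa using h), Basis.e_of_le _ (by omega), map_zero, ev_nil]

end BasedBimodule

end FKAlg

open CategoryTheory
namespace FKAlg
theorem smul_id_hom_apply {k : Type} [Field k] (c : k) (v : FK3 k) :
    (c • 𝟙 (AAmod k)).hom v = algebraMap k (FKAe k) c • v := rfl
end FKAlg

namespace FKAlg

open LC Module

section Words

variable {A : Type*} [Ring A] (a b c : A)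

/-- The words in three elements of a ring which represent the basis of the Fomin–Kirillov
algebra. -/
def word : ℕ → A
  | 0 => 1
  | 1 => a
  | 2 => b
  | 3 => c
  | 4 => a * b
  | 5 => b * c
  | 6 => b * a
  | 7 => a * c
  | 8 => a * (b * a)
  | 9 => a * (b * c)
  | 10 => b * (a * c)
  | 11 => a * (b * (a * c))
  | _ => 0

/-- The first letter and the rest of a word. -/
def splitW : ℕ → ℕ × ℕ
  | 1 => (1, 0)
  | 2 => (2, 0)
  | 3 => (3, 0)
  | 4 => (1, 2)
  | 5 => (2, 3)
  | 6 => (2, 1)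
  | 7 => (1, 3)
  | 8 => (1, 6)
  | 9 => (1, 5)
  | 10 => (2, 7)
  | _ => (1, 10)

/-- The defining relations of the Fomin–Kirillov algebra. -/
structure FKRelations : Prop where
  aa : a * a = 0
  bb : b * b = 0
  cc : c * c = 0
  ab : a * b + b * c + c * a = 0
  ba : b * a + a * c + c * b = 0

variable {a b c}

theorem letter_mul_word (h : FKRelations a b c) {g j : ℕ} (hg : g = 1 ∨ g = 2 ∨ g = 3) (hj : j < 12) :
    word a b c g * word a b c j = ev (word a b c) (mulW g j) := by
  obtain ⟨haa, hbb, hcc, h1, h2⟩ := h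
  have ca : c * a = - (a * b) - b * c := by
    rw [eq_sub_iff_add_eq, eq_neg_iff_add_eq_zero, ← h1]; abel
  have cb : c * b = - (b * a) - a * c := by
    rw [eq_sub_iff_add_eq, eq_neg_iff_add_eq_zero, ← h2]; abel
  have haa' : ∀ x, a * (a * x) = 0 := fun x => by rw [← mul_assoc, haa, zero_mul]
  have hbb' : ∀ x, b * (b * x) = 0 := fun x => by rw [← mul_assoc, hbb, zero_mul]
  have ca' : ∀ x, c * (a * x) = - (a * (b * x)) - b * (c * x) := fun x => by
    rw [← mul_assoc, ca]; noncomm_ring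
  have cb' : ∀ x, c * (b * x) = - (b * (a * x)) - a * (c * x) := fun x => by
    rw [← mul_assoc, cb]; noncomm_ring
  have bab : b * (a * b) = a * (b * a) := by
    have h' : (a * b + b * c + c * a) * a - b * (a * b + b * c + c * a) = 0 := by rw [h1]; simp
    have h'' : a * (b * a) - b * (a * b) = 0 := by
      rw [← h']
      simp only [add_mul, mul_add, mul_assoc, haa, hbb', mul_zero]
      abel
    exact (sub_eq_zero.1 h'').symm
  have bab' : ∀ x, b * (a * (b * x)) = a * (b * (a * x)) := fun x => by
    rw [← mul_assoc a b x, ← mul_assoc, bab]; simp only [mul_assoc]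
  rcases hg with rfl | rfl | rfl <;> interval_cases j <;>
    simp [word, mulW, mulTable, haa, hbb, hcc, ca, cb, haa', hbb', ca', cb', bab, bab',
      mul_add, sub_eq_add_neg, add_comm]

theorem word_mul_word (h : FKRelations a b c) {i j : ℕ} (hi : i < 12) (hj : j < 12) :
    word a b c i * word a b c j = ev (word a b c) (mulW i j) := by
  have key : ∀ L : LC, (∀ p ∈ L, p.2 < 12) → ∀ g, (g = 1 ∨ g = 2 ∨ g = 3) →
      word a b c g * ev (word a b c) L = ev (word a b c) (subst L (mulW g)) := by
    intro L hL g hg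
    rw [ev_subst]
    refine (ev_map _ (AddMonoidHom.mulLeft (word a b c g)) L).trans ?_
    exact BasedBimodule.ev_congr fun p hp =>
      letter_mul_word h hg (hL p hp)
  have tab : allZero 144 (fun n => if Nat.beq (n / 12) 0 then sub (mulW 0 (n % 12)) [(1, n % 12)]
      else sub (mulW (n / 12) (n % 12))
        (subst (mulW (splitW (n / 12)).2 (n % 12)) (mulW (splitW (n / 12)).1))) = true := by
    decide +kernel
  rw [allZero, List.all_eq_true] at tab
  have tab' := tab (12 * i + j) (List.mem_range.2 (by omega))
  have hd : (12 * i + j) / 12 = i := by omega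
  have hm : (12 * i + j) % 12 = j := by omega
  simp only [hd, hm] at tab'
  by_cases h0 : i = 0
  · subst h0
    rw [if_pos (by rfl)] at tab'
    rw [ev_eq_ev _ tab']
    simp [word]
  rw [if_neg (by simpa using h0)] at tab'
  rw [ev_eq_ev _ tab', ← key _ (mulW_lt _ _)]
  · have step : word a b c i = word a b c (splitW i).1 * word a b c (splitW i).2 := by
      clear tab tab' key hd hm
      interval_cases i <;> simp [word, splitW] at h0 ⊢
    have hlt : (splitW i).2 < i := by
      interval_cases i <;> simp [splitW] at h0 ⊢
    rw [step, mul_assoc, word_mul_word h (by omega) hj]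
  · interval_cases i <;> simp [splitW] at h0 ⊢
termination_by i

end Words

end FKAlg

namespace FKAlg

open LC Module

theorem map_word {A B : Type*} [Ring A] [Ring B] (f : A →+* B) (a b c : A) (i : ℕ) :
    f (word a b c i) = word (f a) (f b) (f c) i := by
  by_cases hi : i < 12
  · interval_cases i <;> simp [word]
  · obtain ⟨j, rfl⟩ := Nat.exists_eq_add_of_le (not_lt.1 hi)
    rw [add_comm]
    exact map_zero f

/-- The matrix of the left multiplication by the letter `g` in the basis of words. -/
def letterMat (g : ℕ) : Matrix (Fin 12) (Fin 12) ℤ := fun i j =>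
  (((mulW g j).filter fun p => Nat.beq p.2 i).map Prod.fst).sum

theorem letterMat_relations : FKRelations (letterMat 1) (letterMat 2) (letterMat 3) :=
  ⟨by decide +kernel, by decide +kernel, by decide +kernel, by decide +kernel, by decide +kernel⟩

theorem word_letterMat (i j : Fin 12) : word (letterMat 1) (letterMat 2) (letterMat 3) i j 0 =
    if i = j then 1 else 0 := by
  revert i j
  decide +kernel

section

variable (k : Type) [Field k]

/-- The generators of the Fomin–Kirillov algebra. -/
noncomputable def gen (i : Fin 3) : FK3 k := RingQuot.mkAlgHom k (FKRel k) (FreeAlgebra.ι k i)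

theorem gen_relations : FKRelations (gen k 0) (gen k 1) (gen k 2) := by
  have h := fun x y hxy => RingQuot.mkAlgHom_rel k (s := FKRel k) (x := x) (y := y) hxy
  refine ⟨?_, ?_, ?_, ?_, ?_⟩
  · simpa [gen] using h _ _ FKRel.sq_a
  · simpa [gen] using h _ _ FKRel.sq_b
  · simpa [gen] using h _ _ FKRel.sq_c
  · simpa [gen] using h _ _ FKRel.rel1
  · simpa [gen] using h _ _ FKRel.rel2

/-- The words in the generators of the Fomin–Kirillov algebra. -/
noncomputable def genWord (i : ℕ) : FK3 k := word (gen k 0) (gen k 1) (gen k 2) i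

theorem genWord_mul {i j : ℕ} (hi : i < 12) (hj : j < 12) :
    genWord k i * genWord k j = ev (genWord k) (mulW i j) :=
  word_mul_word (gen_relations k) hi hj

/-- The left regular representation of the Fomin–Kirillov algebra. -/
noncomputable def regRep : FK3 k →ₐ[k] Matrix (Fin 12) (Fin 12) k :=
  RingQuot.liftAlgHom k ⟨FreeAlgebra.lift k fun g : Fin 3 =>
    (Int.castRingHom k).mapMatrix (letterMat (g + 1)), by
      obtain ⟨h1, h2, h3, h4, h5⟩ := letterMat_relations
      intro x y h
      cases h <;> simp only [map_mul, map_add, map_zero, FreeAlgebra.lift_ι_apply] <;>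
        simp only [← map_mul, ← map_add]
      · rw [show ((0 : Fin 3) : ℕ) + 1 = 1 from rfl, h1, map_zero]
      · rw [show ((1 : Fin 3) : ℕ) + 1 = 2 from rfl, h2, map_zero]
      · rw [show ((2 : Fin 3) : ℕ) + 1 = 3 from rfl, h3, map_zero]
      · exact (congrArg _ h4).trans (map_zero _)
      · exact (congrArg _ h5).trans (map_zero _)⟩

theorem regRep_genWord (i j : Fin 12) : regRep k (genWord k i) j 0 = if i = j then 1 else 0 := by
  have h : ∀ g : Fin 3, regRep k (gen k g) =
      (Int.castRingHom k).mapMatrix (letterMat (g + 1)) := fun g => by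
    simp [regRep, gen]
  have : regRep k (genWord k i) =
      (Int.castRingHom k).mapMatrix (word (letterMat 1) (letterMat 2) (letterMat 3) i) := by
    rw [map_word, genWord]
    refine (map_word (regRep k).toRingHom _ _ _ _).trans ?_
    simp only [AlgHom.toRingHom_eq_coe, RingHom.coe_coe, h]
    rfl
  rw [this, RingHom.mapMatrix_apply, Matrix.map_apply, word_letterMat]
  split_ifs <;> simp

theorem linearIndependent_genWord : LinearIndependent k fun i : Fin 12 => genWord k i := by
  rw [Fintype.linearIndependent_iff]
  intro c hc j
  have h := congrArg (fun x => regRep k x j 0) hc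
  simpa [map_sum, Matrix.sum_apply, regRep_genWord] using h

theorem span_genWord : ⊤ ≤ Submodule.span k (Set.range fun i : Fin 12 => genWord k i) := by
  set S := Submodule.span k (Set.range fun i : Fin 12 => genWord k i) with hS
  have hw : ∀ i, genWord k i ∈ S := by
    intro i
    by_cases hi : i < 12
    · exact Submodule.subset_span ⟨⟨i, hi⟩, rfl⟩
    · obtain ⟨j, rfl⟩ := Nat.exists_eq_add_of_le (not_lt.1 hi)
      rw [add_comm]
      exact S.zero_mem
  have hgen : ∀ (g : Fin 3), ∀ y ∈ S, gen k g * y ∈ S := by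
    intro g y hy
    induction hy using Submodule.span_induction with
    | mem x hx =>
      obtain ⟨i, rfl⟩ := hx
      have : gen k g = genWord k (g + 1) := by fin_cases g <;> rfl
      rw [this]
      dsimp only
      rw [genWord_mul k (by omega) i.2]
      exact ev_mem _ S hw _
    | zero => simp
    | add x y _ _ hx hy => rw [mul_add]; exact S.add_mem hx hy
    | smul c x _ hx => rw [mul_smul_comm]; exact S.smul_mem _ hx
  have key : ∀ x : FreeAlgebra k (Fin 3), ∀ y ∈ S, RingQuot.mkAlgHom k (FKRel k) x * y ∈ S := by
    intro x
    induction x using FreeAlgebra.induction with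
    | grade0 r =>
      intro y hy
      rw [AlgHom.commutes, ← Algebra.smul_def]
      exact S.smul_mem _ hy
    | grade1 g => exact hgen g
    | mul x y hx hy =>
      intro z hz
      rw [map_mul, mul_assoc]
      exact hx _ (hy _ hz)
    | add x y hx hy =>
      intro z hz
      rw [map_add, add_mul]
      exact S.add_mem (hx _ hz) (hy _ hz)
  intro x _
  obtain ⟨x, rfl⟩ := RingQuot.mkAlgHom_surjective k (FKRel k) x
  have := key x 1 (hw 0)
  rwa [mul_one] at this

/-- The basis of words of the Fomin–Kirillov algebra. -/
noncomputable def wordBasis : Basis (Fin 12) k (FK3 k) :=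
  Basis.mk (linearIndependent_genWord k) (span_genWord k)

theorem wordBasis_e {i : ℕ} (hi : i < 12) : (wordBasis k).e i = genWord k i := by
  rw [Basis.e_of_lt _ hi, wordBasis, Basis.mk_apply]

open scoped TensorProduct

/-- The basis of the enveloping algebra of the Fomin–Kirillov algebra given by pairs of words. -/
noncomputable def envBasis : Basis (Fin 144) k (FKAe k) :=
  ((wordBasis k).tensorProduct ((wordBasis k).map (MulOpposite.opLinearEquiv k))).reindex
    (finProdFinEquiv (m := 12) (n := 12))

theorem envBasis_e {i : ℕ} (hi : i < 144) :
    (envBasis k).e i = genWord k (i / 12) ⊗ₜ MulOpposite.op (genWord k (i % 12)) := by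
  have h1 : i / 12 < 12 := by omega
  have h2 : i % 12 < 12 := by omega
  rw [Basis.e_of_lt _ hi, envBasis, Basis.reindex_apply]
  have : (finProdFinEquiv (m := 12) (n := 12)).symm ⟨i, hi⟩ = (⟨i / 12, h1⟩, ⟨i % 12, h2⟩) := rfl
  rw [this, Basis.tensorProduct_apply, Basis.map_apply, ← wordBasis_e k h1, ← wordBasis_e k h2,
    Basis.e_of_lt _ h1, Basis.e_of_lt _ h2]
  rfl

theorem tmul_smul (x y z : FK3 k) :
    (x ⊗ₜ[k] MulOpposite.op y : FKAe k) • z = x * z * y := by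
  change x • (MulOpposite.op y • z) = _
  rw [op_smul_eq_mul, smul_eq_mul, mul_assoc]

instance : IsScalarTower k (FKAe k) (FK3 k) where
  smul_assoc c x m := by
    induction x using TensorProduct.induction_on with
    | zero =>
      have h0 : (0 : FKAe k) • m = 0 := zero_smul (FKAe k) m
      rw [smul_zero]
      exact h0.trans ((congrArg (c • ·) h0).trans (smul_zero c)).symm
    | tmul y z =>
      obtain ⟨z, rfl⟩ := MulOpposite.op_surjective z
      rw [TensorProduct.smul_tmul', tmul_smul, tmul_smul]
      simp [mul_assoc]
    | add x y hx hy => rw [smul_add, add_smul, add_smul, hx, hy, smul_add]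

theorem ev_wordBasis {L : LC} (hL : ∀ p ∈ L, p.2 < 12) :
    ev (wordBasis k).e L = ev (genWord k) L :=
  BasedBimodule.ev_congr fun p hp => wordBasis_e k (hL p hp)

theorem ev_bilinear {X Y Z : Type*} [AddCommGroup X] [AddCommGroup Y] [AddCommGroup Z]
    (f' : X → Y → Z) (hl : ∀ x x' y, f' (x + x') y = f' x y + f' x' y)
    (hr : ∀ x y y', f' x (y + y') = f' x y + f' x y') {g : ℕ → X} {g' : ℕ → Y} {e : ℕ → Z}
    (h : ∀ p < 12, ∀ q < 12, e (12 * p + q) = f' (g p) (g' q))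
    (L L' : LC) (hL : ∀ p ∈ L, p.2 < 12) (hL' : ∀ p ∈ L', p.2 < 12) :
    ev e (L.flatMap fun p => L'.map fun q => (p.1 * q.1, 12 * p.2 + q.2)) =
      f' (ev g L) (ev g' L') := by
  let f : X →+ Y →+ Z := AddMonoidHom.mk' (fun x => AddMonoidHom.mk' (f' x) (hr x))
    fun x x' => AddMonoidHom.ext fun y => hl x x' y
  change _ = f (ev g L) (ev g' L')
  replace h : ∀ p < 12, ∀ q < 12, e (12 * p + q) = f (g p) (g' q) := h
  have h1 : ∀ p ∈ L, ev e (L'.map fun q => (p.1 * q.1, 12 * p.2 + q.2)) =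
      p.1 • f (g p.2) (ev g' L') := by
    intro p hp
    have hp' := hL p hp
    induction L' with
    | nil => simp
    | cons q L' ih =>
      have hq : q.2 < 12 := hL' q (by simp)
      rw [List.map_cons, ev_cons, ih fun q hq => hL' q (by simp [hq]), ev_cons, h _ hp' _ hq,
        map_add, smul_add, map_zsmul, mul_smul]
  induction L with
  | nil => simp
  | cons p L ih =>
    rw [List.flatMap_cons, ev_append, ih (fun q hq => hL q (by simp [hq]))
      (fun q hq => h1 q (by simp [hq])), h1 p (by simp), ev_cons, map_add, map_zsmul]
    rfl

theorem ev_envBasis (L L' : LC) (hL : ∀ p ∈ L, p.2 < 12) (hL' : ∀ p ∈ L', p.2 < 12) :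
    ev (envBasis k).e (L.flatMap fun p => L'.map fun q => (p.1 * q.1, 12 * p.2 + q.2)) =
      ev (genWord k) L ⊗ₜ MulOpposite.op (ev (genWord k) L') := by
  refine ev_bilinear (fun x y => (x ⊗ₜ[k] MulOpposite.op y : FKAe k))
    (fun x x' y => TensorProduct.add_tmul x x' _) (fun x y y' => TensorProduct.tmul_add x _ _)
    (fun p hp q hq => ?_) L L' hL hL'
  rw [envBasis_e k (by omega)]
  have e1 : (12 * p + q) / 12 = p := by omega
  have e2 : (12 * p + q) % 12 = q := by omega
  rw [e1, e2]

/-- The Fomin–Kirillov algebra as a bimodule over itself, in the bases of words. -/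
noncomputable def fkBimodule : BasedBimodule k (FKAe k) (FK3 k) where
  bE := envBasis k
  bM := wordBasis k
  mul_e i hi j hj := by
    rw [envBasis_e k hi, envBasis_e k hj, Algebra.TensorProduct.tmul_mul_tmul, ← MulOpposite.op_mul,
      genWord_mul k (by omega) (by omega), genWord_mul k (by omega) (by omega), mulE,
      ev_envBasis k _ _ (mulW_lt _ _) (mulW_lt _ _)]
  smul_e i hi j hj := by
    rw [envBasis_e k hi, wordBasis_e k hj, tmul_smul, genWord_mul k (by omega) hj,
      ev_wordBasis k (actW_lt i j), actW, ev_subst]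
    refine (ev_map _ (AddMonoidHom.mulRight (genWord k (i % 12))) _).trans ?_
    exact BasedBimodule.ev_congr fun p hp => genWord_mul k (mulW_lt _ _ p hp) (by omega)
  one_e := by
    rw [envBasis_e k (by norm_num)]
    rfl

end

end FKAlg

namespace FKAlg

open LC Module

/-- The table of a map commuting with the right multiplications, given by its values on the basis
vectors whose right factor is trivial. -/
def rT (S : List LC) (i : ℕ) : LC :=
  subst (S.getD (i / 12) []) fun q => rename (fun l => q / 12 * 12 + l) (mulW (q % 12) (i % 12))

/-- The differential of degree `1` of the Koszul bimodule complex. -/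
def D1 : List LC := [
  [(-1, 1), (1, 12)], [(-1, 2), (1, 24)], [(-1, 3), (1, 36)]]

/-- The differential of degree `2` of the Koszul bimodule complex. -/
def D2 : List LC := [
  [(1, 1), (1, 12)], [(1, 146), (1, 168)], [(1, 291), (1, 324)], [(1, 2), (1, 36), (1, 147),
  (1, 156), (1, 289), (1, 312)], [(1, 3), (1, 24), (1, 145), (1, 180), (1, 290), (1, 300)]]

/-- The differential of degree `3` of the Koszul bimodule complex. -/
def D3 : List LC := [
  [(-1, 1), (1, 12)], [(-1, 146), (1, 168)], [(-1, 291), (1, 324)], [(-1, 1), (1, 12), (-1, 145),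
  (1, 156), (-1, 289), (1, 300), (-1, 434), (1, 468), (-1, 579), (1, 600)], [(-1, 2), (1, 24),
  (-1, 146), (1, 168), (-1, 290), (1, 312), (-1, 435), (1, 444), (-1, 577), (1, 612)], [(-1, 3),
  (1, 36), (-1, 147), (1, 180), (-1, 291), (1, 324), (-1, 433), (1, 456), (-1, 578), (1, 588)]]

/-- The differential of degree `4` of the Koszul bimodule complex. -/
def D4 : List LC := [
  [(1, 1), (1, 12)], [(1, 146), (1, 168)], [(1, 291), (1, 324)], [(1, 433), (1, 444), (1, 578),
  (1, 600), (1, 723), (1, 756)], [(1, 434), (1, 468), (1, 579), (1, 588), (1, 721), (1, 744)],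
  [(1, 435), (1, 456), (1, 577), (1, 612), (1, 722), (1, 732)]]

/-- The differential of degree `5` of the Koszul bimodule complex. -/
def D5 : List LC := [
  [(-1, 1), (1, 12)], [(-1, 146), (1, 168)], [(-1, 291), (1, 324)], [(-1, 433), (1, 444),
  (-1, 578), (1, 612), (-1, 723), (1, 744)], [(-1, 434), (1, 456), (-1, 579), (1, 588),
  (-1, 721), (1, 756)], [(-1, 435), (1, 468), (-1, 577), (1, 600), (-1, 722), (1, 732)]]

/-- The contracting homotopy in degree `0`. -/
def H0 : List LC := [
  [], [(1, 0)], [(1, 144)], [(1, 288)], [(1, 2), (1, 156)], [(1, 147), (1, 312)], [(-1, 3),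
  (-1, 180), (-1, 290), (-1, 300)], [(1, 3), (1, 300)], [(1, 6), (1, 7), (-1, 228), (-1, 302)],
  [(1, 5), (1, 159), (1, 336)], [(-1, 183), (-1, 293), (-1, 303), (1, 360)], [(1, 10), (-1, 231),
  (-1, 305), (1, 384)]]

/-- The contracting homotopy in degree `1`. -/
def H1 : List LC := [
  [], [(1, 0)], [(1, 576)], [(1, 432)], [(-1, 3), (1, 588)], [(-1, 147), (1, 180), (1, 456),
  (-1, 578)], [(1, 2), (1, 290), (-1, 312), (1, 435), (-1, 444), (-1, 612)], [(-1, 2), (1, 444)],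
  [(-1, 5), (1, 148), (1, 181), (1, 204), (-1, 293), (1, 315), (1, 447), (-1, 582), (-1, 583),
  (-1, 602), (1, 615), (1, 648)], [(-1, 6), (-1, 7), (-1, 151), (1, 228), (-1, 295), (1, 303),
  (-1, 437), (1, 471), (1, 480), (-1, 590), (1, 603)], [(1, 183), (1, 314), (1, 459), (1, 580),
  (1, 601), (-1, 636)], [(-1, 10), (-1, 184), (-1, 206), (1, 231), (-1, 298), (1, 318), (1, 319),
  (1, 483), (1, 592), (1, 618), (1, 619), (1, 625), (-1, 650), (-1, 662), (-1, 684)], [], [],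
  [(1, 144)], [], [(1, 145), (1, 289), (-1, 300), (1, 434), (-1, 468), (1, 579), (-1, 600)],
  [(-1, 145), (-1, 579), (1, 600)], [(-1, 180)], [], [(-1, 228)], [(1, 301), (-1, 438), (1, 469),
  (1, 580), (1, 581), (-1, 591), (1, 601), (1, 624)], [(-1, 148), (-1, 204), (1, 582), (1, 583),
  (1, 602)], [(-1, 153), (-1, 187), (-1, 207), (1, 229), (1, 586), (1, 605), (-1, 651),
  (1, 672)], [], [], [], [(1, 288)], [], [(1, 312)], [], [(1, 300)], [], [(-1, 148), (-1, 181),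
  (-1, 204), (1, 293), (1, 302), (-1, 315), (1, 582), (1, 583), (1, 602), (-1, 615), (-1, 648),
  (-1, 660)], [(1, 150), (1, 182), (1, 228), (1, 313), (1, 458), (-1, 492), (1, 603)],
  [(-1, 205), (1, 230), (1, 316), (1, 317), (-1, 474), (1, 482), (-1, 540), (1, 616), (1, 617),
  (1, 627), (-1, 649), (-1, 661)]]

/-- The contracting homotopy in degree `2`. -/
def H2 : List LC := [
  [], [(1, 0)], [(-1, 144), (1, 576)], [(-1, 288), (1, 720)], [(-1, 36), (1, 289), (1, 312),
  (-1, 579), (-1, 721), (-1, 744)], [(-1, 312), (1, 579), (1, 744)], [(1, 24), (-1, 145),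
  (1, 577)], [(-1, 300), (1, 435), (1, 732)], [(-1, 60), (1, 313), (1, 580), (1, 581),
  (-1, 745)], [(-1, 84), (1, 301), (1, 436), (1, 437), (-1, 733)], [(1, 27), (-1, 151),
  (-1, 183), (1, 204), (-1, 360), (1, 583), (1, 724), (1, 725), (1, 735), (-1, 757), (1, 792),
  (1, 804)], [(1, 28), (1, 29), (-1, 120), (-1, 153), (-1, 184), (-1, 185), (-1, 205), (1, 361),
  (1, 585), (1, 736), (1, 737), (-1, 793), (-1, 805)], [], [(-1, 0), (1, 432)], [(1, 144)], [],
  [(-1, 2), (1, 156), (1, 434)], [], [(-1, 180)], [], [(-1, 228)], [(-1, 5), (-1, 39), (1, 84),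
  (1, 159), (1, 295), (-1, 301), (1, 315), (-1, 336), (-1, 436), (-1, 727), (1, 733), (-1, 747),
  (1, 768)], [(-1, 204)], [(-1, 10), (-1, 42), (-1, 43), (-1, 86), (1, 162), (1, 163), (-1, 252),
  (1, 296), (1, 304), (1, 318), (1, 319), (1, 338), (-1, 728), (-1, 736), (-1, 750), (-1, 751),
  (-1, 770)], [], [], [], [(1, 288)], [(1, 2), (1, 36), (-1, 156), (-1, 289), (-1, 312),
  (1, 579), (1, 588), (1, 721), (1, 744)], [(1, 312)], [(-1, 24), (1, 145), (1, 180), (-1, 435),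
  (-1, 577), (-1, 612), (-1, 722), (-1, 732)], [(1, 300)], [(1, 60), (1, 228), (-1, 313),
  (1, 438), (1, 439), (-1, 580), (1, 603), (-1, 660), (-1, 734), (1, 745), (1, 759)], [(1, 5),
  (1, 39), (-1, 159), (-1, 295), (-1, 315), (1, 336), (1, 591), (1, 727), (1, 747)], [(-1, 27),
  (1, 151), (1, 183), (1, 360), (-1, 583), (-1, 615), (-1, 725), (-1, 735)], [(1, 63), (1, 231),
  (-1, 319), (1, 384), (1, 442), (-1, 585), (-1, 663), (-1, 737), (1, 751)], [], [], [], [], [],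
  [], [(1, 578), (1, 600)], [(-1, 578), (-1, 600), (-1, 723), (-1, 756)], [(1, 582), (1, 601),
  (-1, 724), (-1, 725), (-1, 735), (1, 757), (-1, 804)], [], [(-1, 747), (-1, 780)], [(-1, 771),
  (-1, 828)], [], [], [], [], [], [], [], [], [], [], [(-1, 614), (1, 648), (1, 660), (-1, 759)],
  [(-1, 650), (-1, 662), (-1, 729), (-1, 748), (-1, 749), (-1, 762), (1, 781), (-1, 795),
  (-1, 807), (-1, 840)]]

/-- The contracting homotopy in degree `3`. -/
def H3 : List LC := [
  [], [(1, 0)], [], [], [(-1, 36)], [], [(1, 24)], [], [(-1, 60)], [(-1, 84)], [], [(-1, 120)],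
  [], [], [(1, 144)], [], [(1, 156)], [], [(-1, 180)], [], [(-1, 228)], [], [(-1, 204)],
  [(-1, 252)], [], [], [], [(1, 288)], [], [(1, 312)], [], [(1, 300)], [], [(1, 336)],
  [(1, 360)], [(1, 384)], [], [(1, 432)], [(1, 720)], [(1, 576)], [(-1, 435), (1, 732)],
  [(1, 600), (-1, 722)], [(1, 434), (1, 579), (-1, 588), (-1, 756)], [(-1, 434), (1, 588)],
  [(-1, 437), (1, 591), (-1, 804)], [(-1, 438), (-1, 439), (-1, 581), (-1, 602), (1, 615),
  (1, 624), (1, 636), (-1, 734)], [(-1, 39), (-1, 183), (1, 603), (-1, 780)], [(1, 40), (1, 41),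
  (1, 184), (1, 185), (-1, 442), (-1, 605), (1, 627), (1, 639), (-1, 728), (1, 736), (1, 769),
  (-1, 828)], [], [], [], [], [(1, 578), (-1, 612), (1, 723), (-1, 744)], [(-1, 723), (1, 744)],
  [], [], [(1, 602), (-1, 636), (1, 747)], [(-1, 39), (-1, 183), (-1, 582), (1, 613), (1, 725),
  (-1, 735), (1, 768)], [(1, 759), (1, 792), (1, 804)], [(1, 42), (1, 43), (1, 186), (1, 187),
  (-1, 606), (1, 637), (1, 749), (1, 807), (1, 816)], [], [], [], [], [], [], [], [], [(1, 39),
  (1, 183), (1, 724), (1, 745)], [], [], [(-1, 618), (1, 626), (1, 638), (-1, 684), (1, 771)]]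

/-- The contracting homotopy in degree `4`. -/
def H4 : List LC := [
  [], [(1, 0)], [], [], [(-1, 36)], [], [(1, 24)], [], [(-1, 60)], [(-1, 84)], [], [(-1, 120)],
  [], [], [(1, 144)], [], [(1, 156)], [], [(-1, 180)], [], [(-1, 228)], [], [(-1, 204)],
  [(-1, 252)], [], [], [], [(1, 288)], [], [(1, 312)], [], [(1, 300)], [], [(1, 336)],
  [(1, 360)], [(1, 384)], [], [(1, 432)], [(1, 576)], [(1, 720)], [(1, 434), (1, 588)],
  [(1, 579), (1, 744)], [(-1, 435), (-1, 612), (-1, 722), (-1, 732)], [(1, 435), (1, 732)],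
  [(1, 438), (1, 439), (1, 581), (1, 603), (-1, 660), (-1, 734), (1, 759)], [(1, 437), (1, 591),
  (1, 768)], [(-1, 615), (1, 724), (-1, 757), (1, 792), (1, 804)], [(1, 442), (-1, 663),
  (1, 736), (-1, 805), (1, 816)], [], [], [], [], [], [], [(1, 578), (1, 600)], [(-1, 578),
  (-1, 600), (-1, 723), (-1, 756)], [(1, 582), (1, 601), (-1, 724), (-1, 725), (-1, 735),
  (1, 757), (-1, 804)], [], [(-1, 747), (-1, 780)], [(-1, 771), (-1, 828)], [], [], [], [], [],
  [], [], [], [], [], [(-1, 614), (1, 648), (1, 660), (-1, 759)], [(-1, 650), (-1, 662),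
  (-1, 729), (-1, 748), (-1, 749), (-1, 762), (1, 781), (-1, 795), (-1, 807), (-1, 840)]]

/-- A cycle of degree `3` which is not a boundary. -/
def fL : List LC := [
  [(-1, 10), (1, 28), (1, 29), (-1, 42), (-1, 51), (-1, 86), (-1, 120), (-1, 153), (1, 162),
  (1, 163), (-1, 184), (-1, 205), (-1, 219), (-1, 252), (1, 296), (1, 304), (1, 318), (1, 338),
  (1, 361), (1, 384), (1, 442), (-1, 461), (1, 616), (1, 637), (-1, 770), (-1, 816)]]

/-- A retraction onto the classes of the multiples of the cycle `fL`. -/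
def tauL : List LC := [
  [], [], [], [], [], [], [], [], [], [], [], [], [], [], [], [], [], [], [], [], [], [], [], [],
  [], [], [], [], [], [], [], [], [], [], [], [], [], [], [], [], [], [], [], [], [], [],
  [(1, 0)], [(1, 1)], [], [], [], [], [], [], [], [], [], [(1, 0)], [], [(1, 2)], [], [], [], [],
  [], [], [], [], [(-1, 0)], [], [], [(1, 3)]]

/-- The action of a central quadratic element of the Koszul dual algebra,
from degree `2` to degree `0`. -/
def YA0 : List LC := [
  [(1, 0)], [], [], [], []]

/-- The action of a central quadratic element of the Koszul dual algebra,
from degree `3` to degree `1`. -/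
def YA1 : List LC := [
  [(1, 0)], [], [], [(1, 0)], [(1, 144)], [(1, 288)]]

/-- The action of a central quadratic element of the Koszul dual algebra,
from degree `4` to degree `2`. -/
def YA2 : List LC := [
  [(1, 0)], [], [], [(1, 0), (1, 144), (1, 288)], [(1, 432)], [(1, 576)]]

/-- The action of a central quadratic element of the Koszul dual algebra,
from degree `2` to degree `0`. -/
def YB0 : List LC := [
  [], [(1, 0)], [], [], []]

/-- The action of a central quadratic element of the Koszul dual algebra,
from degree `3` to degree `1`. -/
def YB1 : List LC := [
  [], [(1, 144)], [], [(1, 0)], [(1, 144)], [(1, 288)]]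

/-- The action of a central quadratic element of the Koszul dual algebra,
from degree `4` to degree `2`. -/
def YB2 : List LC := [
  [], [(1, 144)], [], [(1, 0), (1, 144), (1, 288)], [(1, 432)], [(1, 576)]]

/-- The action of a central quadratic element of the Koszul dual algebra,
from degree `2` to degree `0`. -/
def YC0 : List LC := [
  [], [], [(1, 0)], [], []]

/-- The action of a central quadratic element of the Koszul dual algebra,
from degree `3` to degree `1`. -/
def YC1 : List LC := [
  [], [], [(1, 288)], [(1, 0)], [(1, 144)], [(1, 288)]]

/-- The action of a central quadratic element of the Koszul dual algebra,
from degree `4` to degree `2`. -/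
def YC2 : List LC := [
  [], [], [(1, 288)], [(1, 0), (1, 144), (1, 288)], [(1, 432)], [(1, 576)]]

/-- The action of a central quadratic element of the Koszul dual algebra,
from degree `2` to degree `0`. -/
def YS0 : List LC := [
  [], [], [], [(1, 0)], [(1, 0)]]

/-- The action of a central quadratic element of the Koszul dual algebra,
from degree `3` to degree `1`. -/
def YS1 : List LC := [
  [], [], [], [(1, 144), (1, 288)], [(1, 0), (1, 288)], [(1, 0), (1, 144)]]

/-- The action of a central quadratic element of the Koszul dual algebra,
from degree `4` to degree `2`. -/
def YS2 : List LC := [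
  [], [], [], [(1, 432), (1, 576)], [(1, 0), (1, 144), (1, 288), (1, 576)], [(1, 0), (1, 144),
  (1, 288), (1, 432)]]

/-- The action of the periodicity element in terms of the ones of the squares of the generators. -/
def period (s : ℕ) (P Q R : List LC) : List LC :=
  (List.range s).map fun w => P.getD w [] ++ Q.getD w [] ++ scale (-1) (R.getD w [])

/-- The action of the periodicity element, from degree `5` to degree `3`. -/
def YP3 : List LC := [
  [(1, 0)], [(1, 144)], [(-1, 288)], [(1, 432)], [(1, 576)], [(1, 720)]]

theorem Tab.comp' {k U V W : Type*} [Field k] [AddCommGroup U] [AddCommGroup V] [AddCommGroup W]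
    [Module k U] [Module k V] [Module k W] {e : ℕ → U} {f : ℕ → V} {g : ℕ → W} {φ : U →ₗ[k] V}
    {ψ : V →ₗ[k] W} {t s : ℕ → LC} (hψ : Tab f g ψ s) (hφ : Tab e f φ t) :
    Tab e g (ψ ∘ₗ φ) fun i => subst (t i) s := fun i => by
  rw [LinearMap.comp_apply, hφ i, hψ.ev]

theorem Tab.add' {k U V : Type*} [Field k] [AddCommGroup U] [AddCommGroup V]
    [Module k U] [Module k V] {e : ℕ → U} {f : ℕ → V} {φ ψ : U →ₗ[k] V}
    {t s : ℕ → LC} (hφ : Tab e f φ t) (hψ : Tab e f ψ s) :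
    Tab e f (φ + ψ) fun i => t i ++ s i := fun i => by
  rw [LinearMap.add_apply, hφ i, hψ i, ev_append]

theorem tab_id {k U : Type*} [Field k] [AddCommGroup U] [Module k U] (e : ℕ → U) :
    Tab e e (LinearMap.id : U →ₗ[k] U) fun i => [(1, i)] := fun i => by
  simp

theorem tab_zero {k U V : Type*} [Field k] [AddCommGroup U] [AddCommGroup V]
    [Module k U] [Module k V] (e : ℕ → U) (f : ℕ → V) :
    Tab e f (0 : U →ₗ[k] V) fun _ => [] := fun i => by
  simp

namespace BasedBimodule

variable {k E M : Type*} [Field k] [Ring E] [Algebra k E] [AddCommGroup M]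
    [Module k M] [Module E M] [IsScalarTower k E M] (B : BasedBimodule k E M)

/-- A basis on which right multiplications act through the multiplication table. -/
def RightBasis {V : Type*} [AddCommGroup V] [Module k V] [Module E V] {N : ℕ}
    (b : Basis (Fin N) k V) : Prop :=
  ∀ i, ∀ j < 12, B.bE.e j • b.e i = ev b.e (rename (fun l => i / 12 * 12 + l) (mulW (i % 12) j))

/-- A map which commutes with the right multiplications. -/
def RightLinear {V W : Type*} [AddCommGroup V] [Module k V] [Module E V] [AddCommGroup W]
    [Module k W] [Module E W] (φ : V →ₗ[k] W) : Prop :=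
  ∀ j < 12, ∀ x, φ (B.bE.e j • x) = B.bE.e j • φ x

theorem mulW_zero : ∀ j < 12, mulW 0 j = [(1, j)] := by decide +kernel

theorem mulE_right : ∀ i < 12, ∀ j < 12, mulE j i = mulW i j := by decide +kernel

theorem rightBasis_bM : B.RightBasis B.bM := by
  intro i j hj
  by_cases hi : i < 12
  · rw [B.smul_e j (by omega) i hi, actW, Nat.div_eq_of_lt hj, Nat.div_eq_of_lt hi, mulW_zero i hi,
      Nat.mod_eq_of_lt hi, Nat.mod_eq_of_lt hj]
    simp [subst, ev_rename]
  · rw [B.bM.e_of_le (by omega), smul_zero, ev_rename]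
    symm
    rw [← ev_zero_fun (mulW (i % 12) j)]
    exact ev_congr fun p _ => B.bM.e_of_le (by omega)

theorem mulE_shift : ∀ i < 144, ∀ j < 12,
    mulE j i = rename (fun l => i / 12 * 12 + l) (mulW (i % 12) j) := by decide +kernel

theorem rightBasis_bK (r : ℕ) : B.RightBasis (B.bK r) := by
  intro i j hj
  rw [B.smul_bK (by omega), mulE_shift _ (Nat.mod_lt _ (by norm_num)) j hj, ev_rename, ev_rename,
    ev_rename]
  have h : i % 144 % 12 = i % 12 := by omega
  rw [h]
  refine ev_congr fun p _ => ?_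
  congr 1
  omega

section RightLinear

variable {B} {V W X : Type*} [AddCommGroup V] [Module k V] [Module E V] [AddCommGroup W]
    [Module k W] [Module E W] [AddCommGroup X] [Module k X] [Module E X]

theorem smul_ev {N : ℕ} {b : Basis (Fin N) k V} (s : E) (L : LC) :
    s • ev b.e L = ev (fun i => s • b.e i) L :=
  ev_map b.e (DistribSMul.toAddMonoidHom V s) L

theorem ev_rT {N : ℕ} {b : Basis (Fin N) k V} (hb : B.RightBasis b) (S : List LC) (i : ℕ) :
    ev b.e (rT S i) = B.bE.e (i % 12) • ev b.e (S.getD (i / 12) []) := by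
  rw [rT, ev_subst, smul_ev]
  exact ev_congr fun p _ => (hb _ _ (Nat.mod_lt _ (by norm_num))).symm

theorem rightLinear_of_basis {N : ℕ} {b : Basis (Fin N) k V} {φ : V →ₗ[k] W}
    [SMulCommClass E k V] [SMulCommClass E k W]
    (h : ∀ j < 12, ∀ i < N, φ (B.bE.e j • b.e i) = B.bE.e j • φ (b.e i)) : B.RightLinear φ := by
  intro j hj x
  rw [← b.sum_repr x]
  simp only [Finset.smul_sum, map_sum, map_smul, smul_comm (B.bE.e j)]
  exact Finset.sum_congr rfl fun i _ => by rw [← b.e_of_lt i.2, h j hj i i.2]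

theorem rightLinear_lmap {N N' : ℕ} (n : ℕ) {b : Basis (Fin N) k V} {b' : Basis (Fin N') k W}
    [SMulCommClass E k V] [SMulCommClass E k W]
    (hb : B.RightBasis b) (hb' : B.RightBasis b') (S : List LC) (hN : N = n * 12 := by rfl) :
    B.RightLinear (b.lmap b' (rT S)) := by
  refine rightLinear_of_basis (b := b) fun j hj i hi => ?_
  have key : ∀ l < N, b.lmap b' (rT S) (b.e l) =
      B.bE.e (l % 12) • ev b'.e (S.getD (l / 12) []) := by
    intro l hl
    rw [b.tab_lmap b' _ l, cut, if_pos (by simpa using hl), ev_rT hb']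
  rw [hb i j hj, ev_rename, ev_map, key i hi, ← mul_smul, B.mul_e j (by omega) _ (by omega),
    mulE_right _ (Nat.mod_lt _ (by norm_num)) j hj]
  have : ev B.bE.e (mulW (i % 12) j) • ev b'.e (S.getD (i / 12) []) =
      ev (fun l => B.bE.e l • ev b'.e (S.getD (i / 12) [])) (mulW (i % 12) j) :=
    ev_map B.bE.e (LinearMap.toSpanSingleton E W _) _
  rw [this]
  refine ev_congr fun p hp => ?_
  have := mulW_lt _ _ p hp
  rw [key _ (by omega)]
  have h1 : (i / 12 * 12 + p.2) % 12 = p.2 := by omega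
  have h2 : (i / 12 * 12 + p.2) / 12 = i / 12 := by omega
  rw [h1, h2]

theorem RightLinear.comp {ψ : W →ₗ[k] X} {φ : V →ₗ[k] W} (hψ : B.RightLinear ψ)
    (hφ : B.RightLinear φ) : B.RightLinear (ψ ∘ₗ φ) := fun j hj x => by
  rw [LinearMap.comp_apply, hφ j hj, hψ j hj, LinearMap.comp_apply]

theorem RightLinear.add {φ ψ : V →ₗ[k] W} (hφ : B.RightLinear φ) (hψ : B.RightLinear ψ) :
    B.RightLinear (φ + ψ) := fun j hj x => by
  rw [LinearMap.add_apply, hφ j hj, hψ j hj, LinearMap.add_apply, smul_add]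

theorem rightLinear_id : B.RightLinear (LinearMap.id : V →ₗ[k] V) := fun _ _ _ => rfl

theorem rightLinear_zero : B.RightLinear (0 : V →ₗ[k] W) := fun _ _ _ => by simp

theorem rightLinear_restrictScalars [IsScalarTower k E V] [IsScalarTower k E W]
    (φ : V →ₗ[E] W) : B.RightLinear (φ.restrictScalars k) :=
  fun _ _ _ => map_smul φ _ _

theorem eq_of_rows {N : ℕ} (n : ℕ) {b : Basis (Fin N) k V} (hb : B.RightBasis b) {φ ψ : V →ₗ[k] W}
    (hφ : B.RightLinear φ) (hψ : B.RightLinear ψ) {f : ℕ → W} {t s : ℕ → LC} (h : Tab b.e f φ t)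
    (h' : Tab b.e f ψ s)
    (hz : allZero n (fun i => sub (t (i * 12)) (s (i * 12))) = true)
    (hN : N = n * 12 := by rfl) : φ = ψ := by
  refine b.ext_of_e fun i hi => ?_
  have h1 : b.e i = B.bE.e (i % 12) • b.e (i / 12 * 12) := by
    rw [hb _ _ (Nat.mod_lt _ (by norm_num)), Nat.mul_mod_left,
      mulW_zero _ (Nat.mod_lt _ (by norm_num)), Nat.mul_div_left _ (by norm_num)]
    simp only [rename, List.map_cons, List.map_nil, ev_cons, one_smul, ev_nil, add_zero]
    congr 1
    omega
  rw [h1, hφ _ (Nat.mod_lt _ (by norm_num)), hψ _ (Nat.mod_lt _ (by norm_num)), h, h']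
  rw [allZero, List.all_eq_true] at hz
  rw [ev_eq_ev _ (hz (i / 12) (List.mem_range.2 (by omega)))]

end RightLinear

/-- The map of free modules given by a list of combinations. -/
noncomputable def mp (s r : ℕ) (D : List LC) : (Fin s → E) →ₗ[E] (Fin r → E) :=
  lc (vecs (B.bK r).e s D)

theorem tab_mp (s r : ℕ) (D : List LC) : Tab (B.bK s).e (B.bK r).e
    ((B.mp s r D).restrictScalars k) (cut (s * 144) (lcT D)) :=
  B.tab_lc D

theorem mp_ev (s r : ℕ) (D : List LC) (L : LC) : B.mp s r D (ev (B.bK s).e L) =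
    ev (B.bK r).e (subst L (cut (s * 144) (lcT D))) :=
  (B.tab_mp s r D).ev L

theorem mp_single (s r : ℕ) (D : List LC) (w : Fin s) :
    B.mp s r D (Pi.single w 1) = ev (B.bK r).e (D.getD w []) :=
  lc_single _ w

theorem mp_comp_mp {s r r' q : ℕ} {D₁ D₂ D₃ D₄ : List LC}
    (h : allZero s (fun w => sub (subst (D₁.getD w []) (cut (r * 144) (lcT D₂)))
      (subst (D₃.getD w []) (cut (r' * 144) (lcT D₄)))) = true) :
    B.mp r q D₂ ∘ₗ B.mp s r D₁ = B.mp r' q D₄ ∘ₗ B.mp s r' D₃ := by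
  refine lc_ext fun w => ?_
  rw [LinearMap.comp_apply, LinearMap.comp_apply, mp_single, mp_single, mp_ev, mp_ev]
  rw [allZero, List.all_eq_true] at h
  exact ev_eq_ev _ (h w (List.mem_range.2 w.2))

theorem mp_comp_mp_eq_zero {s r q : ℕ} {D₁ D₂ : List LC}
    (h : allZero s (fun w => subst (D₁.getD w []) (cut (r * 144) (lcT D₂))) = true) :
    B.mp r q D₂ ∘ₗ B.mp s r D₁ = 0 := by
  refine lc_ext fun w => ?_
  rw [LinearMap.comp_apply, mp_single, mp_ev, LinearMap.zero_apply]
  rw [allZero, List.all_eq_true] at h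
  exact ev_eq_zero _ (h w (List.mem_range.2 w.2))

/-- The augmentation of the Koszul bimodule complex. -/
noncomputable def eps : (Fin 1 → E) →ₗ[E] M := lc fun _ => B.bM.e 0

theorem tab_eps : Tab (B.bK 1).e B.bM.e (B.eps.restrictScalars k)
    (cut 144 fun i => actW i 0) := by
  intro i
  by_cases h : i < 144
  · rw [cut, if_pos (by simpa using h), LinearMap.restrictScalars_apply, eps,
      B.lc_bK _ (by omega), B.smul_e _ (Nat.mod_lt _ (by norm_num)) _ (by norm_num),
      Nat.mod_eq_of_lt h]
  · rw [cut, if_neg (by simpa using h), Basis.e_of_le _ (by omega), map_zero, ev_nil]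

/-- The `k`-linear map between free modules given by the table `rT S`. -/
noncomputable def hp (s r : ℕ) (S : List LC) : (Fin s → E) →ₗ[k] (Fin r → E) :=
  (B.bK s).lmap (B.bK r) (rT S)

theorem tab_hp (s r : ℕ) (S : List LC) : Tab (B.bK s).e (B.bK r).e (B.hp s r S)
    (cut (s * 144) (rT S)) :=
  Basis.tab_lmap _ _ _

theorem rightLinear_hp (s r : ℕ) (S : List LC) : B.RightLinear (B.hp s r S) :=
  rightLinear_lmap (s * 12) (B.rightBasis_bK s) (B.rightBasis_bK r) S (by ring)

theorem rightLinear_mp (s r : ℕ) (D : List LC) :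
    B.RightLinear ((B.mp s r D).restrictScalars k) :=
  rightLinear_restrictScalars _

theorem rightLinear_eps : B.RightLinear (B.eps.restrictScalars k) :=
  rightLinear_restrictScalars _

theorem eps_comp : B.eps ∘ₗ B.mp 3 1 D1 = 0 := by
  refine lc_ext fun w => ?_
  rw [LinearMap.comp_apply, mp_single, LinearMap.zero_apply]
  refine (B.tab_eps.ev _).trans (ev_eq_zero _ ?_)
  revert w
  decide +kernel

theorem d1_comp_d2 : B.mp 3 1 D1 ∘ₗ B.mp 5 3 D2 = 0 := B.mp_comp_mp_eq_zero (by decide +kernel)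

theorem d2_comp_d3 : B.mp 5 3 D2 ∘ₗ B.mp 6 5 D3 = 0 := B.mp_comp_mp_eq_zero (by decide +kernel)

theorem d3_comp_d4 : B.mp 6 5 D3 ∘ₗ B.mp 6 6 D4 = 0 := B.mp_comp_mp_eq_zero (by decide +kernel)

theorem d4_comp_d5 : B.mp 6 6 D4 ∘ₗ B.mp 6 6 D5 = 0 := B.mp_comp_mp_eq_zero (by decide +kernel)

theorem exact0 (x : Fin 1 → E) (hx : B.eps x = 0) : ∃ y, B.mp 3 1 D1 y = x := by
  have key : (B.mp 3 1 D1).restrictScalars k ∘ₗ B.hp 1 3 H0 +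
      B.bM.lmap (B.bK 1) (rT [[(1, 0)]]) ∘ₗ B.eps.restrictScalars k = LinearMap.id :=
    eq_of_rows 12 (B.rightBasis_bK 1) (((B.rightLinear_mp 3 1 D1).comp (B.rightLinear_hp 1 3 H0)).add
      ((rightLinear_lmap 1 B.rightBasis_bM (B.rightBasis_bK 1) _).comp B.rightLinear_eps)) rightLinear_id
      (Tab.add' (Tab.comp' (B.tab_mp 3 1 D1) (B.tab_hp 1 3 H0))
      (Tab.comp' (Basis.tab_lmap _ _ _) B.tab_eps)) (tab_id _) (by decide +kernel)
  refine ⟨B.hp 1 3 H0 x, ?_⟩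
  simpa [hx] using LinearMap.congr_fun key x

theorem exact_of_homotopy {p q r : ℕ} {D D' S S' : List LC}
    (h : allZero (q * 12) (fun i => sub
      (subst (cut (q * 144) (rT S) (i * 12)) (cut (p * 144) (lcT D)) ++
        subst (cut (q * 144) (lcT D') (i * 12)) (cut (r * 144) (rT S'))) [(1, i * 12)]) = true)
    (x : Fin q → E) (hx : B.mp q r D' x = 0) : B.mp p q D (B.hp q p S x) = x := by
  have key : (B.mp p q D).restrictScalars k ∘ₗ B.hp q p S +
      B.hp r q S' ∘ₗ (B.mp q r D').restrictScalars k = LinearMap.id :=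
    eq_of_rows (q * 12) (B.rightBasis_bK q) (((B.rightLinear_mp p q D).comp (B.rightLinear_hp q p S)).add
      ((B.rightLinear_hp r q S').comp (B.rightLinear_mp q r D'))) rightLinear_id
      (Tab.add' (Tab.comp' (B.tab_mp p q D) (B.tab_hp q p S))
      (Tab.comp' (B.tab_hp r q S') (B.tab_mp q r D'))) (tab_id _) h (by ring)
  simpa [hx] using LinearMap.congr_fun key x

theorem exact1 (x : Fin 3 → E) (hx : B.mp 3 1 D1 x = 0) : B.mp 5 3 D2 (B.hp 3 5 H1 x) = x :=
  B.exact_of_homotopy (S' := H0) (by decide +kernel) x hx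

theorem exact2 (x : Fin 5 → E) (hx : B.mp 5 3 D2 x = 0) : B.mp 6 5 D3 (B.hp 5 6 H2 x) = x :=
  B.exact_of_homotopy (S' := H1) (by decide +kernel) x hx

theorem exact4 (x : Fin 6 → E) (hx : B.mp 6 6 D4 x = 0) : B.mp 6 6 D5 (B.hp 6 6 H4 x) = x :=
  B.exact_of_homotopy (S' := H3) (by decide +kernel) x hx

/-- A cycle of degree `3` which is not a boundary. -/
noncomputable def cyc : Fin 6 → E := ev (B.bK 6).e (fL.getD 0 [])

/-- A `k`-linear map detecting the classes of the multiples of `cyc`. -/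
noncomputable def tau : (Fin 6 → E) →ₗ[k] M := (B.bK 6).lmap B.bM (rT tauL)

/-- The right multiples of `cyc`. -/
noncomputable def theta : M →ₗ[k] (Fin 6 → E) := B.bM.lmap (B.bK 6) (rT fL)

theorem tab_tau : Tab (B.bK 6).e B.bM.e B.tau (cut 864 (rT tauL)) := Basis.tab_lmap _ _ _

theorem tab_theta : Tab B.bM.e (B.bK 6).e B.theta (cut 12 (rT fL)) := Basis.tab_lmap _ _ _

theorem rightLinear_tau : B.RightLinear B.tau :=
  rightLinear_lmap 72 (B.rightBasis_bK 6) B.rightBasis_bM _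

theorem rightLinear_theta : B.RightLinear B.theta :=
  rightLinear_lmap 1 B.rightBasis_bM (B.rightBasis_bK 6) _

theorem d3_cyc : B.mp 6 5 D3 B.cyc = 0 := by
  rw [cyc, mp_ev]
  exact ev_eq_zero _ (by decide +kernel)

theorem exact3 (x : Fin 6 → E) (hx : B.mp 6 5 D3 x = 0) :
    B.mp 6 6 D4 (B.hp 6 6 H3 x) + B.theta (B.tau x) = x := by
  have key : (B.mp 6 6 D4).restrictScalars k ∘ₗ B.hp 6 6 H3 +
      B.hp 5 6 H2 ∘ₗ (B.mp 6 5 D3).restrictScalars k + B.theta ∘ₗ B.tau = LinearMap.id :=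
    eq_of_rows 72 (B.rightBasis_bK 6) ((((B.rightLinear_mp 6 6 D4).comp (B.rightLinear_hp 6 6 H3)).add
      ((B.rightLinear_hp 5 6 H2).comp (B.rightLinear_mp 6 5 D3))).add
      (B.rightLinear_theta.comp B.rightLinear_tau)) rightLinear_id
      (Tab.add' (Tab.add' (Tab.comp' (B.tab_mp 6 6 D4) (B.tab_hp 6 6 H3))
      (Tab.comp' (B.tab_hp 5 6 H2) (B.tab_mp 6 5 D3))) (Tab.comp' B.tab_theta B.tab_tau))
      (tab_id _) (by decide +kernel)
  simpa [hx] using LinearMap.congr_fun key x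

theorem tau_d4 (x : Fin 6 → E) : B.tau (B.mp 6 6 D4 x) = 0 := by
  have key : B.tau ∘ₗ (B.mp 6 6 D4).restrictScalars k = 0 :=
    eq_of_rows 72 (B.rightBasis_bK 6) (B.rightLinear_tau.comp (B.rightLinear_mp 6 6 D4)) rightLinear_zero
      (Tab.comp' B.tab_tau (B.tab_mp 6 6 D4)) (tab_zero _ _)
      (by decide +kernel)
  exact LinearMap.congr_fun key x

theorem tau_smul_cyc (s : E) : B.tau (s • B.cyc) = s • B.bM.e 0 := by
  have h1 : ∀ s : E, s • B.cyc = B.mp 1 6 fL fun _ => s := by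
    intro s
    rw [mp, lc_apply]
    simp [vecs, cyc]
  have h2 : ∀ s : E, s • B.bM.e 0 = B.eps fun _ => s := by
    intro s
    rw [eps, lc_apply]
    simp
  have key : B.tau ∘ₗ (B.mp 1 6 fL).restrictScalars k = B.eps.restrictScalars k :=
    eq_of_rows 12 (B.rightBasis_bK 1) (B.rightLinear_tau.comp (B.rightLinear_mp 1 6 fL)) B.rightLinear_eps
      (Tab.comp' B.tab_tau (B.tab_mp 1 6 fL)) B.tab_eps (by decide +kernel)
  rw [h1, h2]
  exact LinearMap.congr_fun key _

theorem theta_mem (m : M) : ∃ s : E, B.theta m = s • B.cyc ∧ s • B.bM.e 0 = m := by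
  have h1 : ∀ j < 12, B.theta (B.bM.e j) = B.bE.e j • B.cyc := by
    intro j hj
    rw [B.tab_theta j]
    have : B.bE.e j • B.cyc = B.mp 1 6 fL ((B.bK 1).e j) := by
      rw [mp, B.lc_bK _ (by omega), Nat.mod_eq_of_lt (by omega)]
      simp [vecs, cyc, Nat.div_eq_of_lt (show j < 144 by omega)]
    rw [this]
    refine Eq.trans ?_ (B.tab_mp 1 6 fL j).symm
    refine ev_eq_ev _ ?_
    clear this
    revert j
    decide +kernel
  have h2 : ∀ j < 12, B.bE.e j • B.bM.e 0 = B.bM.e j := by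
    intro j hj
    rw [B.smul_e _ (by omega) _ (by norm_num)]
    have : ev B.bM.e [(1, j)] = B.bM.e j := by simp
    rw [← this]
    refine ev_eq_ev _ ?_
    clear this
    revert j
    decide +kernel
  refine ⟨∑ j : Fin 12, B.bM.repr m j • B.bE.e j, ?_, ?_⟩
  · conv_lhs => rw [← B.bM.sum_repr m]
    rw [map_sum, Finset.sum_smul]
    refine Finset.sum_congr rfl fun j _ => ?_
    rw [map_smul, smul_assoc, ← h1 j j.2, B.bM.e_of_lt j.2]
  · conv_rhs => rw [← B.bM.sum_repr m]
    rw [Finset.sum_smul]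
    refine Finset.sum_congr rfl fun j _ => ?_
    rw [smul_assoc, h2 j j.2, B.bM.e_of_lt j.2]

theorem tau_yp3 (x : Fin 6 → E) (hx : B.mp 6 6 D5 x = 0) : B.tau (B.mp 6 6 YP3 x) = 0 := by
  have key : (B.tau ∘ₗ (B.mp 6 6 YP3).restrictScalars k) =
      (B.tau ∘ₗ (B.mp 6 6 YP3).restrictScalars k) ∘ₗ (B.hp 6 6 H4 ∘ₗ
        (B.mp 6 6 D5).restrictScalars k) :=
    eq_of_rows 72 (B.rightBasis_bK 6) (B.rightLinear_tau.comp (B.rightLinear_mp 6 6 YP3))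
      ((B.rightLinear_tau.comp (B.rightLinear_mp 6 6 YP3)).comp
        ((B.rightLinear_hp 6 6 H4).comp (B.rightLinear_mp 6 6 D5)))
      (Tab.comp' B.tab_tau (B.tab_mp 6 6 YP3))
      (Tab.comp' (Tab.comp' B.tab_tau (B.tab_mp 6 6 YP3))
        (Tab.comp' (B.tab_hp 6 6 H4) (B.tab_mp 6 6 D5)))
      (by decide +kernel)
  simpa [hx] using LinearMap.congr_fun key x

theorem yp3_yp3 : B.mp 6 6 YP3 ∘ₗ B.mp 6 6 YP3 = LinearMap.id := by
  refine lc_ext fun w => ?_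
  rw [LinearMap.comp_apply, mp_single, mp_ev, LinearMap.id_apply, ← B.bK_e_mul]
  have : ev (B.bK 6).e [(1, w.1 * 144)] = (B.bK 6).e (w.1 * 144) := by simp
  rw [← this]
  refine ev_eq_ev _ ?_
  clear this
  revert w
  decide +kernel

theorem d5_yp3_d4 : B.mp 6 6 D5 ∘ₗ (B.mp 6 6 YP3 ∘ₗ B.mp 6 6 D4) = 0 := by
  refine lc_ext fun w => ?_
  rw [LinearMap.comp_apply, LinearMap.comp_apply, mp_single, mp_ev, mp_ev, LinearMap.zero_apply]
  refine ev_eq_zero _ ?_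
  revert w
  decide +kernel

end BasedBimodule

end FKAlg

namespace ModExt

open CategoryTheory CategoryTheory.Abelian

universe w

variable {E : Type} [Ring E]
variable {X Y Z T : Type} [AddCommGroup X] [Module E X] [AddCommGroup Y] [Module E Y]
  [AddCommGroup Z] [Module E Z] [AddCommGroup T] [Module E T]

/-- The extension groups of modules. -/
abbrev Ex (E X Y : Type) [Ring E] [HasExt.{w} (ModuleCat.{0} E)] [AddCommGroup X] [Module E X]
    [AddCommGroup Y] [Module E Y] (n : ℕ) : Type w :=
  Ext (ModuleCat.of E X) (ModuleCat.of E Y) n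

section

variable [HasExt.{w} (ModuleCat.{0} E)]

/-- A linear map as an extension of degree zero. -/
noncomputable def hm (f : X →ₗ[E] Y) : Ex.{w} E X Y 0 := Ext.mk₀ (ModuleCat.ofHom f)

theorem hm_comp_hm (f : X →ₗ[E] Y) (g : Y →ₗ[E] Z) :
    (hm.{w} f).comp (hm g) (zero_add 0) = hm (g ∘ₗ f) := by
  rw [hm, hm, Ext.mk₀_comp_mk₀]
  rfl

theorem exists_hm (x : Ex.{w} E X Y 0) : ∃ f, x = hm f := by
  obtain ⟨f, rfl⟩ := (Ext.mk₀_bijective _ _).2 x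
  exact ⟨f.hom, rfl⟩

theorem hm_injective : Function.Injective (hm.{w} : (X →ₗ[E] Y) → Ex.{w} E X Y 0) := by
  intro f g h
  have := (Ext.mk₀_bijective _ _).1 h
  exact congrArg ModuleCat.Hom.hom this

@[simp] theorem hm_zero : hm.{w} (0 : X →ₗ[E] Y) = 0 := Ext.mk₀_zero _ _

theorem hm_add (f g : X →ₗ[E] Y) : hm.{w} (f + g) = hm f + hm g := Ext.mk₀_add _ _

theorem hm_neg (f : X →ₗ[E] Y) : hm.{w} (-f) = -hm f := Ext.mk₀_neg _

theorem hm_sub (f g : X →ₗ[E] Y) : hm.{w} (f - g) = hm f - hm g := by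
  rw [sub_eq_add_neg, hm_add, hm_neg, sub_eq_add_neg]

@[simp] theorem hm_id_comp {n : ℕ} (x : Ex.{w} E X Y n) :
    (hm LinearMap.id).comp x (zero_add n) = x := Ext.mk₀_id_comp x

@[simp] theorem comp_hm_id {n : ℕ} (x : Ex.{w} E X Y n) :
    x.comp (hm LinearMap.id) (add_zero n) = x := Ext.comp_mk₀_id x

theorem comp_hm_hm {n : ℕ} (x : Ex.{w} E X Y n) (f : Y →ₗ[E] Z) (g : Z →ₗ[E] T) :
    (x.comp (hm f) (add_zero n)).comp (hm g) (add_zero n) =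
      x.comp (hm (g ∘ₗ f)) (add_zero n) := by
  rw [Ext.comp_assoc _ _ _ (add_zero n) (zero_add 0) (by omega), hm_comp_hm]

theorem hm_hm_comp {n : ℕ} (f : X →ₗ[E] Y) (g : Y →ₗ[E] Z) (x : Ex.{w} E Z T n) :
    (hm f).comp ((hm g).comp x (zero_add n)) (zero_add n) = (hm (g ∘ₗ f)).comp x (zero_add n) := by
  rw [← Ext.comp_assoc _ _ _ (zero_add 0) (zero_add n) (by omega), hm_comp_hm]

end

/-- The short exact sequence of a surjective map. -/
noncomputable def seq (g : X →ₗ[E] Y) : ShortComplex (ModuleCat.{0} E) :=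
  ShortComplex.mk (ModuleCat.ofHom (LinearMap.ker g).subtype) (ModuleCat.ofHom g) (by
    ext x
    exact x.2)

theorem seq_shortExact (g : X →ₗ[E] Y) (hg : Function.Surjective g) : (seq g).ShortExact := by
  refine ShortComplex.ShortExact.mk' ?_ ?_ ?_
  · rw [ShortComplex.moduleCat_exact_iff]
    intro x hx
    exact ⟨⟨x, hx⟩, rfl⟩
  · exact (ModuleCat.mono_iff_injective _).2 (Submodule.subtype_injective _)
  · exact (ModuleCat.epi_iff_surjective _).2 hg

/-- The class of the extension given by a surjective map. -/
noncomputable def cls [HasExt.{w} (ModuleCat.{0} E)] (g : X →ₗ[E] Y) (hg : Function.Surjective g) :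
    Ex.{w} E Y (LinearMap.ker g) 1 :=
  (seq_shortExact g hg).extClass

/-- The map between kernels induced by a commutative square. -/
def kerMap {g : X →ₗ[E] Y} {g' : Z →ₗ[E] T} (F : X →ₗ[E] Z) (f : Y →ₗ[E] T)
    (h : f ∘ₗ g = g' ∘ₗ F) : LinearMap.ker g →ₗ[E] LinearMap.ker g' :=
  F.restrict fun x hx => by
    have := LinearMap.congr_fun h x
    simp only [LinearMap.comp_apply, LinearMap.mem_ker.1 hx, map_zero] at this
    exact this.symm

/-- The multiplication by a central element. -/
def cen (z : E) (hz : ∀ s, z * s = s * z) (X : Type) [AddCommGroup X] [Module E X] : X →ₗ[E] X where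
  toFun x := z • x
  map_add' := smul_add z
  map_smul' s x := by rw [← mul_smul, hz, mul_smul, RingHom.id_apply]

variable [HasExt.{w} (ModuleCat.{0} E)]

theorem cls_kerMap {g : X →ₗ[E] Y} {g' : Z →ₗ[E] T} (hg : Function.Surjective g)
    (hg' : Function.Surjective g') (F : X →ₗ[E] Z) (f : Y →ₗ[E] T) (h : f ∘ₗ g = g' ∘ₗ F) :
    (cls.{w} g hg).comp (hm (kerMap F f h)) (add_zero 1) =
      (hm f).comp (cls g' hg') (zero_add 1) := by
  let φ : seq g ⟶ seq g' :=
    { τ₁ := ModuleCat.ofHom (kerMap F f h)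
      τ₂ := ModuleCat.ofHom F
      τ₃ := ModuleCat.ofHom f
      comm₁₂ := rfl
      comm₂₃ := by
        change ModuleCat.ofHom (g' ∘ₗ F) = ModuleCat.ofHom (f ∘ₗ g)
        rw [h] }
  exact ShortComplex.ShortExact.extClass_naturality (seq_shortExact g hg) (seq_shortExact g' hg') φ

section Cls

variable (g : X →ₗ[E] Y) (hg : Function.Surjective g)

theorem cls_comp_restrict (f : X →ₗ[E] Z) :
    (cls.{w} g hg).comp (hm (f ∘ₗ (LinearMap.ker g).subtype)) (add_zero 1) = 0 := by
  rw [← hm_comp_hm]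
  exact ShortComplex.ShortExact.extClass_comp_assoc _ _

theorem eq_zero_of_projective [Module.Projective E X] {p : ℕ} (h : 0 < p) (x : Ex.{w} E X Z p) :
    x = 0 := by
  obtain ⟨p, rfl⟩ := Nat.exists_eq_succ_of_ne_zero h.ne'
  have : Projective (ModuleCat.of E X) := ModuleCat.projective_of_categoryTheory_projective _
  exact Ext.eq_zero_of_projective x

theorem exists_cls_comp [Module.Projective E X] {m p : ℕ} (h : 1 + m = p) (x : Ex.{w} E Y Z p) :
    ∃ x' : Ex.{w} E (LinearMap.ker g) Z m, (cls g hg).comp x' h = x :=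
  Ext.contravariant_sequence_exact₃ (seq_shortExact g hg) _ x
    (eq_zero_of_projective (X := X) (by omega) _) h

theorem exists_of_cls_comp_eq_zero {m p : ℕ} (h : 1 + m = p) (x : Ex.{w} E (LinearMap.ker g) Z m)
    (hx : (cls g hg).comp x h = 0) :
    ∃ x' : Ex.{w} E X Z m, (hm (LinearMap.ker g).subtype).comp x' (zero_add m) = x :=
  Ext.contravariant_sequence_exact₁ (seq_shortExact g hg) _ x h hx

theorem eq_zero_of_cls_comp_eq_zero [Module.Projective E X] {m p : ℕ} (h : 1 + m = p) (hm : 0 < m)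
    (x : Ex.{w} E (LinearMap.ker g) Z m) (hx : (cls g hg).comp x h = 0) : x = 0 := by
  obtain ⟨x', rfl⟩ := exists_of_cls_comp_eq_zero g hg h x hx
  rw [eq_zero_of_projective hm x', Ext.comp_zero]

theorem exists_restrict (f : LinearMap.ker g →ₗ[E] Z)
    (hf : (cls.{w} g hg).comp (hm f) (add_zero 1) = 0) :
    ∃ F : X →ₗ[E] Z, F ∘ₗ (LinearMap.ker g).subtype = f := by
  obtain ⟨x', hx⟩ := exists_of_cls_comp_eq_zero g hg _ _ hf
  obtain ⟨F, rfl⟩ := exists_hm x'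
  exact ⟨F, hm_injective.{w} (by rw [← hx, hm_comp_hm])⟩

theorem exists_of_subtype_comp_eq_zero (hg : Function.Surjective g) {m : ℕ} (x : Ex.{w} E X Z m)
    (hx : (hm (LinearMap.ker g).subtype).comp x (zero_add m) = 0) :
    ∃ x' : Ex.{w} E Y Z m, (hm g).comp x' (zero_add m) = x :=
  Ext.contravariant_sequence_exact₂ (seq_shortExact g hg) _ x hx

end Cls

section Central

theorem cen_comp {z : E} (hz : ∀ s, z * s = s * z) {n : ℕ} (x : Ex.{w} E X Y n) :
    (hm (cen z hz X)).comp x (zero_add n) = x.comp (hm (cen z hz Y)) (add_zero n) := by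
  induction n generalizing X with
  | zero =>
    obtain ⟨f, rfl⟩ := exists_hm x
    rw [hm_comp_hm, hm_comp_hm]
    congr 1
    ext v
    exact map_smul f z v
  | succ n ih =>
    let g : (X →₀ E) →ₗ[E] X := Finsupp.linearCombination E id
    have hg : Function.Surjective g := Finsupp.linearCombination_id_surjective E X
    obtain ⟨x', rfl⟩ := exists_cls_comp g hg (add_comm 1 n) x
    have h : cen z hz X ∘ₗ g = g ∘ₗ cen z hz _ := LinearMap.ext fun v => (map_smul g z v).symm
    have h1 : kerMap (cen z hz _) (cen z hz X) h =
        cen z hz (LinearMap.ker g) := rfl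
    rw [← Ext.comp_assoc _ _ _ (zero_add 1) (add_comm 1 n) (by omega), ← cls_kerMap hg hg _ _ h, h1,
      Ext.comp_assoc _ _ _ (add_zero 1) (zero_add n) (by omega), ih,
      Ext.comp_assoc _ _ _ (add_comm 1 n) (add_zero n) (by omega)]

end Central

section Stage

variable {M : Type} [AddCommGroup M] [Module E M] {n : ℕ}

/-- Every extension of sufficiently high degree factors through the given one. -/
def Full (cl : Ex.{w} E M Y n) : Prop :=
  ∀ ⦃Z : Type⦄ [AddCommGroup Z] [Module E Z] ⦃m p : ℕ⦄ (h : n + m = p) (x : Ex.{w} E M Z p),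
    ∃ x' : Ex.{w} E Y Z m, cl.comp x' h = x

/-- Multiplication with the given extension is injective in positive degrees. -/
def Faithful (cl : Ex.{w} E M Y n) : Prop :=
  ∀ ⦃Z : Type⦄ [AddCommGroup Z] [Module E Z] ⦃m p : ℕ⦄ (h : n + m = p) (_ : 0 < m)
    (x : Ex.{w} E Y Z m), cl.comp x h = 0 → x = 0

theorem full_id : Full (hm.{w} (LinearMap.id : M →ₗ[E] M)) := by
  intro Z _ _ m p h x
  obtain rfl : m = p := by omega
  exact ⟨x, hm_id_comp x⟩

theorem faithful_id : Faithful (hm.{w} (LinearMap.id : M →ₗ[E] M)) := by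
  intro Z _ _ m p h _ x hx
  obtain rfl : m = p := by omega
  rwa [hm_id_comp] at hx

variable {g : X →ₗ[E] Y} {hg : Function.Surjective g} {cl : Ex.{w} E M Y n}

theorem Full.next [Module.Projective E X] (hcl : Full cl) :
    Full (cl.comp (cls g hg) (rfl : n + 1 = n + 1)) := by
  intro Z _ _ m p h x
  obtain ⟨x₁, rfl⟩ := hcl (show n + (1 + m) = p by omega) x
  obtain ⟨x₂, rfl⟩ := exists_cls_comp g hg rfl x₁
  exact ⟨x₂, Ext.comp_assoc _ _ _ _ _ (by omega)⟩

theorem Faithful.next [Module.Projective E X] (hcl : Faithful cl) :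
    Faithful (cl.comp (cls g hg) (rfl : n + 1 = n + 1)) := by
  intro Z _ _ m p h hm x hx
  rw [Ext.comp_assoc _ _ _ _ (rfl : 1 + m = 1 + m) (by omega)] at hx
  exact eq_zero_of_cls_comp_eq_zero g hg rfl hm x (hcl _ (by omega) _ hx)

theorem Full.exists_hm (hcl : Full cl) (x : Ex.{w} E M Z n) :
    ∃ f : Y →ₗ[E] Z, x = cl.comp (hm f) (add_zero n) := by
  obtain ⟨x', rfl⟩ := hcl (add_zero n) x
  obtain ⟨f, rfl⟩ := ModExt.exists_hm x'
  exact ⟨f, rfl⟩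

theorem Faithful.exists_restrict (hcl : Faithful cl) (f : LinearMap.ker g →ₗ[E] Z)
    (hf : (cl.comp (cls g hg) (rfl : n + 1 = n + 1)).comp (hm f) (add_zero _) = 0) :
    ∃ F : X →ₗ[E] Z, F ∘ₗ (LinearMap.ker g).subtype = f := by
  rw [Ext.comp_assoc _ _ _ _ (add_zero 1) (by omega)] at hf
  exact ModExt.exists_restrict g hg f (hcl rfl one_pos _ hf)

theorem comp_cls_restrict (F : X →ₗ[E] Z) :
    (cl.comp (cls g hg) (rfl : n + 1 = n + 1)).comp (hm (F ∘ₗ (LinearMap.ker g).subtype))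
      (add_zero _) = 0 := by
  rw [Ext.comp_assoc _ _ _ _ (add_zero 1) (by omega), cls_comp_restrict, Ext.comp_zero]

/-- Passage to the next step in a comparison of two resolutions. -/
theorem comp_kerMap {A B C : Type} [AddCommGroup A] [Module E A] [AddCommGroup B] [Module E B]
    [AddCommGroup C] [Module E C] {m p : ℕ} {x : Ex.{w} E C M m} {cl' : Ex.{w} E C B p}
    {g' : A →ₗ[E] B} {hg' : Function.Surjective g'} (h : m + n = p) {f : B →ₗ[E] Y}
    (hf : cl'.comp (hm f) (add_zero p) = x.comp cl h) (F : A →ₗ[E] X) (hF : f ∘ₗ g' = g ∘ₗ F) :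
    (cl'.comp (cls g' hg') (rfl : p + 1 = p + 1)).comp (hm (kerMap F f hF)) (add_zero _) =
      x.comp (cl.comp (cls g hg) (rfl : n + 1 = n + 1)) (show m + (n + 1) = p + 1 by omega) := by
  rw [Ext.comp_assoc _ _ _ _ (add_zero 1) (by omega), cls_kerMap hg' hg,
    ← Ext.comp_assoc _ _ _ (add_zero p) (zero_add 1) (by omega), hf,
    Ext.comp_assoc _ _ _ h rfl (by omega)]

end Stage

end ModExt

namespace FKAlg

open LC Module

/-- Representatives of a basis of the cohomology in degree `0`. -/
def R0 : List LC := [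
  [(1, 0)], [(1, 4), (1, 6)], [(1, 4), (1, 5), (-1, 7)], [(1, 11)]]

/-- Multiples of the coordinates of cocycles in degree `0`. -/
def Q0 : List LC := [
  [(2, 0)], [], [], [], [(2, 1)], [(-2, 1), (2, 2)], [], [], [], [], [], [(2, 3)]]

/-- Multiples of the corrections of cochains in degree `0`. -/
def U0 : List LC := [
  [], [], [], [], [(2, 2)], [(-2, 2), (2, 3)], [], [], [(2, 6)], [(2, 7)], [], [(1, 10)], [], [],
  [], [], [(-2, 1)], [], [], [], [], [], [], [(1, 9)], [], [], [], [], [], [], [], [], [], [],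
  [], [(-1, 8)]]

/-- Representatives of a basis of the cohomology in degree `1`. -/
def R1 : List LC := [
  [(1, 1), (1, 14), (1, 27)], [(1, 8), (1, 20), (1, 33), (1, 34)], [(1, 9), (1, 20), (-1, 22),
  (1, 33)], [(-1, 8), (1, 9)], [(1, 10)], [(1, 21)], [(1, 32)]]

/-- Multiples of the coordinates of cocycles in degree `1`. -/
def Q1 : List LC := [
  [], [(2, 0)], [], [], [], [], [], [], [(-1, 1), (1, 2), (-2, 3)], [(-1, 1), (1, 2)], [(2, 4)],
  [], [], [], [], [], [], [], [], [], [(1, 1)], [(2, 5)], [(2, 1), (-2, 2), (2, 3)], [], [], [],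
  [], [], [], [], [], [], [(2, 6)], [(2, 1), (-1, 2), (2, 3)]]

/-- Multiples of the primitives in degree `1`. -/
def V1 : List LC := [
  [], [], [], [], [(2, 2)], [(-2, 2), (2, 3)], [], [], [(1, 5)], [(1, 5)], [], [(1, 10)], [], [],
  [], [], [(-2, 1)], [], [], [], [(1, 4)], [], [], [(1, 9)], [], [], [], [], [], [], [], [], [],
  [(-1, 4), (-1, 5)], [], [(-1, 8)]]

/-- Multiples of the corrections of cochains in degree `1`. -/
def U1 : List LC := [
  [], [(1, 0), (1, 12), (-1, 24)], [], [], [(2, 2)], [(-2, 2), (-2, 3)], [], [], [(2, 6),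
  (-1, 17), (-1, 18), (-1, 19), (1, 29), (1, 30), (1, 31)], [(-2, 7), (-1, 17), (-1, 18),
  (-1, 19), (1, 29), (1, 30), (1, 31)], [], [], [], [], [], [], [(2, 13)], [(2, 15)], [], [],
  [(-1, 17), (1, 18), (-1, 19), (-1, 28), (-1, 29), (-1, 31)], [], [(-1, 17), (1, 18), (1, 19),
  (-1, 28), (-1, 29), (-1, 31)], [], [], [], [], [], [(-2, 25), (-2, 26)], [(2, 26)], [], [], [],
  [(1, 28), (2, 29), (1, 30)], [(-1, 28), (-2, 29), (1, 30)], [], [], [(2, 12)], [(-2, 12),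
  (2, 24)], [], [(-2, 27)], [(2, 14), (2, 27)], [], [], [(1, 28), (-1, 30)], [(1, 17), (1, 18),
  (1, 19), (-1, 28), (-1, 29), (-1, 31)], [(1, 17), (1, 18), (1, 19), (1, 29), (1, 30), (1, 31)],
  [(-2, 34)]]

/-- Representatives of a basis of the cohomology in degree `2`. -/
def R2 : List LC := [
  [(1, 0)], [(1, 12)], [(1, 24)], [(1, 36), (1, 48)], [(1, 4), (1, 6)], [(1, 16), (1, 18)],
  [(1, 11)], [(1, 23)], [(1, 35)], [(1, 47), (1, 59)]]

/-- Multiples of the coordinates of cocycles in degree `2`. -/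
def Q2 : List LC := [
  [(2, 0)], [], [], [], [(2, 4)], [(-4, 4)], [], [], [], [], [], [(2, 6)], [(2, 1)], [], [], [],
  [(2, 5)], [(2, 5)], [], [], [], [], [], [(2, 7)], [(2, 2)], [], [], [], [(4, 4), (4, 5)],
  [(-2, 4), (-2, 5)], [], [], [], [], [], [(2, 8)], [(2, 3)], [], [], [], [], [], [(2, 4),
  (2, 5)], [(-2, 5)], [], [], [], [(1, 9)], [], [], [], [], [], [], [], [], [], [], [], [(1, 9)]]

/-- Multiples of the primitives in degree `2`. -/
def V2 : List LC := [
  [], [(1, 0), (1, 12), (-1, 24)], [], [], [], [(2, 2), (-2, 3)], [], [], [(2, 4), (1, 5),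
  (1, 6), (1, 7)], [(2, 4), (1, 5), (-1, 6), (-1, 7)], [], [], [], [], [], [], [], [(-2, 13),
  (2, 15)], [], [], [(1, 4), (1, 5), (1, 7), (1, 16), (1, 18)], [], [(-1, 4), (-1, 5), (-1, 7),
  (1, 16), (-2, 17), (-1, 18)], [], [], [], [], [], [(-4, 2), (-4, 13), (-2, 25), (-2, 26)],
  [(2, 2), (2, 13), (2, 26)], [], [], [], [(1, 4), (-1, 6), (1, 16), (-1, 18), (2, 28), (2, 29)],
  [(1, 4), (-1, 6), (1, 16), (-1, 18), (-2, 29)], [], [], [(2, 12)], [(-2, 12), (2, 24)], [],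
  [(2, 1), (2, 14)], [(-2, 1)], [(-2, 2), (-2, 13)], [(2, 13)], [(-1, 4), (1, 6), (-1, 16),
  (1, 18)], [(-1, 4), (-1, 5), (-1, 7), (1, 16), (-1, 18)], [(-1, 5), (-1, 6), (-1, 7)],
  [(-1, 8)], [], [], [], [], [], [], [], [], [], [], [], [(1, 8)]]

/-- Multiples of the corrections of cochains in degree `2`. -/
def U2 : List LC := [
  [], [], [], [], [(2, 2), (-2, 14)], [(-2, 2), (2, 3), (2, 14), (-2, 27)], [], [], [(2, 6),
  (-2, 52)], [(2, 7), (-2, 53)], [], [(1, 10), (1, 56), (-1, 57), (1, 58)], [], [], [], [],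
  [(-2, 13), (-2, 14), (2, 27), (-2, 39), (-2, 51)], [(2, 15), (-2, 27)], [], [], [(-2, 18),
  (2, 52)], [], [(2, 18), (2, 19), (-2, 52), (-2, 53)], [(1, 21), (1, 56), (1, 57), (-1, 58)],
  [], [], [], [], [(-4, 14), (-2, 25), (2, 26), (2, 27), (-2, 39), (-2, 51)], [(2, 14),
  (-2, 26)], [], [], [], [(-2, 31), (2, 53)], [(-2, 30), (-2, 31), (2, 52), (2, 53)], [(-1, 32),
  (-1, 56), (-1, 57), (-1, 58)], [], [], [(2, 48)], [], [(2, 14), (2, 49), (2, 50), (2, 51)],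
  [(2, 39), (-2, 49), (-4, 50), (-2, 51)], [(2, 49), (2, 50), (2, 51)], [], [(2, 52), (2, 53)],
  [], [(2, 55)], [(-1, 56), (1, 57), (-1, 58)], [], [], [], [], [(2, 14), (-2, 27), (2, 49),
  (2, 50), (4, 51)], [(-2, 14), (2, 27), (-2, 39), (2, 50)], [], [], [(2, 53)], [(2, 54),
  (2, 55)], [], [(-1, 56), (-1, 57), (1, 58)], [], [], [], [], [(2, 39), (-2, 49), (-2, 50),
  (-2, 51)], [], [], [], [], [], [], [(1, 56), (1, 57), (1, 58)]]

/-- Representatives of a basis of the cohomology in degree `3`. -/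
def R3 : List LC := [
  [(1, 1), (1, 37), (1, 50), (1, 63)], [(1, 8), (1, 44), (1, 56), (1, 69), (1, 70)], [(-1, 8),
  (1, 9), (-1, 44), (1, 45)], [(1, 10), (1, 46)], [(1, 57)], [(1, 14), (1, 37), (1, 50),
  (1, 63)], [(1, 20), (1, 44), (1, 56), (1, 69), (1, 70)], [(1, 21), (1, 57)], [(1, 27), (1, 37),
  (1, 50), (1, 63)], [(1, 32), (1, 68)], [(1, 38), (1, 39), (1, 49), (1, 51), (1, 61), (1, 62)],
  [(1, 37), (1, 50), (1, 63)]]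

/-- Multiples of the coordinates of cocycles in degree `3`. -/
def Q3 : List LC := [
  [], [(6, 0), (-6, 11)], [], [], [], [], [], [], [(3, 1), (-3, 6)], [(-6, 1), (-3, 6)], [(6, 3),
  (-6, 4)], [], [], [], [(6, 5), (-6, 11)], [], [], [], [], [], [(-3, 1), (3, 6)], [(-6, 4),
  (6, 7)], [(-3, 1), (-6, 6)], [], [], [], [], [(6, 8), (-6, 11)], [], [], [], [], [(6, 4),
  (6, 9)], [(6, 1), (3, 6)], [(3, 1), (6, 6)], [], [], [(6, 11)], [(3, 10)], [(3, 10)], [], [],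
  [], [], [(-9, 1), (-6, 2), (3, 6)], [(3, 6)], [(6, 4)], [], [], [], [], [], [], [], [], [],
  [(3, 1)], [(6, 4)], [(12, 1), (6, 2)], [], [], [], [], [], [], [], [], [], [(-6, 4)], [(9, 1),
  (6, 2)]]

/-- Multiples of the primitives in degree `3`. -/
def V3 : List LC := [
  [], [], [], [], [(6, 2), (-6, 14)], [(-6, 2), (6, 3), (6, 14), (-6, 27)], [], [], [(-3, 4),
  (3, 16)], [(6, 5), (3, 16), (6, 42), (12, 43)], [(-6, 40)], [(3, 10), (-3, 22)], [], [], [],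
  [], [(6, 1), (-6, 13)], [(6, 15), (-6, 27)], [], [], [(-3, 4), (3, 16)], [], [(-3, 4), (6, 16),
  (6, 17), (6, 42), (12, 43)], [(-3, 9), (3, 21)], [], [], [], [], [(6, 1), (-6, 14), (-6, 25),
  (6, 26)], [(6, 14), (-6, 26)], [], [], [(-6, 41)], [(6, 4), (-3, 16), (-6, 28), (-6, 29),
  (-6, 42), (-12, 43)], [(3, 4), (-6, 16), (-6, 29), (-6, 42), (-12, 43)], [(3, 8), (-3, 32)],
  [], [], [(-3, 36)], [(3, 36)], [(-6, 1), (-6, 27), (-6, 37), (-6, 38), (-6, 39)], [(12, 1),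
  (12, 27), (6, 37), (12, 38), (12, 39)], [(-6, 1), (-6, 14), (-6, 27), (-6, 37), (-6, 38),
  (-6, 39)], [], [(3, 4), (6, 5), (-3, 16), (6, 42), (6, 43)], [(-3, 16), (-6, 43)], [(6, 40)],
  [(3, 22)], [], [], [], [], [(-12, 1), (-6, 14), (-6, 27), (-6, 37), (-6, 38), (-12, 39)],
  [(-6, 1), (-6, 38), (-6, 39)], [], [], [(3, 4)], [], [(-6, 5), (-12, 42), (-12, 43)], [(3, 9)],
  [], [], [], [], [(6, 1), (6, 14), (6, 27), (6, 37), (6, 38), (12, 39)], [], [], [], [(6, 41)],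
  [(-3, 4), (-6, 5), (-6, 42), (-6, 43)], [], [(-3, 8)]]

/-- Multiples of the corrections of cochains in degree `3`. -/
def U3 : List LC := [
  [], [(3, 0)], [], [], [(6, 2)], [(-6, 2), (-6, 3)], [], [], [(6, 6)], [(-6, 7)], [], [], [],
  [], [(3, 12)], [], [(6, 13)], [(6, 15)], [], [], [(6, 18)], [], [(6, 18), (6, 19)], [], [], [],
  [], [(3, 24)], [(-6, 25), (-6, 26)], [(6, 26)], [], [], [], [(-6, 31)], [(6, 30), (6, 31)], [],
  [], [(3, 36), (3, 48), (-3, 60)], [], [], [(4, 49), (-4, 51), (-2, 61), (2, 62)], [(-2, 49),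
  (2, 51), (-2, 61), (2, 62)], [], [], [(6, 43), (6, 54), (-6, 67)], [(-6, 43), (-6, 54),
  (-6, 55), (6, 66), (6, 67)], [(6, 43), (6, 54), (6, 55), (-6, 67)], [], [], [(6, 48)],
  [(-6, 48), (6, 60)], [], [(-6, 63)], [(6, 50), (6, 63)], [(2, 49), (-2, 51), (2, 61), (4, 62)],
  [(2, 49), (4, 51), (2, 61), (-2, 62)], [(-6, 43), (-6, 54), (-6, 55), (-6, 65), (6, 67)],
  [(6, 43), (12, 54), (12, 55), (6, 65), (-6, 66), (-12, 67)], [(6, 54), (6, 55), (6, 65)],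
  [(-6, 70)]]

/-- Representatives of a basis of the cohomology in degree `4`. -/
def R4 : List LC := [
  [(1, 0), (1, 36)], [(1, 36)], [(1, 48), (1, 60)], [(1, 11), (1, 47)], [(1, 47)], [(1, 59),
  (1, 71)], [(1, 12), (1, 36)], [(1, 23), (1, 47)], [(1, 24), (1, 36)], [(1, 35), (1, 47)]]

/-- Multiples of the coordinates of cocycles in degree `4`. -/
def Q4 : List LC := [
  [(6, 0), (-6, 1)], [], [], [], [], [], [], [], [], [], [], [(6, 3), (-6, 4)], [(-6, 1),
  (6, 6)], [], [], [], [], [], [], [], [], [], [], [(-6, 4), (6, 7)], [(-6, 1), (6, 8)], [], [],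
  [], [], [], [], [], [], [], [], [(-6, 4), (6, 9)], [(6, 1)], [], [], [], [], [], [], [], [],
  [], [], [(6, 4)], [(6, 2)], [], [], [], [], [], [], [], [], [], [], [(3, 5)], [], [], [], [],
  [], [], [], [], [], [], [], [(3, 5)]]

/-- Multiples of the primitives in degree `4`. -/
def V4 : List LC := [
  [], [(3, 0)], [], [], [(6, 2)], [(-6, 2), (-6, 3)], [], [], [(6, 4)], [(6, 4), (6, 5)], [], [],
  [], [], [(3, 12)], [], [(6, 13)], [(6, 15)], [], [], [(6, 16)], [], [(-6, 17)], [], [], [], [],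
  [(3, 24)], [(-6, 25), (-6, 26)], [(6, 26)], [], [], [], [(6, 28), (6, 29)], [(-6, 29)], [], [],
  [(3, 36), (3, 48), (-3, 60)], [], [], [(2, 38), (-2, 39), (2, 49), (-2, 51)], [(2, 38),
  (-2, 39), (-4, 49), (4, 51)], [], [], [(6, 40), (3, 41), (3, 42), (3, 43)], [(6, 40), (3, 41),
  (-3, 42), (-3, 43)], [(-6, 40), (-3, 41), (-3, 42), (-3, 43), (6, 52), (-6, 53)], [], [],
  [(6, 48)], [(-6, 48), (6, 60)], [], [(6, 37), (6, 50)], [(-6, 37)], [(-2, 38), (-4, 39),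
  (-2, 49), (-4, 51)], [(-2, 38), (2, 39), (4, 49), (2, 51)], [(6, 42), (-6, 52)], [(-6, 40),
  (-3, 41), (-3, 42), (-3, 43), (6, 52)], [(-3, 41), (-3, 42), (-3, 43)], [(-3, 44)], [], [], [],
  [], [], [], [], [], [], [], [], [(3, 44)]]

/-- Multiples of the corrections of cochains in degree `4`. -/
def U4 : List LC := [
  [], [], [], [], [(6, 2)], [(-6, 2), (6, 3)], [], [], [(6, 6)], [(6, 7)], [], [(3, 10)], [], [],
  [], [], [(-6, 13)], [(6, 15)], [], [], [(-6, 18)], [], [(6, 18), (6, 19)], [(3, 21)], [], [],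
  [], [], [(-6, 25), (6, 26)], [(-6, 26)], [], [], [], [(-6, 31)], [(-6, 30), (-6, 31)],
  [(-3, 32)], [], [], [(6, 60)], [], [(6, 38), (6, 61), (6, 62), (6, 63)], [(6, 51), (-6, 61),
  (-12, 62), (-6, 63)], [(6, 61), (6, 62), (6, 63)], [], [(4, 42), (2, 43), (2, 64), (4, 65)],
  [(4, 42), (2, 43), (-4, 64), (-2, 65)], [(6, 67)], [(-3, 68), (3, 69), (-3, 70)], [], [], [],
  [], [(6, 38), (-6, 39), (6, 61), (6, 62), (12, 63)], [(-6, 38), (6, 39), (-6, 51), (6, 62)],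
  [], [], [(-2, 42), (2, 43), (2, 64), (4, 65)], [(6, 66), (6, 67)], [(-2, 42), (2, 43), (2, 64),
  (-2, 65)], [(-3, 68), (-3, 69), (3, 70)], [], [], [], [], [(6, 51), (-6, 61), (-6, 62),
  (-6, 63)], [], [], [], [], [], [], [(3, 68), (3, 69), (3, 70)]]

/-- The values on the cycle `cyc` in terms of the coboundary. -/
def Uf : List LC := [
  [], [(1, 8), (-1, 9), (-1, 10)], [], [], [], [], [], [], [], [], [], [], [], [], [(1, 8),
  (-1, 9), (-1, 10)], [], [], [], [], [], [], [], [], [], [], [], [], [(1, 8)], [], [], [], [],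
  [], [], [], [], [], [(1, 10)], [], [], [], [], [], [], [], [], [], [], [], [(-1, 8), (1, 10)],
  [(-1, 10)]]

/-- The derivations among the generators. -/
def G1 : List LC := [
  [(1, 1), (1, 14), (1, 27)], [(-1, 8), (1, 9)], [(1, 10)], [(1, 21)], [(1, 32)]]

/-- Functionals dual to the derivations among the generators. -/
def F1 : List LC := [
  [(1, 1)], [(-1, 8), (1, 22), (1, 33)], [(1, 10)], [(1, 21)], [(1, 32)]]

/-- The generators of degree `2`. -/
def G2 : List LC := [
  [(1, 0)], [(1, 12)], [(1, 24)], [(1, 36), (1, 48)]]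

/-- Functionals dual to the generators of degree `2`. -/
def F2 : List LC := [
  [(1, 0)], [(1, 12)], [(1, 24)], [(1, 36)]]

/-- Functionals dual to the generators of degree `0`. -/
def F0 : List LC := [
  [(1, 6)], [(1, 5)], [(1, 11)]]

/-- The central elements `ab + ba`, `ab + bc - ac` and `abac`, acting from the left. -/
def zL : List LC := [[(1, 48), (1, 72)], [(1, 48), (1, 60), (-1, 84)], [(1, 132)]]

/-- The table of the multiplication by an element of the enveloping algebra on a power of the
bimodule. -/
def zT (z : LC) (i : ℕ) : LC :=
  rename (fun l => i / 12 * 12 + l) (subst z fun q => actW q (i % 12))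

/-- The table of the functional which is a combination of coordinates. -/
def fnT (L : LC) (i : ℕ) : LC :=
  (L.filter fun p => Nat.beq p.2 i).map fun p => (p.1, 0)

/-- A lift of the derivation with values `c` on the generators to a map of complexes, with the sign
`s`, in terms of the differential `D`. -/
def liftL (s : ℤ) (D : List LC) (c : LC) : List LC :=
  D.map fun row => row.flatMap fun p => if Nat.beq (p.2 % 12) 0 then
    (c.filter fun q => Nat.beq (q.2 / 12 + 1) (p.2 % 144 / 12)).map fun q =>
      (s * p.1 * q.1, p.2 / 144 * 144 + q.2 % 12 * 12) else []

namespace BasedBimodule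

variable {k E M : Type*} [Field k] [Ring E] [Algebra k E] [AddCommGroup M]
    [Module k M] [Module E M] [IsScalarTower k E M] (B : BasedBimodule k E M)

/-- Precomposition with a map of free modules, on the level of vectors. -/
noncomputable def del (r s : ℕ) (D : List LC) : (Fin r → M) →ₗ[k] (Fin s → M) :=
  pull (vecs (B.bK r).e s D)

theorem tab_del (r s : ℕ) (D : List LC) :
    Tab (B.bC r).e (B.bC s).e (B.del r s D) (cut (r * 12) (pullT s D)) :=
  B.tab_pull D

theorem lc_del {r s : ℕ} (D : List LC) (c : Fin r → M) :
    lc (B.del r s D c) = lc c ∘ₗ B.mp s r D :=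
  lc_pull _ _

/-- The vector with values in the bimodule given by a combination. -/
noncomputable def cv (r : ℕ) (L : LC) : Fin r → M := ev (B.bC r).e L

theorem del_cv_eq_zero {r s : ℕ} {D : List LC} {L : LC}
    (h : isZero (subst L (cut (r * 12) (pullT s D))) = true) : B.del r s D (B.cv r L) = 0 :=
  ((B.tab_del r s D).ev L).trans (ev_eq_zero _ h)

theorem del_cv {r s : ℕ} {D : List LC} {L L' : LC}
    (h : isZero (sub (subst L (cut (r * 12) (pullT s D))) L') = true) :
    B.del r s D (B.cv r L) = B.cv s L' :=
  ((B.tab_del r s D).ev L).trans (ev_eq_ev _ h)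

/-- The cocycles are spanned by given vectors and the coboundaries. -/
def Spans (q r s : ℕ) (D D' R : List LC) : Prop :=
  ∀ G : Submodule k (Fin r → M), (∀ t < R.length, B.cv r (R.getD t []) ∈ G) →
    (∀ c, B.del q r D c ∈ G) → ∀ c, B.del r s D' c = 0 → c ∈ G

theorem spans_of_certificate {q r s : ℕ} {D D' R Q V U : List LC} {m : ℤ} (hm : (m : k) ≠ 0)
    (h : allZero (r * 12) (fun i => sub (subst (Q.getD i []) (fun t => R.getD t []) ++
      subst (V.getD i []) (cut (q * 12) (pullT r D)))
      (sub [(m, i)] (subst (cut (r * 12) (pullT s D') i)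
        (cut (s * 12) fun l => U.getD l [])))) = true) : B.Spans q r s D D' R := by
  intro G hR hD c hc
  let u : (Fin s → M) →ₗ[k] (Fin r → M) := (B.bC s).lmap (B.bC r) fun l => U.getD l []
  have hu : Tab (B.bC s).e (B.bC r).e u (cut (s * 12) fun l => U.getD l []) :=
    Basis.tab_lmap _ _ _
  have hR' : ∀ t, B.cv r (R.getD t []) ∈ G := by
    intro t
    by_cases ht : t < R.length
    · exact hR t ht
    · rw [List.getD_eq_default _ _ (not_lt.1 ht)]
      exact G.zero_mem
  have key := (B.bC r).map_mem_of_e (m • LinearMap.id - u ∘ₗ B.del r s D') G (fun i => ?_) c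
  · rw [LinearMap.sub_apply, LinearMap.comp_apply, hc, map_zero, sub_zero, LinearMap.smul_apply,
      LinearMap.id_apply, ← Int.cast_smul_eq_zsmul k] at key
    exact (G.smul_mem_iff hm).1 key
  · by_cases hi : i < r * 12
    · rw [allZero, List.all_eq_true] at h
      have h1 := ev_eq_ev (B.bC r).e (h i (List.mem_range.2 hi))
      rw [ev_sub, ← hu.ev, ← B.tab_del r s D' i, ev_append, ev_subst, ← (B.tab_del q r D).ev] at h1
      simp only [LinearMap.sub_apply, LinearMap.comp_apply, LinearMap.smul_apply,
        LinearMap.id_apply]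
      simp only [ev_cons, ev_nil, add_zero] at h1
      rw [← h1]
      exact G.add_mem (ev_mem _ G hR' _) (hD _)
    · rw [Basis.e_of_le _ (not_lt.1 hi), map_zero]
      exact G.zero_mem

/-- The functional which is a combination of coordinates. -/
noncomputable def fn (r : ℕ) (L : LC) : (Fin r → M) →ₗ[k] k :=
  (B.bC r).constr k fun i => ev (fun _ => (1 : k)) (fnT L i)

theorem tab_fn (r : ℕ) (L : LC) :
    Tab (B.bC r).e (fun _ => (1 : k)) (B.fn r L) (cut (r * 12) (fnT L)) := by
  intro i
  by_cases h : i < r * 12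
  · rw [Basis.e_of_lt _ h, fn, Module.Basis.constr_basis, cut, if_pos (by simpa using h)]
  · rw [Basis.e_of_le _ (by omega), map_zero, cut, if_neg (by simpa using h), ev_nil]

theorem fn_cv_eq_zero {r : ℕ} {L L' : LC}
    (h : isZero (subst L' (cut (r * 12) (fnT L))) = true) : B.fn r L (B.cv r L') = 0 :=
  ((B.tab_fn r L).ev L').trans (ev_eq_zero _ h)

theorem fn_cv_eq_one {r : ℕ} {L L' : LC}
    (h : isZero (sub (subst L' (cut (r * 12) (fnT L))) [(1, 0)]) = true) :
    B.fn r L (B.cv r L') = 1 :=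
  ((B.tab_fn r L).ev L').trans ((ev_eq_ev _ h).trans (by simp))

theorem fn_comp_eq_zero {r s : ℕ} {L : LC} {ψ : (Fin r → M) →ₗ[k] (Fin s → M)} {t : ℕ → LC}
    (hψ : Tab (B.bC r).e (B.bC s).e ψ t)
    (h : allZero (r * 12) (fun i => subst (t i) (cut (s * 12) (fnT L))) = true)
    (c : Fin r → M) : B.fn s L (ψ c) = 0 := by
  have : B.fn s L ∘ₗ ψ = 0 := by
    refine (B.bC r).eq_of_allZero (Tab.comp' (B.tab_fn s L) hψ) (tab_zero _ _) ?_
    have h2 : ∀ L : LC, sub L [] = L := fun L => by simp [LC.sub, scale]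
    simpa only [h2] using h
  exact LinearMap.congr_fun this c

variable {B} in
theorem Spans.fn_eq_zero {q r s r' : ℕ} {D D' R : List LC} (hB : B.Spans q r s D D' R) {L : LC}
    {ψ : (Fin r → M) →ₗ[k] (Fin r' → M)} {t : ℕ → LC} (hψ : Tab (B.bC r).e (B.bC r').e ψ t)
    (hR : (R.all fun x => isZero (subst (subst x t) (cut (r' * 12) (fnT L)))) = true)
    (hD : allZero (q * 12) (fun i => subst (subst (cut (q * 12) (pullT r D) i) t)
      (cut (r' * 12) (fnT L))) = true)
    {c : Fin r → M} (hc : B.del r s D' c = 0) : B.fn r' L (ψ c) = 0 := by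
  refine hB (LinearMap.ker (B.fn r' L ∘ₗ ψ)) (fun t ht => ?_) (fun c => ?_) c hc
  · rw [List.all_eq_true] at hR
    rw [LinearMap.mem_ker, LinearMap.comp_apply, cv, hψ.ev, (B.tab_fn r' L).ev]
    refine ev_eq_zero _ (hR _ ?_)
    rw [List.getD_eq_getElem _ _ ht]
    exact List.getElem_mem ht
  · exact B.fn_comp_eq_zero (Tab.comp' hψ (B.tab_del q r D)) hD c

variable {B} in
theorem Spans.fn_eq_zero' {q r s : ℕ} {D D' R : List LC} (hB : B.Spans q r s D D' R) {L : LC}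
    (hR : (R.all fun x => isZero (subst (subst x fun i => [(1, i)]) (cut (r * 12) (fnT L)))) = true)
    (hD : allZero (q * 12) (fun i => subst (subst (cut (q * 12) (pullT r D) i) fun i => [(1, i)])
      (cut (r * 12) (fnT L))) = true)
    {c : Fin r → M} (hc : B.del r s D' c = 0) : B.fn r L c = 0 :=
  hB.fn_eq_zero (tab_id _) hR hD hc

/-- An element of the enveloping algebra. -/
noncomputable def zE (z : LC) : E := ev B.bE.e z

theorem zE_comm {z : LC} (h0 : (z.all fun p => Nat.blt p.2 144) = true)
    (h : allZero 144 (fun j => sub (subst z fun q => mulE q j) (subst z fun q => mulE j q)) = true)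
    (s : E) : B.zE z * s = s * B.zE z := by
  have hlt : ∀ p ∈ z, p.2 < 144 := by simpa using h0
  rw [allZero, List.all_eq_true] at h
  have h1 : ∀ j, B.zE z * B.bE.e j = B.bE.e j * B.zE z := by
    intro j
    by_cases hj : j < 144
    · have h2 := ev_eq_ev B.bE.e (h j (List.mem_range.2 hj))
      rw [ev_subst, ev_subst] at h2
      have h3 : B.zE z * B.bE.e j = ev (fun q => B.bE.e q * B.bE.e j) z :=
        ev_map B.bE.e (AddMonoidHom.mulRight (B.bE.e j)) z
      have h4 : B.bE.e j * B.zE z = ev (fun q => B.bE.e j * B.bE.e q) z :=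
        ev_map B.bE.e (AddMonoidHom.mulLeft (B.bE.e j)) z
      rw [h3, h4]
      refine Eq.trans (ev_congr fun p hp => ?_) (h2.trans (ev_congr fun p hp => ?_))
      · exact B.mul_e _ (hlt p hp) _ hj
      · exact (B.mul_e _ hj _ (hlt p hp)).symm
    · rw [B.bE.e_of_le (not_lt.1 hj), mul_zero, zero_mul]
  have h5 : LinearMap.mulLeft k (B.zE z) = LinearMap.mulRight k (B.zE z) :=
    B.bE.ext_of_e fun i _ => h1 i
  exact LinearMap.congr_fun h5 s

/-- The action of an element of the enveloping algebra. -/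
noncomputable def za (r : ℕ) (z : LC) : (Fin r → M) →ₗ[k] (Fin r → M) where
  toFun c := B.zE z • c
  map_add' := smul_add _
  map_smul' a c := by
    rw [RingHom.id_apply, smul_comm]

theorem za_apply (r : ℕ) (z : LC) (c : Fin r → M) : B.za r z c = B.zE z • c := rfl

theorem tab_za {r : ℕ} {z : LC} (h0 : (z.all fun p => Nat.blt p.2 144) = true) :
    Tab (B.bC r).e (B.bC r).e (B.za r z) (cut (r * 12) (zT z)) := by
  have hlt : ∀ p ∈ z, p.2 < 144 := by simpa using h0
  intro i
  by_cases h : i < r * 12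
  · rw [cut, if_pos (by simpa using h), zT]
    funext w
    rw [B.ev_bC, ev_subst, za_apply, Pi.smul_apply, Basis.pow_e]
    · split_ifs
      · have : B.zE z • B.bM.e (i % 12) = ev (fun q => B.bE.e q • B.bM.e (i % 12)) z :=
          ev_map B.bE.e (LinearMap.toSpanSingleton E M _) z
        rw [this]
        exact ev_congr fun p hp => B.smul_e _ (hlt p hp) _ (Nat.mod_lt _ (by norm_num))
      · rw [smul_zero]
    · intro p hp
      simp only [subst, scale, List.mem_flatMap, List.mem_map] at hp
      obtain ⟨q, hq, r, hr, rfl⟩ := hp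
      exact actW_lt _ _ r hr
  · rw [cut, if_neg (by simpa using h), Basis.e_of_le _ (by omega), map_zero, ev_nil]

theorem zE_smul_cv {r : ℕ} {z L L' : LC} (h0 : (z.all fun p => Nat.blt p.2 144) = true)
    (h : isZero (sub (subst L (cut (r * 12) (zT z))) L') = true) :
    B.zE z • B.cv r L = B.cv r L' :=
  ((B.tab_za h0).ev L).trans (ev_eq_ev _ h)

/-- The constant coefficient. -/
noncomputable def aug : M →ₗ[k] k := B.bM.coord 0

theorem aug_e (i : ℕ) : B.aug (B.bM.e i) = if i = 0 then 1 else 0 := by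
  by_cases h : i < 12
  · rw [Basis.e_of_lt _ h, aug, Basis.coord_apply, Basis.repr_self, Finsupp.single_apply]
    simp [Fin.ext_iff]
  · rw [Basis.e_of_le _ (by omega), map_zero, if_neg (by omega)]

theorem aug_ev (L : LC) : B.aug (ev B.bM.e L) = ev (fun i => if i = 0 then (1 : k) else 0) L := by
  rw [ev_map]
  exact ev_congr fun p _ => B.aug_e p.2

theorem actW_aug : ∀ i < 144, ∀ j < 12, Nat.blt 0 j = true →
    isZero ((actW i j).filter fun p => Nat.beq p.2 0) = true := by decide +kernel

theorem ev_filter_zero (L : LC) : ev (fun i => if i = 0 then (1 : k) else 0) L =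
    ev (fun i => if i = 0 then (1 : k) else 0) (L.filter fun p => Nat.beq p.2 0) := by
  induction L with
  | nil => rfl
  | cons p L ih =>
    by_cases h : p.2 = 0
    · rw [List.filter_cons_of_pos (by simpa using h), ev_cons, ev_cons, ih]
    · rw [List.filter_cons_of_neg (by simpa using h), ev_cons, ih]
      simp [h]

/-- The elements without constant coefficient. -/
noncomputable def rad : Submodule E M where
  carrier := {m | B.aug m = 0}
  add_mem' {a b} ha hb := by
    rw [Set.mem_ofPred_eq] at ha hb ⊢
    rw [map_add, ha, hb, add_zero]
  zero_mem' := map_zero _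
  smul_mem' s m hm := by
    rw [Set.mem_ofPred_eq] at hm ⊢
    have h1 : ∀ i < 144, ∀ j < 12, j ≠ 0 → B.aug (B.bE.e i • B.bM.e j) = 0 := by
      intro i hi j hj h0
      rw [B.smul_e i hi j hj, aug_ev, ev_filter_zero]
      exact ev_eq_zero _ (actW_aug i hi j hj (by simpa using Nat.pos_of_ne_zero h0))
    rw [← B.bM.sum_repr m, ← B.bE.sum_repr s]
    simp only [Finset.sum_smul, Finset.smul_sum, map_sum]
    refine Finset.sum_eq_zero fun j _ => Finset.sum_eq_zero fun i _ => ?_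
    rw [smul_comm, smul_assoc, map_smul, map_smul, ← B.bM.e_of_lt j.2, ← B.bE.e_of_lt i.2]
    by_cases hj : j.1 = 0
    · have h2 : B.bM.repr m j = 0 := by
        have : j = 0 := Fin.ext hj
        rw [this]
        exact hm
      rw [h2, zero_smul]
    · rw [h1 _ i.2 _ j.2 hj, smul_zero, smul_zero]

theorem mem_rad {m : M} : m ∈ B.rad ↔ B.aug m = 0 := Iff.rfl

theorem fn_eq_aug {r : ℕ} (w : Fin r) (c : Fin r → M) :
    B.fn r [(1, w.1 * 12)] c = B.aug (c w) := by
  have : B.fn r [(1, w.1 * 12)] = B.aug ∘ₗ LinearMap.proj w := by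
    refine (B.bC r).ext_of_e fun i hi => ?_
    rw [B.tab_fn, cut, if_pos (by simpa using hi), LinearMap.comp_apply, LinearMap.proj_apply,
      Basis.pow_e, fnT]
    by_cases h : w.1 * 12 = i
    · have h1 : w.1 = i / 12 := by omega
      have h2 : i % 12 = 0 := by omega
      rw [if_pos h1, h2, B.aug_e, if_pos rfl, List.filter_cons_of_pos (by simpa using h)]
      simp
    · rw [List.filter_cons_of_neg (by simpa using h)]
      simp only [List.filter_nil, List.map_nil, ev_nil]
      split_ifs with h1
      · rw [B.aug_e, if_neg (by omega)]
      · rw [map_zero]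
  rw [this]
  rfl

theorem spans0 (h2 : (2 : k) ≠ 0) : B.Spans 0 1 3 [] D1 R0 :=
  B.spans_of_certificate (Q := Q0) (V := []) (U := U0) (m := 2)
    (by exact_mod_cast h2) (by decide +kernel)

theorem spans1 (h2 : (2 : k) ≠ 0) : B.Spans 1 3 5 D1 D2 R1 :=
  B.spans_of_certificate (Q := Q1) (V := V1) (U := U1) (m := 2)
    (by exact_mod_cast h2) (by decide +kernel)

theorem spans2 (h2 : (2 : k) ≠ 0) : B.Spans 3 5 6 D2 D3 R2 :=
  B.spans_of_certificate (Q := Q2) (V := V2) (U := U2) (m := 2)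
    (by exact_mod_cast h2) (by decide +kernel)

theorem spans3 (h2 : (2 : k) ≠ 0) (h3 : (3 : k) ≠ 0) : B.Spans 5 6 6 D3 D4 R3 :=
  B.spans_of_certificate (Q := Q3) (V := V3) (U := U3) (m := 6)
    (by
    have := mul_ne_zero h2 h3
    norm_num at this ⊢
    exact this) (by decide +kernel)

theorem spans4 (h2 : (2 : k) ≠ 0) (h3 : (3 : k) ≠ 0) : B.Spans 6 6 6 D4 D5 R4 :=
  B.spans_of_certificate (Q := Q4) (V := V4) (U := U4) (m := 6)
    (by
    have := mul_ne_zero h2 h3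
    norm_num at this ⊢
    exact this) (by decide +kernel)

theorem lc_cyc {c : Fin 6 → M} (hc : B.del 6 6 D4 c = 0) : lc c B.cyc = 0 := by
  let u : (Fin 6 → M) →ₗ[k] (Fin 1 → M) := (B.bC 6).lmap (B.bC 1) fun l => Uf.getD l []
  have key : B.del 6 1 fL = u ∘ₗ B.del 6 6 D4 :=
    (B.bC 6).eq_of_allZero (B.tab_del 6 1 fL) (Tab.comp' (Basis.tab_lmap _ _ _) (B.tab_del 6 6 D4))
      (by decide +kernel)
  have h1 := congrFun (LinearMap.congr_fun key c) 0
  rw [LinearMap.comp_apply, hc, map_zero] at h1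
  exact h1

end BasedBimodule

end FKAlg

namespace ModExt

open CategoryTheory CategoryTheory.Abelian

universe w

variable {E : Type} [Ring E]

theorem exists_factor {X Y Z : Type} [AddCommGroup X] [Module E X] [AddCommGroup Y] [Module E Y]
    [AddCommGroup Z] [Module E Z] {g : X →ₗ[E] Y} (hg : Function.Surjective g) (f : X →ₗ[E] Z)
    (h : ∀ x, g x = 0 → f x = 0) : ∃ φ : Y →ₗ[E] Z, φ ∘ₗ g = f := by
  refine ⟨(LinearMap.ker g).liftQ f (fun x hx => h x hx) ∘ₗ
    (g.quotKerEquivOfSurjective hg).symm.toLinearMap, LinearMap.ext fun x => ?_⟩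
  have : (g.quotKerEquivOfSurjective hg).symm (g x) = (LinearMap.ker g).mkQ x := by
    rw [LinearEquiv.symm_apply_eq]
    rfl
  rw [LinearMap.comp_apply, LinearMap.comp_apply, LinearEquiv.coe_coe, this]
  rfl

end ModExt

namespace FKAlg

open LC Module ModExt CategoryTheory CategoryTheory.Abelian

universe w

section Rep

variable {k E M : Type} [Field k] [Ring E] [Algebra k E] [AddCommGroup M]
    [Module k M] [Module E M] [IsScalarTower k E M] [HasExt.{w} (ModuleCat.{0} E)]

theorem algebraMap_comm (a : k) (s : E) : algebraMap k E a * s = s * algebraMap k E a :=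
  Algebra.commutes a s

/-- The action of scalars on extensions. -/
noncomputable def sc {n : ℕ} (a : k) (x : Ex.{w} E M M n) : Ex.{w} E M M n :=
  (hm (cen (algebraMap k E a) (algebraMap_comm a) M)).comp x (zero_add n)

variable {N : Type} [AddCommGroup N] [Module E N] {n r : ℕ}

/-- The class `x` is represented by the cochain `c`. -/
def Rep (cl : Ex.{w} E M N n) (g : (Fin r → E) →ₗ[E] N) (c : Fin r → M) (x : Ex.{w} E M M n) :
    Prop :=
  ∃ φ : N →ₗ[E] M, φ ∘ₗ g = lc c ∧ x = cl.comp (hm φ) (add_zero n)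

theorem lc_add (c c' : Fin r → M) : lc (E := E) (c + c') = lc c + lc c' :=
  lc_ext fun w => by simp only [lc_single, LinearMap.add_apply, Pi.add_apply]

theorem lc_zero : lc (E := E) (0 : Fin r → M) = 0 :=
  lc_ext fun w => by simp only [lc_single, LinearMap.zero_apply, Pi.zero_apply]

theorem lc_injective {c c' : Fin r → M} (h : lc (E := E) c = lc c') : c = c' := by
  funext w
  rw [← lc_single (E := E) c, h, lc_single]

theorem lc_central {z : E} (hz : ∀ s, z * s = s * z) (c : Fin r → M) :
    lc (E := E) (z • c) = cen z hz M ∘ₗ lc c :=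
  lc_ext fun w => by
    rw [lc_single, LinearMap.comp_apply, lc_single]
    rfl

variable {cl : Ex.{w} E M N n} {g : (Fin r → E) →ₗ[E] N} {c c' : Fin r → M} {x x' : Ex.{w} E M M n}

theorem Rep.zero : Rep cl g (0 : Fin r → M) 0 :=
  ⟨0, by rw [lc_zero, LinearMap.zero_comp], by rw [hm_zero, Ext.comp_zero]⟩

theorem Rep.add (h : Rep cl g c x) (h' : Rep cl g c' x') : Rep cl g (c + c') (x + x') := by
  obtain ⟨φ, h1, rfl⟩ := h
  obtain ⟨φ', h1', rfl⟩ := h'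
  exact ⟨φ + φ', by rw [lc_add, LinearMap.add_comp, h1, h1'], by rw [hm_add, Ext.comp_add]⟩

theorem Rep.central (h : Rep cl g c x) {z : E} (hz : ∀ s, z * s = s * z) :
    Rep cl g (z • c) (x.comp (hm (cen z hz M)) (add_zero n)) := by
  obtain ⟨φ, h1, rfl⟩ := h
  exact ⟨cen z hz M ∘ₗ φ, by rw [lc_central hz, ← h1, LinearMap.comp_assoc],
    by rw [comp_hm_hm]⟩

theorem Rep.central' (h : Rep cl g c x) {z : E} (hz : ∀ s, z * s = s * z) :
    Rep cl g (z • c) ((hm (cen z hz M)).comp x (zero_add n)) := by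
  rw [cen_comp]
  exact h.central hz

theorem Rep.sc (h : Rep cl g c x) (a : k) : Rep cl g (a • c) (sc a x) := by
  have := h.central' (algebraMap_comm a)
  rwa [algebraMap_smul] at this

theorem Rep.unique (hg : Function.Surjective g) (h : Rep cl g c x) (h' : Rep cl g c x') :
    x = x' := by
  obtain ⟨φ, h1, rfl⟩ := h
  obtain ⟨φ', h1', rfl⟩ := h'
  have : φ = φ' := by
    refine LinearMap.ext fun v => ?_
    obtain ⟨u, rfl⟩ := hg v
    exact LinearMap.congr_fun (h1.trans h1'.symm) u
  rw [this]

theorem Rep.of_hm (φ : N →ₗ[E] M) :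
    Rep cl g (fun w => φ (g (Pi.single w 1))) (cl.comp (hm φ) (add_zero n)) :=
  ⟨φ, (lc_eta (φ ∘ₗ g)).symm, rfl⟩

theorem exists_rep (hcl : Full cl) (g : (Fin r → E) →ₗ[E] N) (x : Ex.{w} E M M n) :
    ∃ c, Rep cl g c x := by
  obtain ⟨φ, rfl⟩ := hcl.exists_hm x
  exact ⟨_, Rep.of_hm φ⟩

variable {N₀ : Type} [AddCommGroup N₀] [Module E N₀] {q : ℕ}
  {g₀ : (Fin q → E) →ₗ[E] N₀} {hg₀ : Function.Surjective g₀} {cl₀ : Ex.{w} E M N₀ n}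
  {d : (Fin r → E) →ₗ[E] LinearMap.ker g₀} {D : Fin r → Fin q → E}

theorem rep_pull (hd : (LinearMap.ker g₀).subtype ∘ₗ d = lc D) (c : Fin q → M) :
    Rep (cl₀.comp (cls g₀ hg₀) (rfl : n + 1 = n + 1)) d (pull (k := k) D c) 0 := by
  refine ⟨lc c ∘ₗ (LinearMap.ker g₀).subtype, ?_, (comp_cls_restrict _).symm⟩
  rw [lc_pull, LinearMap.comp_assoc, hd]

theorem Rep.exists_eq_pull (hcl : Faithful cl₀) (hd : (LinearMap.ker g₀).subtype ∘ₗ d = lc D)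
    {c : Fin r → M} (h : Rep (cl₀.comp (cls g₀ hg₀) (rfl : n + 1 = n + 1)) d c 0) :
    ∃ c₀, c = pull (k := k) D c₀ := by
  obtain ⟨φ, h1, h2⟩ := h
  obtain ⟨F, rfl⟩ := hcl.exists_restrict φ h2.symm
  refine ⟨fun w => F (Pi.single w 1), lc_injective (E := E) ?_⟩
  rw [lc_pull, lc_eta, ← h1, LinearMap.comp_assoc, hd]

end Rep

namespace BasedBimodule

variable {k E M : Type} [Field k] [Ring E] [Algebra k E] [AddCommGroup M]
    [Module k M] [Module E M] [IsScalarTower k E M] (B : BasedBimodule k E M)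

theorem eps_surjective : Function.Surjective B.eps := by
  intro m
  obtain ⟨s, -, h⟩ := B.theta_mem m
  refine ⟨fun _ => s, ?_⟩
  rw [eps, lc_apply]
  simpa using h

/-- The first differential as a map to the kernel of the augmentation. -/
noncomputable def g1 : (Fin 3 → E) →ₗ[E] LinearMap.ker B.eps :=
  (B.mp 3 1 D1).codRestrict _ (LinearMap.congr_fun B.eps_comp)

/-- The second differential as a map to the cycles. -/
noncomputable def g2 : (Fin 5 → E) →ₗ[E] LinearMap.ker B.g1 :=
  (B.mp 5 3 D2).codRestrict _ fun x => Subtype.ext (LinearMap.congr_fun B.d1_comp_d2 x)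

/-- The third differential as a map to the cycles. -/
noncomputable def g3 : (Fin 6 → E) →ₗ[E] LinearMap.ker B.g2 :=
  (B.mp 6 5 D3).codRestrict _ fun x => Subtype.ext (LinearMap.congr_fun B.d2_comp_d3 x)

/-- The fourth differential as a map to the cycles. -/
noncomputable def g4 : (Fin 6 → E) →ₗ[E] LinearMap.ker B.g3 :=
  (B.mp 6 6 D4).codRestrict _ fun x => Subtype.ext (LinearMap.congr_fun B.d3_comp_d4 x)

theorem g1_surjective : Function.Surjective B.g1 := fun x => by
  obtain ⟨y, hy⟩ := B.exact0 x.1 x.2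
  exact ⟨y, Subtype.ext hy⟩

theorem g2_surjective : Function.Surjective B.g2 := fun x =>
  ⟨_, Subtype.ext (B.exact1 x.1 (congrArg Subtype.val x.2))⟩

theorem g3_surjective : Function.Surjective B.g3 := fun x =>
  ⟨_, Subtype.ext (B.exact2 x.1 (congrArg Subtype.val x.2))⟩

theorem d3_ker_g3 (x : LinearMap.ker B.g3) : B.mp 6 5 D3 x.1 = 0 := congrArg Subtype.val x.2

section Stages

variable [HasExt.{w} (ModuleCat.{0} E)]

/-- The class of the truncation of the resolution of length `1`. -/
noncomputable def st1 : Ex.{w} E M (LinearMap.ker B.eps) 1 :=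
  (hm LinearMap.id).comp (cls B.eps B.eps_surjective) (rfl : 0 + 1 = 0 + 1)

/-- The class of the truncation of the resolution of length `2`. -/
noncomputable def st2 : Ex.{w} E M (LinearMap.ker B.g1) 2 :=
  B.st1.comp (cls B.g1 B.g1_surjective) (rfl : 1 + 1 = 1 + 1)

/-- The class of the truncation of the resolution of length `3`. -/
noncomputable def st3 : Ex.{w} E M (LinearMap.ker B.g2) 3 :=
  B.st2.comp (cls B.g2 B.g2_surjective) (rfl : 2 + 1 = 2 + 1)

/-- The class of the truncation of the resolution of length `4`. -/
noncomputable def st4 : Ex.{w} E M (LinearMap.ker B.g3) 4 :=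
  B.st3.comp (cls B.g3 B.g3_surjective) (rfl : 3 + 1 = 3 + 1)

theorem full_st1 : Full (B.st1 : Ex.{w} E M _ 1) := full_id.next

theorem full_st2 : Full (B.st2 : Ex.{w} E M _ 2) := B.full_st1.next

theorem full_st3 : Full (B.st3 : Ex.{w} E M _ 3) := B.full_st2.next

theorem full_st4 : Full (B.st4 : Ex.{w} E M _ 4) := B.full_st3.next

theorem faithful_st1 : Faithful (B.st1 : Ex.{w} E M _ 1) := faithful_id.next

theorem faithful_st2 : Faithful (B.st2 : Ex.{w} E M _ 2) := B.faithful_st1.next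

theorem faithful_st3 : Faithful (B.st3 : Ex.{w} E M _ 3) := B.faithful_st2.next

theorem rep1_del (c : Fin 1 → M) : Rep.{w} B.st1 B.g1 (B.del 1 3 D1 c) 0 :=
  rep_pull (d := B.g1) rfl c

theorem rep2_del (c : Fin 3 → M) : Rep.{w} B.st2 B.g2 (B.del 3 5 D2 c) 0 :=
  rep_pull (d := B.g2) rfl c

theorem rep3_del (c : Fin 5 → M) : Rep.{w} B.st3 B.g3 (B.del 5 6 D3 c) 0 :=
  rep_pull (d := B.g3) rfl c

theorem rep4_del (c : Fin 6 → M) : Rep.{w} B.st4 B.g4 (B.del 6 6 D4 c) 0 :=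
  rep_pull (d := B.g4) rfl c

theorem rep1_zero {c : Fin 3 → M} (h : Rep.{w} B.st1 B.g1 c 0) : ∃ c', c = B.del 1 3 D1 c' :=
  Rep.exists_eq_pull (d := B.g1) faithful_id rfl h

theorem rep2_zero {c : Fin 5 → M} (h : Rep.{w} B.st2 B.g2 c 0) : ∃ c', c = B.del 3 5 D2 c' :=
  Rep.exists_eq_pull (d := B.g2) B.faithful_st1 rfl h

theorem rep3_zero {c : Fin 6 → M} (h : Rep.{w} B.st3 B.g3 c 0) : ∃ c', c = B.del 5 6 D3 c' :=
  Rep.exists_eq_pull (d := B.g3) B.faithful_st2 rfl h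

variable {N : Type} [AddCommGroup N] [Module E N] {n q r s : ℕ} {cl : Ex.{w} E M N n}
  {g : (Fin r → E) →ₗ[E] N} {D D' R : List LC}

theorem del_eq_zero_of_rep (hD' : g ∘ₗ B.mp s r D' = 0) {c : Fin r → M} {x : Ex.{w} E M M n}
    (h : Rep cl g c x) : B.del r s D' c = 0 := by
  obtain ⟨φ, h1, -⟩ := h
  refine lc_injective (E := E) ?_
  rw [B.lc_del, ← h1, LinearMap.comp_assoc, hD', LinearMap.comp_zero, lc_zero]

theorem exists_rep_of_del_eq_zero (hg : Function.Surjective g)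
    (hD' : ∀ x, g x = 0 → ∃ y, B.mp s r D' y = x) {c : Fin r → M} (hc : B.del r s D' c = 0) :
    ∃ x, Rep cl g c x := by
  obtain ⟨φ, hφ⟩ := exists_factor hg (lc c) fun x hx => by
    obtain ⟨y, rfl⟩ := hD' x hx
    rw [← LinearMap.comp_apply, ← B.lc_del, hc, lc_zero, LinearMap.zero_apply]
  exact ⟨_, φ, hφ, rfl⟩

theorem g0_comp : B.eps ∘ₗ B.mp 3 1 D1 = 0 := B.eps_comp

theorem g1_comp : B.g1 ∘ₗ B.mp 5 3 D2 = 0 :=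
  LinearMap.ext fun x => Subtype.ext (LinearMap.congr_fun B.d1_comp_d2 x)

theorem g2_comp : B.g2 ∘ₗ B.mp 6 5 D3 = 0 :=
  LinearMap.ext fun x => Subtype.ext (LinearMap.congr_fun B.d2_comp_d3 x)

theorem g3_comp : B.g3 ∘ₗ B.mp 6 6 D4 = 0 :=
  LinearMap.ext fun x => Subtype.ext (LinearMap.congr_fun B.d3_comp_d4 x)

variable {B} in
/-- A property of extensions holds for some representative of every cocycle if it does so for the
given ones. -/
theorem Spans.exists_rep (hB : B.Spans q r s D D' R) (hD : ∀ c, Rep cl g (B.del q r D c) 0)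
    {P : Ex.{w} E M M n → Prop} (zero : P 0) (add : ∀ x y, P x → P y → P (x + y))
    (scal : ∀ (a : k) x, P x → P (sc a x))
    (rep : ∀ L ∈ R, ∃ x, Rep cl g (B.cv r L) x ∧ P x) {c : Fin r → M} (hc : B.del r s D' c = 0) :
    ∃ x, Rep cl g c x ∧ P x := by
  let G : Submodule k (Fin r → M) :=
    { carrier := {c | ∃ x, Rep cl g c x ∧ P x}
      zero_mem' := ⟨0, Rep.zero, zero⟩
      add_mem' := by
        rintro c c' ⟨x, hx, hP⟩ ⟨x', hx', hP'⟩
        exact ⟨x + x', hx.add hx', add _ _ hP hP'⟩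
      smul_mem' := by
        rintro a c ⟨x, hx, hP⟩
        exact ⟨sc a x, hx.sc a, scal a x hP⟩ }
  refine hB G (fun t ht => rep _ ?_) (fun c => ⟨0, hD c, zero⟩) c hc
  rw [List.getD_eq_getElem _ _ ht]
  exact List.getElem_mem ht

variable {B} in
/-- A property of extensions holds in general if it holds for the given representatives. -/
theorem Spans.induction (hB : B.Spans q r s D D' R) (hcl : Full cl) (hg : Function.Surjective g)
    (hD : ∀ c, Rep cl g (B.del q r D c) 0) (hD' : g ∘ₗ B.mp s r D' = 0)
    {P : Ex.{w} E M M n → Prop} (zero : P 0) (add : ∀ x y, P x → P y → P (x + y))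
    (scal : ∀ (a : k) x, P x → P (sc a x))
    (rep : ∀ L ∈ R, ∃ x, Rep cl g (B.cv r L) x ∧ P x) (x : Ex.{w} E M M n) : P x := by
  obtain ⟨c, hc⟩ := FKAlg.exists_rep hcl g x
  obtain ⟨x', hx', hP⟩ := hB.exists_rep hD zero add scal rep (B.del_eq_zero_of_rep hD' hc)
  rwa [hc.unique hg hx']

end Stages

end BasedBimodule

end FKAlg

namespace FKAlg

open LC Module ModExt CategoryTheory CategoryTheory.Abelian

universe w

/-- The actions of the quadratic central elements, from degree `2` to degree `0`. -/
def Y0 : List (List LC) := [YA0, YB0, YC0, YS0]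

/-- The actions of the quadratic central elements, from degree `3` to degree `1`. -/
def Y1 : List (List LC) := [YA1, YB1, YC1, YS1]

/-- The actions of the quadratic central elements, from degree `4` to degree `2`. -/
def Y2 : List (List LC) := [YA2, YB2, YC2, YS2]

/-- The generator of degree `3`. -/
def G3 : LC := [(1, 37), (1, 50), (1, 63)]

namespace BasedBimodule

variable {k E M : Type} [Field k] [Ring E] [Algebra k E] [AddCommGroup M]
    [Module k M] [Module E M] [IsScalarTower k E M] (B : BasedBimodule k E M)

theorem zL_comm (i : Fin 3) (s : E) : B.zE (zL.getD i []) * s = s * B.zE (zL.getD i []) :=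
  B.zE_comm (by revert i; decide +kernel) (by revert i; decide +kernel) s

theorem cv_one : B.cv 1 [(1, 0)] = fun _ => B.bM.e 0 := by
  funext w
  rw [cv, ev_cons, ev_nil, add_zero, one_smul, Basis.pow_e]
  simp

theorem lc_cv_one : lc (B.cv 1 [(1, 0)]) = B.eps := by rw [cv_one, eps]

theorem exists_factor_g3 {c : Fin 6 → M} (hc : B.del 6 6 D4 c = 0) :
    ∃ φ : LinearMap.ker B.g2 →ₗ[E] M, φ ∘ₗ B.g3 = lc c := by
  refine exists_factor B.g3_surjective (lc c) fun x hx => ?_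
  obtain ⟨s, hs, -⟩ := B.theta_mem (B.tau x)
  rw [← B.exact3 x (congrArg Subtype.val hx), map_add, ← LinearMap.comp_apply, ← B.lc_del, hc,
    lc_zero, LinearMap.zero_apply, hs, map_smul, B.lc_cyc hc, smul_zero, add_zero]

/-- The projection from the cycles of degree `3` to the homology. -/
noncomputable def om : LinearMap.ker B.g3 →ₗ[E] M where
  toFun x := B.tau x.1
  map_add' x y := map_add B.tau _ _
  map_smul' a x := by
    obtain ⟨s, hs, hs'⟩ := B.theta_mem (B.tau x.1)
    rw [RingHom.id_apply, Submodule.coe_smul]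
    conv_lhs => rw [← B.exact3 x.1 (B.d3_ker_g3 x)]
    rw [smul_add, map_add, ← map_smul, B.tau_d4, zero_add, hs, smul_smul, B.tau_smul_cyc,
      mul_smul, hs']

theorem om_apply (x : LinearMap.ker B.g3) : B.om x = B.tau x.1 := rfl

/-- The class `cyc` as a cycle. -/
noncomputable def cyc' : LinearMap.ker B.g3 := ⟨B.cyc, Subtype.ext B.d3_cyc⟩

theorem om_smul_cyc (s : E) : B.om (s • B.cyc') = s • B.bM.e 0 := B.tau_smul_cyc s

theorem om_surjective : Function.Surjective B.om := fun m => by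
  obtain ⟨s, -, hs⟩ := B.theta_mem m
  exact ⟨s • B.cyc', (B.om_smul_cyc s).trans hs⟩

/-- The module of boundaries of degree `3`. -/
def Bd : Type := LinearMap.ker B.om

noncomputable instance : AddCommGroup B.Bd := inferInstanceAs (AddCommGroup (LinearMap.ker B.om))

noncomputable instance : Module E B.Bd := inferInstanceAs (Module E (LinearMap.ker B.om))

/-- The inclusion of the boundaries in the cycles. -/
noncomputable def bd : B.Bd →ₗ[E] LinearMap.ker B.g3 := (LinearMap.ker B.om).subtype

/-- The corestriction of a map to the boundaries. -/
noncomputable def toBd {N : Type} [AddCommGroup N] [Module E N] (f : N →ₗ[E] LinearMap.ker B.g3)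
    (h : ∀ x, B.om (f x) = 0) : N →ₗ[E] B.Bd := f.codRestrict (LinearMap.ker B.om) h

theorem bd_injective : Function.Injective B.bd := Subtype.val_injective

theorem om_bd (x : B.Bd) : B.om (B.bd x) = 0 := x.2

/-- The fourth differential as a map to the boundaries. -/
noncomputable def b4 : (Fin 6 → E) →ₗ[E] B.Bd := B.toBd B.g4 fun x => B.tau_d4 x

theorem bd_b4 : B.bd ∘ₗ B.b4 = B.g4 := rfl

theorem b4_surjective : Function.Surjective B.b4 := fun x => by
  refine ⟨B.hp 6 6 H3 (B.bd x).1, B.bd_injective (Subtype.ext ?_)⟩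
  have h := B.exact3 (B.bd x).1 (B.d3_ker_g3 (B.bd x))
  have h0 : B.tau (B.bd x).1 = 0 := B.om_bd x
  rwa [h0, map_zero, add_zero] at h

/-- The fifth differential as a map to the cycles. -/
noncomputable def g5 : (Fin 6 → E) →ₗ[E] LinearMap.ker B.b4 :=
  (B.mp 6 6 D5).codRestrict _ fun x =>
    B.bd_injective (Subtype.ext (LinearMap.congr_fun B.d4_comp_d5 x))

theorem g5_surjective : Function.Surjective B.g5 := fun x =>
  ⟨_, Subtype.ext (B.exact4 x.1 (congrArg (fun y => (B.bd y).1) x.2))⟩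

section Classes

variable [HasExt.{w} (ModuleCat.{0} E)]

theorem exists_rep1 {c : Fin 3 → M} (hc : B.del 3 5 D2 c = 0) : ∃ x, Rep.{w} B.st1 B.g1 c x :=
  B.exists_rep_of_del_eq_zero B.g1_surjective
    (fun x hx => ⟨_, B.exact1 x (congrArg Subtype.val hx)⟩) hc

theorem exists_rep2 {c : Fin 5 → M} (hc : B.del 5 6 D3 c = 0) : ∃ x, Rep.{w} B.st2 B.g2 c x :=
  B.exists_rep_of_del_eq_zero B.g2_surjective
    (fun x hx => ⟨_, B.exact2 x (congrArg Subtype.val hx)⟩) hc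

theorem exists_rep3 {c : Fin 6 → M} (hc : B.del 6 6 D4 c = 0) : ∃ x, Rep.{w} B.st3 B.g3 c x := by
  obtain ⟨φ, hφ⟩ := B.exists_factor_g3 hc
  exact ⟨_, φ, hφ, rfl⟩

/-- The generators of degree `0`. -/
noncomputable def x0 (i : Fin 3) : Ex.{w} E M M 0 := hm (cen (B.zE (zL.getD i [])) (B.zL_comm i) M)

theorem exists_x1 (s : Fin 5) : ∃ x, Rep.{w} B.st1 B.g1 (B.cv 3 (G1.getD s [])) x :=
  B.exists_rep1 (B.del_cv_eq_zero (by revert s; decide +kernel))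

theorem exists_x2 (t : Fin 4) : ∃ x, Rep.{w} B.st2 B.g2 (B.cv 5 (G2.getD t [])) x :=
  B.exists_rep2 (B.del_cv_eq_zero (by revert t; decide +kernel))

theorem exists_x3 : ∃ x, Rep.{w} B.st3 B.g3 (B.cv 6 G3) x :=
  B.exists_rep3 (B.del_cv_eq_zero (by decide +kernel))

/-- The generators of degree `1`. -/
noncomputable def x1 (s : Fin 5) : Ex.{w} E M M 1 := (B.exists_x1 s).choose

/-- The generators of degree `2`. -/
noncomputable def x2 (t : Fin 4) : Ex.{w} E M M 2 := (B.exists_x2 t).choose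

/-- The generator of degree `3`. -/
noncomputable def x3 : Ex.{w} E M M 3 := B.exists_x3.choose

/-- The generator of degree `4`. -/
noncomputable def x4 : Ex.{w} E M M 4 := B.st4.comp (hm B.om) (add_zero 4)

theorem rep_x1 (s : Fin 5) : Rep.{w} B.st1 B.g1 (B.cv 3 (G1.getD s [])) (B.x1 s) :=
  (B.exists_x1 s).choose_spec

theorem rep_x2 (t : Fin 4) : Rep.{w} B.st2 B.g2 (B.cv 5 (G2.getD t [])) (B.x2 t) :=
  (B.exists_x2 t).choose_spec

theorem rep_x3 : Rep.{w} B.st3 B.g3 (B.cv 6 G3) B.x3 := B.exists_x3.choose_spec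

theorem rep_one : Rep.{w} (hm (LinearMap.id : M →ₗ[E] M)) B.eps (B.cv 1 [(1, 0)]) (hm LinearMap.id) :=
  ⟨LinearMap.id, by rw [lc_cv_one, LinearMap.id_comp], by rw [comp_hm_id]⟩

theorem rep0_del (c : Fin 0 → M) : Rep.{w} (hm (LinearMap.id : M →ₗ[E] M)) B.eps (B.del 0 1 [] c) 0 := by
  rw [Subsingleton.elim c 0, map_zero]
  exact Rep.zero

theorem rep_comp_del {N N' : Type} [AddCommGroup N] [Module E N] [AddCommGroup N'] [Module E N']
    {m n p r r' : ℕ} {cl : Ex.{w} E M N n} {cl' : Ex.{w} E M N' p} {f : N' →ₗ[E] N}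
    {g : (Fin r → E) →ₗ[E] N} {g' : (Fin r' → E) →ₗ[E] N'} {y : Ex.{w} E M M m}
    {x : Ex.{w} E M M n} {c : Fin r → M} (hc : Rep cl g c x) (h : m + n = p)
    (hf : cl'.comp (hm f) (add_zero p) = y.comp cl h) {W : List LC}
    (hW : f ∘ₗ g' = g ∘ₗ B.mp r' r W) : Rep cl' g' (B.del r r' W c) (y.comp x h) := by
  obtain ⟨φ, h1, rfl⟩ := hc
  refine ⟨φ ∘ₗ f, ?_, ?_⟩
  · rw [B.lc_del, ← h1, LinearMap.comp_assoc, hW, LinearMap.comp_assoc]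
  · rw [← comp_hm_hm, hf, Ext.comp_assoc _ _ _ h (add_zero n) (by omega)]

/-- Lifts of a class of degree `2` along the resolution. -/
theorem exists_lift2 {c : Fin 5 → M} {x : Ex.{w} E M M 2} (hx : Rep B.st2 B.g2 c x)
    {W0 W1 W2 : List LC} (h0 : B.del 1 5 W0 (B.cv 1 [(1, 0)]) = c)
    (h1 : B.mp 3 1 D1 ∘ₗ B.mp 6 3 W1 = B.mp 5 1 W0 ∘ₗ B.mp 6 5 D3)
    (h2 : B.mp 5 3 D2 ∘ₗ B.mp 6 5 W2 = B.mp 6 3 W1 ∘ₗ B.mp 6 6 D4) :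
    ∃ (χ₁ : LinearMap.ker B.g2 →ₗ[E] LinearMap.ker B.eps)
      (χ₂ : LinearMap.ker B.g3 →ₗ[E] LinearMap.ker B.g1),
      χ₁ ∘ₗ B.g3 = B.g1 ∘ₗ B.mp 6 3 W1 ∧ χ₂ ∘ₗ B.g4 = B.g2 ∘ₗ B.mp 6 5 W2 ∧
      (∀ v, (χ₂ v).1 = B.mp 6 3 W1 v.1) ∧
      B.st3.comp (hm χ₁) (add_zero 3) = x.comp B.st1 rfl ∧
      B.st4.comp (hm χ₂) (add_zero 4) = x.comp B.st2 rfl := by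
  obtain ⟨φ, hφ, rfl⟩ := hx
  have hF : φ ∘ₗ B.g2 = B.eps ∘ₗ B.mp 5 1 W0 := by
    rw [hφ, ← h0, B.lc_del, lc_cv_one]
  have e1 := comp_kerMap (cl := hm.{w} (LinearMap.id : M →ₗ[E] M)) (cl' := B.st2)
    (x := B.st2.comp (hm φ) (add_zero 2)) (hg' := B.g2_surjective) (hg := B.eps_surjective)
    (add_zero 2) (f := φ) (by rw [comp_hm_id]) _ hF
  have hF1 : kerMap _ _ hF ∘ₗ B.g3 = B.g1 ∘ₗ B.mp 6 3 W1 :=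
    LinearMap.ext fun v => Subtype.ext (LinearMap.congr_fun h1.symm v)
  have e2 := comp_kerMap (cl := B.st1) (hg := B.g1_surjective) (hg' := B.g3_surjective)
    (x := B.st2.comp (hm φ) (add_zero 2)) (cl' := B.st3) rfl e1 _ hF1
  exact ⟨kerMap _ _ hF, kerMap _ _ hF1, hF1,
    LinearMap.ext fun v => Subtype.ext (LinearMap.congr_fun h2.symm v), fun v => rfl, e1, e2⟩

theorem y0_cv (t : Fin 4) : B.del 1 5 (Y0.getD t []) (B.cv 1 [(1, 0)]) = B.cv 5 (G2.getD t []) :=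
  B.del_cv (by revert t; decide +kernel)

theorem d1_y1 (t : Fin 4) : B.mp 3 1 D1 ∘ₗ B.mp 6 3 (Y1.getD t []) =
    B.mp 5 1 (Y0.getD t []) ∘ₗ B.mp 6 5 D3 :=
  B.mp_comp_mp (by revert t; decide +kernel)

theorem d2_y2 (t : Fin 4) : B.mp 5 3 D2 ∘ₗ B.mp 6 5 (Y2.getD t []) =
    B.mp 6 3 (Y1.getD t []) ∘ₗ B.mp 6 6 D4 :=
  B.mp_comp_mp (by revert t; decide +kernel)

theorem x2_mul_rep1 (t : Fin 4) {c : Fin 3 → M} {x : Ex.{w} E M M 1} (hx : Rep B.st1 B.g1 c x) :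
    Rep B.st3 B.g3 (B.del 3 6 (Y1.getD t []) c) ((B.x2 t).comp x rfl) := by
  obtain ⟨χ₁, χ₂, h1, h2, -, e1, e2⟩ :=
    B.exists_lift2 (B.rep_x2 t) (B.y0_cv t) (B.d1_y1 t) (B.d2_y2 t)
  exact B.rep_comp_del hx rfl e1 h1

theorem x2_mul_rep2 (t : Fin 4) {c : Fin 5 → M} {x : Ex.{w} E M M 2} (hx : Rep B.st2 B.g2 c x) :
    Rep B.st4 B.g4 (B.del 5 6 (Y2.getD t []) c) ((B.x2 t).comp x rfl) := by
  obtain ⟨χ₁, χ₂, h1, h2, -, e1, e2⟩ :=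
    B.exists_lift2 (B.rep_x2 t) (B.y0_cv t) (B.d1_y1 t) (B.d2_y2 t)
  exact B.rep_comp_del hx rfl e2 h2

/-- Lifts of a class of degree `1` along the resolution. -/
theorem rep2_comp {c : Fin 3 → M} {x : Ex.{w} E M M 1} (hx : Rep B.st1 B.g1 c x)
    {W0 W1 W2 : List LC} (h0 : B.del 1 3 W0 (B.cv 1 [(1, 0)]) = c)
    (h1 : B.mp 3 1 D1 ∘ₗ B.mp 5 3 W1 = B.mp 3 1 W0 ∘ₗ B.mp 5 3 D2)
    (h2 : B.mp 5 3 D2 ∘ₗ B.mp 6 5 W2 = B.mp 5 3 W1 ∘ₗ B.mp 6 5 D3)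
    {c' : Fin 5 → M} {x' : Ex.{w} E M M 2} (hx' : Rep B.st2 B.g2 c' x') :
    Rep B.st3 B.g3 (B.del 5 6 W2 c') (x.comp x' rfl) := by
  obtain ⟨φ, hφ, rfl⟩ := hx
  have hF : φ ∘ₗ B.g1 = B.eps ∘ₗ B.mp 3 1 W0 := by
    rw [hφ, ← h0, B.lc_del, lc_cv_one]
  have e1 := comp_kerMap (cl := hm.{w} (LinearMap.id : M →ₗ[E] M)) (cl' := B.st1)
    (x := B.st1.comp (hm φ) (add_zero 1)) (hg' := B.g1_surjective) (hg := B.eps_surjective)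
    (add_zero 1) (f := φ) (by rw [comp_hm_id]) _ hF
  have hF1 : kerMap _ _ hF ∘ₗ B.g2 = B.g1 ∘ₗ B.mp 5 3 W1 :=
    LinearMap.ext fun v => Subtype.ext (LinearMap.congr_fun h1.symm v)
  have e2 := comp_kerMap (cl := B.st1) (hg := B.g1_surjective) (hg' := B.g2_surjective)
    (x := B.st1.comp (hm φ) (add_zero 1)) (cl' := B.st2) rfl e1 _ hF1
  have hF2 : kerMap _ _ hF1 ∘ₗ B.g3 = B.g2 ∘ₗ B.mp 6 5 W2 :=
    LinearMap.ext fun v => Subtype.ext (LinearMap.congr_fun h2.symm v)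
  exact B.rep_comp_del hx' rfl e2 hF2

theorem x1_mul_rep2 (s : Fin 5) {c : Fin 5 → M} {x : Ex.{w} E M M 2} (hx : Rep B.st2 B.g2 c x) :
    Rep B.st3 B.g3 (B.del 5 6 (liftL 1 D3 (G1.getD s [])) c) ((B.x1 s).comp x rfl) :=
  B.rep2_comp (B.rep_x1 s) (W0 := liftL 1 D1 (G1.getD s [])) (W1 := liftL (-1) D2 (G1.getD s []))
    (B.del_cv (by revert s; decide +kernel)) (B.mp_comp_mp (by revert s; decide +kernel))
    (B.mp_comp_mp (by revert s; decide +kernel)) hx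

end Classes

end BasedBimodule

end FKAlg

namespace FKAlg

open LC Module ModExt CategoryTheory CategoryTheory.Abelian

universe w

section Closed

variable (k : Type) {E M : Type} [Field k] [Ring E] [Algebra k E] [AddCommGroup M]
    [Module E M] [HasExt.{w} (ModuleCat.{0} E)]

/-- A property of extensions which defines a graded subalgebra. -/
structure Closed (P : ∀ n, Ex.{w} E M M n → Prop) : Prop where
  zero : ∀ n, P n 0
  one : P 0 (hm LinearMap.id)
  add : ∀ n x y, P n x → P n y → P n (x + y)
  scal : ∀ n (a : k) x, P n x → P n (sc a x)
  mul : ∀ m n x y, P m x → P n y → P (m + n) (x.comp y rfl)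

variable {k} {P : ∀ n, Ex.{w} E M M n → Prop}

theorem Closed.mul' (hP : Closed k P) {m n p : ℕ} (h : m + n = p) {x : Ex.{w} E M M m}
    {y : Ex.{w} E M M n} (hx : P m x) (hy : P n y) : P p (x.comp y h) := by
  subst h
  exact hP.mul _ _ _ _ hx hy

end Closed

/-- The action of the periodicity element, from degree `2` to degree `0`. -/
def W0 : List LC := period 5 YA0 YB0 YC0

/-- The action of the periodicity element, from degree `3` to degree `1`. -/
def W1 : List LC := period 6 YA1 YB1 YC1

/-- The action of the periodicity element, from degree `4` to degree `2`. -/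
def W2 : List LC := period 6 YA2 YB2 YC2

namespace BasedBimodule

variable {k E M : Type} [Field k] [Ring E] [Algebra k E] [AddCommGroup M]
    [Module k M] [Module E M] [IsScalarTower k E M] {B : BasedBimodule k E M}
    [HasExt.{w} (ModuleCat.{0} E)]

variable (B) in
/-- A property of extensions which holds for the generators. -/
structure HasGens (P : ∀ n, Ex.{w} E M M n → Prop) : Prop where
  x0 : ∀ i, P 0 (B.x0 i)
  x1 : ∀ s, P 1 (B.x1 s)
  x2 : ∀ t, P 2 (B.x2 t)
  x3 : P 3 B.x3
  x4 : P 4 B.x4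

theorem zL_lt : ∀ i : Fin 3, ((zL.getD i []).all fun p => Nat.blt p.2 144) = true := by
  decide +kernel

variable (B) in
theorem rep_x0_comp {N : Type} [AddCommGroup N] [Module E N] {n r : ℕ} {cl : Ex.{w} E M N n}
    {g : (Fin r → E) →ₗ[E] N} {L L' : LC} {x : Ex.{w} E M M n} (hx : Rep cl g (B.cv r L) x)
    {i : Fin 3} (h : isZero (sub (subst L (cut (r * 12) (zT (zL.getD i [])))) L') = true) :
    Rep cl g (B.cv r L') ((B.x0 i).comp x (zero_add n)) := by
  rw [← B.zE_smul_cv (zL_lt i) h]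
  exact hx.central' (B.zL_comm i)

section Representatives

theorem exists_rep_r0 {P : Ex.{w} E M M 0 → Prop} (h : P (hm LinearMap.id))
    (h' : ∀ i, P (B.x0 i)) : ∀ L ∈ R0,
    ∃ x, Rep.{w} (hm (LinearMap.id : M →ₗ[E] M)) B.eps (B.cv 1 L) x ∧ P x := by
  have key : ∀ L ∈ R0, L = [(1, 0)] ∨ ∃ i : Fin 3,
      isZero (sub (subst [(1, 0)] (cut (1 * 12) (zT (zL.getD i [])))) L) = true := by
    decide +kernel
  intro L hL
  obtain rfl | ⟨i, hi⟩ := key L hL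
  · exact ⟨_, B.rep_one, h⟩
  · have := B.rep_x0_comp B.rep_one hi
    rw [comp_hm_id] at this
    exact ⟨_, this, h' i⟩

theorem exists_rep_r1 {P : Ex.{w} E M M 1 → Prop} (h : ∀ s, P (B.x1 s))
    (h' : ∀ i s, P ((B.x0 i).comp (B.x1 s) (zero_add 1))) : ∀ L ∈ R1,
    ∃ x, Rep.{w} B.st1 B.g1 (B.cv 3 L) x ∧ P x := by
  have key : ∀ L ∈ R1, ∃ s : Fin 5, L = G1.getD s [] ∨ ∃ i : Fin 3,
      isZero (sub (subst (G1.getD s []) (cut (3 * 12) (zT (zL.getD i [])))) L) = true := by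
    decide +kernel
  intro L hL
  obtain ⟨s, rfl | ⟨i, hi⟩⟩ := key L hL
  · exact ⟨_, B.rep_x1 s, h s⟩
  · exact ⟨_, B.rep_x0_comp (B.rep_x1 s) hi, h' i s⟩

theorem exists_rep_r2 {P : Ex.{w} E M M 2 → Prop} (h : ∀ t, P (B.x2 t))
    (h' : ∀ i t, P ((B.x0 i).comp (B.x2 t) (zero_add 2))) : ∀ L ∈ R2,
    ∃ x, Rep.{w} B.st2 B.g2 (B.cv 5 L) x ∧ P x := by
  have key : ∀ L ∈ R2, ∃ t : Fin 4, L = G2.getD t [] ∨ ∃ i : Fin 3,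
      isZero (sub (subst (G2.getD t []) (cut (5 * 12) (zT (zL.getD i [])))) L) = true := by
    decide +kernel
  intro L hL
  obtain ⟨t, rfl | ⟨i, hi⟩⟩ := key L hL
  · exact ⟨_, B.rep_x2 t, h t⟩
  · exact ⟨_, B.rep_x0_comp (B.rep_x2 t) hi, h' i t⟩

variable (B)

theorem induction0 (h2 : (2 : k) ≠ 0) {P : Ex.{w} E M M 0 → Prop} (zero : P 0)
    (add : ∀ x y, P x → P y → P (x + y)) (scal : ∀ (a : k) x, P x → P (sc a x))
    (h : P (hm LinearMap.id)) (h' : ∀ i, P (B.x0 i)) (x : Ex.{w} E M M 0) : P x :=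
  (B.spans0 h2).induction full_id B.eps_surjective B.rep0_del B.g0_comp zero add scal
    (exists_rep_r0 h h') x

theorem induction1 (h2 : (2 : k) ≠ 0) {P : Ex.{w} E M M 1 → Prop} (zero : P 0)
    (add : ∀ x y, P x → P y → P (x + y)) (scal : ∀ (a : k) x, P x → P (sc a x))
    (h : ∀ s, P (B.x1 s)) (h' : ∀ i s, P ((B.x0 i).comp (B.x1 s) (zero_add 1)))
    (x : Ex.{w} E M M 1) : P x :=
  (B.spans1 h2).induction B.full_st1 B.g1_surjective B.rep1_del B.g1_comp zero add scal
    (exists_rep_r1 h h') x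

theorem induction2 (h2 : (2 : k) ≠ 0) {P : Ex.{w} E M M 2 → Prop} (zero : P 0)
    (add : ∀ x y, P x → P y → P (x + y)) (scal : ∀ (a : k) x, P x → P (sc a x))
    (h : ∀ t, P (B.x2 t)) (h' : ∀ i t, P ((B.x0 i).comp (B.x2 t) (zero_add 2)))
    (x : Ex.{w} E M M 2) : P x :=
  (B.spans2 h2).induction B.full_st2 B.g2_surjective B.rep2_del B.g2_comp zero add scal
    (exists_rep_r2 h h') x

end Representatives

section Generation

variable {P : ∀ n, Ex.{w} E M M n → Prop}

theorem exists_rep_r3 (hP : Closed k P) (hG : B.HasGens P) : ∀ L ∈ R3,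
    ∃ x, Rep.{w} B.st3 B.g3 (B.cv 6 L) x ∧ P 3 x := by
  have key : ∀ L ∈ R3, L = G3 ∨ ∃ L' ∈ R1, ∃ t : Fin 4,
      isZero (sub (subst L' (cut (3 * 12) (pullT 6 (Y1.getD t [])))) L) = true := by
    decide +kernel
  intro L hL
  obtain rfl | ⟨L', hL', t, h⟩ := key L hL
  · exact ⟨_, B.rep_x3, hG.x3⟩
  · obtain ⟨x, hx, hPx⟩ := exists_rep_r1 (P := P 1) hG.x1
      (fun i s => hP.mul' _ (hG.x0 i) (hG.x1 s)) L' hL'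
    refine ⟨_, ?_, hP.mul' rfl (hG.x2 t) hPx⟩
    rw [← B.del_cv h]
    exact B.x2_mul_rep1 t hx

theorem exists_rep_r4 (hP : Closed k P) (hG : B.HasGens P) : ∀ L ∈ R4,
    ∃ x, Rep.{w} B.st4 B.g4 (B.cv 6 L) x ∧ P 4 x := by
  have key : ∀ L ∈ R4, ∃ L' ∈ R2, ∃ t : Fin 4,
      isZero (sub (subst L' (cut (5 * 12) (pullT 6 (Y2.getD t [])))) L) = true := by
    decide +kernel
  intro L hL
  obtain ⟨L', hL', t, h⟩ := key L hL
  obtain ⟨x, hx, hPx⟩ := exists_rep_r2 (P := P 2) hG.x2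
    (fun i t => hP.mul' _ (hG.x0 i) (hG.x2 t)) L' hL'
  refine ⟨_, ?_, hP.mul' rfl (hG.x2 t) hPx⟩
  rw [← B.del_cv h]
  exact B.x2_mul_rep2 t hx

theorem holds0 (h2 : (2 : k) ≠ 0) (hP : Closed k P) (hG : B.HasGens P) (x : Ex.{w} E M M 0) :
    P 0 x :=
  B.induction0 h2 (hP.zero 0) (hP.add 0) (hP.scal 0) hP.one hG.x0 x

theorem holds1 (h2 : (2 : k) ≠ 0) (hP : Closed k P) (hG : B.HasGens P) (x : Ex.{w} E M M 1) :
    P 1 x :=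
  B.induction1 h2 (hP.zero 1) (hP.add 1) (hP.scal 1) hG.x1
    (fun i s => hP.mul' _ (hG.x0 i) (hG.x1 s)) x

theorem holds2 (h2 : (2 : k) ≠ 0) (hP : Closed k P) (hG : B.HasGens P) (x : Ex.{w} E M M 2) :
    P 2 x :=
  B.induction2 h2 (hP.zero 2) (hP.add 2) (hP.scal 2) hG.x2
    (fun i t => hP.mul' _ (hG.x0 i) (hG.x2 t)) x

theorem holds3 (h2 : (2 : k) ≠ 0) (h3 : (3 : k) ≠ 0) (hP : Closed k P) (hG : B.HasGens P)
    (x : Ex.{w} E M M 3) : P 3 x :=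
  (B.spans3 h2 h3).induction B.full_st3 B.g3_surjective B.rep3_del B.g3_comp (hP.zero 3) (hP.add 3)
    (hP.scal 3) (exists_rep_r3 hP hG) x

variable (B) in
/-- The periodicity element. -/
noncomputable def xp : Ex.{w} E M M 2 := B.x2 0 + B.x2 1 + sc (-1 : k) (B.x2 2)

variable (B) in
theorem rep_xp : Rep.{w} B.st2 B.g2 (B.cv 5 [(1, 0), (1, 12), (-1, 24)]) B.xp := by
  have := ((B.rep_x2 0).add (B.rep_x2 1)).add ((B.rep_x2 2).sc (-1 : k))
  have h : B.cv 5 [(1, 0), (1, 12), (-1, 24)] = B.cv 5 (G2.getD (0 : Fin 4) []) +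
      B.cv 5 (G2.getD (1 : Fin 4) []) + (-1 : k) • B.cv 5 (G2.getD (2 : Fin 4) []) := by
    simp [cv, G2, add_assoc]
  rw [h]
  exact this

theorem holds_xp (hP : Closed k P) (hG : B.HasGens P) : P 2 B.xp :=
  hP.add _ _ _ (hP.add _ _ _ (hG.x2 0) (hG.x2 1)) (hP.scal _ _ _ (hG.x2 2))

theorem exists_extend0 (h2 : (2 : k) ≠ 0) (h3 : (3 : k) ≠ 0) (hP : Closed k P) (hG : B.HasGens P)
    (u : Ex.{w} E (B.Bd) M 0) : ∃ y : Ex.{w} E (LinearMap.ker B.g3) M 0,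
      P 4 (B.st4.comp y rfl) ∧ (hm B.bd).comp y (zero_add 0) = u := by
  obtain ⟨u, rfl⟩ := exists_hm u
  let c : Fin 6 → M := fun w => u (B.b4 (Pi.single w 1))
  have hc : lc c = u ∘ₗ B.b4 := lc_eta (u ∘ₗ B.b4)
  have hd : B.del 6 6 D5 c = 0 := by
    refine lc_injective (E := E) ?_
    rw [B.lc_del, hc, LinearMap.comp_assoc, lc_zero]
    have : B.b4 ∘ₗ B.mp 6 6 D5 = 0 := LinearMap.ext fun x =>
      B.bd_injective (Subtype.ext (LinearMap.congr_fun B.d4_comp_d5 x))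
    rw [this, LinearMap.comp_zero]
  obtain ⟨x, ⟨φ, hφ, rfl⟩, hx⟩ := (B.spans4 h2 h3).exists_rep B.rep4_del (hP.zero 4) (hP.add 4)
    (hP.scal 4) (exists_rep_r4 hP hG) hd
  refine ⟨hm φ, hx, ?_⟩
  rw [hm_comp_hm]
  congr 1
  refine LinearMap.ext fun v => ?_
  obtain ⟨y, rfl⟩ := B.b4_surjective v
  exact LinearMap.congr_fun (hφ.trans hc) y

variable (B) in
theorem w0_cv : B.del 1 5 W0 (B.cv 1 [(1, 0)]) = B.cv 5 [(1, 0), (1, 12), (-1, 24)] :=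
  B.del_cv (by decide +kernel)

variable (B) in
theorem d1_w1 : B.mp 3 1 D1 ∘ₗ B.mp 6 3 W1 = B.mp 5 1 W0 ∘ₗ B.mp 6 5 D3 :=
  B.mp_comp_mp (by decide +kernel)

variable (B) in
theorem d2_w2 : B.mp 5 3 D2 ∘ₗ B.mp 6 5 W2 = B.mp 6 3 W1 ∘ₗ B.mp 6 6 D4 :=
  B.mp_comp_mp (by decide +kernel)

variable (B) in
theorem d3_yp3 : B.mp 6 5 D3 ∘ₗ B.mp 6 6 YP3 = B.mp 6 5 W2 ∘ₗ B.mp 6 6 D5 :=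
  B.mp_comp_mp (by decide +kernel)

/-- The morphism `χ` is a lift of `f` with respect to two extensions. -/
def Lifts {N K N' K' : Type} [AddCommGroup N] [Module E N] [AddCommGroup K] [Module E K]
    [AddCommGroup N'] [Module E N'] [AddCommGroup K'] [Module E K'] (cl : Ex.{w} E N K 1)
    (cl' : Ex.{w} E N' K' 1) (f : N →ₗ[E] N') (χ : K →ₗ[E] K') : Prop :=
  cl.comp (hm χ) (add_zero 1) = (hm f).comp cl' (zero_add 1)

variable (B) in
/-- The lift of the periodicity element along the resolution. -/
theorem exists_period : ∃ (χ₂ : LinearMap.ker B.g3 →ₗ[E] LinearMap.ker B.g1)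
    (χ₃ : LinearMap.ker B.b4 →ₗ[E] LinearMap.ker B.g2)
    (χ₄ : LinearMap.ker B.g5 →ₗ[E] LinearMap.ker B.g3),
    B.st4.comp (hm.{w} χ₂) (add_zero 4) = B.xp.comp B.st2 rfl ∧
    χ₃ ∘ₗ B.g5 = B.g3 ∘ₗ B.mp 6 6 YP3 ∧
    (∀ v, (χ₄ v).1 = B.mp 6 6 YP3 v.1) ∧
    Lifts (cls.{w} B.b4 B.b4_surjective) (cls.{w} B.g2 B.g2_surjective)
      (χ₂ ∘ₗ B.bd) χ₃ ∧
    Lifts (cls.{w} B.g5 B.g5_surjective) (cls.{w} B.g3 B.g3_surjective) χ₃ χ₄ := by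
  obtain ⟨χ₁, χ₂, -, h2, -, -, e2⟩ := B.exists_lift2 B.rep_xp B.w0_cv B.d1_w1 B.d2_w2
  have hF : (χ₂ ∘ₗ B.bd) ∘ₗ B.b4 = B.g2 ∘ₗ B.mp 6 5 W2 := by
    rw [LinearMap.comp_assoc, B.bd_b4, h2]
  have hF' : kerMap _ _ hF ∘ₗ B.g5 = B.g3 ∘ₗ B.mp 6 6 YP3 :=
    LinearMap.ext fun v => Subtype.ext (LinearMap.congr_fun B.d3_yp3.symm v)
  have e3 := cls_kerMap.{w} B.b4_surjective B.g2_surjective _ _ hF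
  have e4 := cls_kerMap.{w} B.g5_surjective B.g3_surjective _ _ hF'
  exact ⟨χ₂, kerMap _ _ hF, kerMap _ _ hF', e2, hF', fun v => rfl, e3, e4⟩

theorem exists_extend1 (h2 : (2 : k) ≠ 0) (h3 : (3 : k) ≠ 0) (hP : Closed k P) (hG : B.HasGens P)
    (u : Ex.{w} E (B.Bd) M 1) : ∃ y : Ex.{w} E (LinearMap.ker B.g3) M 1,
      P 5 (B.st4.comp y rfl) ∧ (hm B.bd).comp y (zero_add 1) = u := by
  obtain ⟨χ₂, χ₃, χ₄, e2, h3', -, e3, -⟩ := B.exists_period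
  obtain ⟨u, rfl⟩ := exists_cls_comp B.b4 B.b4_surjective (add_zero 1) u
  obtain ⟨ψ, rfl⟩ := exists_hm u
  let f : (Fin 6 → E) →ₗ[E] M := ψ ∘ₗ B.g5 ∘ₗ B.mp 6 6 YP3
  let c : Fin 6 → M := fun w => f (Pi.single w 1)
  have hc : lc c = f := lc_eta f
  have hd : B.del 6 6 D4 c = 0 := by
    refine lc_injective (E := E) ?_
    rw [B.lc_del, hc, lc_zero]
    refine LinearMap.ext fun x => ?_
    have : B.g5 (B.mp 6 6 YP3 (B.mp 6 6 D4 x)) = 0 :=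
      Subtype.ext (LinearMap.congr_fun B.d5_yp3_d4 x)
    simp only [f, LinearMap.comp_apply, this, map_zero, LinearMap.zero_apply]
  obtain ⟨φ, hφ⟩ := B.exists_factor_g3 hd
  have hψ : φ ∘ₗ χ₃ = ψ := by
    refine LinearMap.ext fun v => ?_
    obtain ⟨y, rfl⟩ := B.g5_surjective v
    have e1 := LinearMap.congr_fun h3' y
    have e2 := LinearMap.congr_fun (hφ.trans hc) (B.mp 6 6 YP3 y)
    have e3 := LinearMap.congr_fun B.yp3_yp3 y
    simp only [f, LinearMap.comp_apply, LinearMap.id_apply] at e1 e2 e3 ⊢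
    rw [e1, e2, e3]
  refine ⟨(hm χ₂).comp ((cls B.g2 B.g2_surjective).comp (hm φ) (add_zero 1)) (zero_add 1), ?_, ?_⟩
  · rw [← Ext.comp_assoc _ _ _ (add_zero 4) (zero_add 1) (by omega), e2,
      Ext.comp_assoc _ _ _ (rfl : 2 + 2 = 4) (rfl : 2 + 1 = 3) (by omega)]
    exact hP.mul' _ (holds_xp hP hG) (holds3 h2 h3 hP hG _)
  · rw [← Ext.comp_assoc _ _ _ (zero_add 0) (zero_add 1) (by omega), hm_comp_hm,
      ← Ext.comp_assoc _ _ _ (zero_add 1) (add_zero 1) (by omega), ← e3, comp_hm_hm, hψ]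

theorem exists_extend (h2 : (2 : k) ≠ 0) (h3 : (3 : k) ≠ 0) (hP : Closed k P) (hG : B.HasGens P)
    (m p : ℕ) (hp : 4 + m = p) (u : Ex.{w} E (B.Bd) M m) :
    ∃ y : Ex.{w} E (LinearMap.ker B.g3) M m,
      P p (B.st4.comp y hp) ∧ (hm B.bd).comp y (zero_add m) = u := by
  induction m using Nat.twoStepInduction generalizing p with
  | zero =>
    subst hp
    exact exists_extend0 h2 h3 hP hG u
  | one =>
    subst hp
    exact exists_extend1 h2 h3 hP hG u
  | more m ih _ =>
    obtain ⟨χ₂, χ₃, χ₄, e2, -, h4, e3, e4⟩ := B.exists_period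
    obtain ⟨u, rfl⟩ := exists_cls_comp B.b4 B.b4_surjective (show 1 + (m + 1) = m + 2 by omega) u
    obtain ⟨u, rfl⟩ := exists_cls_comp B.g5 B.g5_surjective (show 1 + m = m + 1 by omega) u
    let a : LinearMap.ker B.g5 →ₗ[E] B.Bd := B.toBd χ₄ fun v => by
      rw [om_apply, h4]
      exact B.tau_yp3 v.1 (congrArg Subtype.val v.2)
    let b : B.Bd →ₗ[E] LinearMap.ker B.g5 :=
      (B.mp 6 6 YP3 ∘ₗ (LinearMap.ker B.g3).subtype ∘ₗ B.bd).codRestrict _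
        fun v => by
          obtain ⟨y, rfl⟩ := B.b4_surjective v
          exact Subtype.ext (LinearMap.congr_fun B.d5_yp3_d4 y)
    have hba : b ∘ₗ a = LinearMap.id := LinearMap.ext fun v => Subtype.ext <| by
      change B.mp 6 6 YP3 (χ₄ v).1 = v.1
      rw [h4]
      exact LinearMap.congr_fun B.yp3_yp3 v.1
    obtain ⟨y, hy, hu⟩ := ih _ rfl ((hm b).comp u (zero_add m))
    have key : (hm χ₄).comp y (zero_add m) = u := by
      have : χ₄ = B.bd ∘ₗ a := rfl
      rw [this, ← hm_hm_comp, hu, hm_hm_comp, hba, hm_id_comp]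
    refine ⟨(hm χ₂).comp ((cls B.g2 B.g2_surjective).comp ((cls B.g3 B.g3_surjective).comp y
      (show 1 + m = m + 1 by omega)) (show 1 + (m + 1) = m + 2 by omega)) (zero_add _), ?_, ?_⟩
    · rw [← Ext.comp_assoc _ _ _ (add_zero 4) (zero_add _) (by omega), e2,
        Ext.comp_assoc _ _ _ (rfl : 2 + 2 = 4) (show 2 + (m + 2) = 4 + m by omega) (by omega)]
      refine hP.mul' _ (holds_xp hP hG) ?_
      rw [← Ext.comp_assoc _ _ _ (rfl : 2 + 1 = 3) (by omega) (by omega),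
        ← Ext.comp_assoc _ _ _ (rfl : 3 + 1 = 4) (by omega) (by omega)]
      exact hy
    · rw [← Ext.comp_assoc _ _ _ (zero_add 0) (zero_add _) (by omega), hm_comp_hm,
        ← Ext.comp_assoc _ _ _ (zero_add 1) (by omega) (by omega), ← e3,
        Ext.comp_assoc _ _ _ (add_zero 1) (zero_add _) (by omega),
        ← Ext.comp_assoc _ _ _ (zero_add 1) (by omega) (by omega), ← e4,
        Ext.comp_assoc _ _ _ (add_zero 1) (zero_add _) (by omega), key]

theorem holds (h2 : (2 : k) ≠ 0) (h3 : (3 : k) ≠ 0) (hP : Closed k P) (hG : B.HasGens P)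
    (n : ℕ) (x : Ex.{w} E M M n) : P n x := by
  induction n using Nat.strong_induction_on with
  | _ n ih =>
    by_cases hn : n < 4
    · interval_cases n
      · exact holds0 h2 hP hG x
      · exact holds1 h2 hP hG x
      · exact holds2 h2 hP hG x
      · exact holds3 h2 h3 hP hG x
    · obtain ⟨m, rfl⟩ := Nat.exists_eq_add_of_le (not_lt.1 hn)
      obtain ⟨x, rfl⟩ := B.full_st4 rfl x
      obtain ⟨y, hy, hu⟩ := exists_extend h2 h3 hP hG m _ rfl
        ((hm B.bd).comp x (zero_add m))
      obtain ⟨w, hw⟩ := exists_of_subtype_comp_eq_zero B.om B.om_surjective (x - y) (by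
        rw [sub_eq_add_neg, Ext.comp_add, Ext.comp_neg, ← sub_eq_add_neg, sub_eq_zero]
        exact hu.symm)
      have : x = y + (hm B.om).comp w (zero_add m) := by rw [hw, add_sub_cancel]
      rw [this, Ext.comp_add, ← Ext.comp_assoc _ _ _ (add_zero 4) (zero_add m) (by omega)]
      exact hP.add _ _ _ hy (hP.mul _ _ _ _ hG.x4 (ih m (by omega) w))

end Generation

end BasedBimodule

end FKAlg

namespace FKAlg

open LC Module ModExt CategoryTheory CategoryTheory.Abelian

universe w

/-- The functional dual to the generator of degree `3`. -/
def F3 : LC := [(1, 37), (-1, 1), (-1, 14), (-1, 27)]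

/-- The boundaries of the products of the quadratic elements with the cycle `cyc`. -/
def kL (t : Fin 4) : List LC :=
  [subst (subst (fL.getD 0 []) (cut (6 * 144) (lcT (Y1.getD t [])))) (cut (3 * 144) (rT H1))]

section Scalars

variable {k E M : Type} [Field k] [Ring E] [Algebra k E] [AddCommGroup M]
    [Module k M] [Module E M] [IsScalarTower k E M] [HasExt.{w} (ModuleCat.{0} E)]

theorem sc_neg_one {n : ℕ} (x : Ex.{w} E M M n) : sc (-1 : k) x = -x := by
  have : cen (algebraMap k E (-1)) (algebraMap_comm (-1)) M = -LinearMap.id :=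
    LinearMap.ext fun v => by
      change algebraMap k E (-1) • v = -v
      rw [map_neg, map_one, neg_smul, one_smul]
  rw [sc, this, hm_neg, Ext.neg_comp, hm_id_comp]

theorem sc_comp {m n p : ℕ} (a : k) (x : Ex.{w} E M M m) (y : Ex.{w} E M M n) (h : m + n = p) :
    (sc a x).comp y h = sc a (x.comp y h) :=
  Ext.comp_assoc _ _ _ (zero_add m) h (by omega)

theorem comp_sc {m n p : ℕ} (a : k) (x : Ex.{w} E M M m) (y : Ex.{w} E M M n) (h : m + n = p) :
    x.comp (sc a y) h = sc a (x.comp y h) := by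
  rw [← sc_comp]
  change x.comp ((hm _).comp y _) h = ((hm _).comp x _).comp y h
  rw [cen_comp (algebraMap_comm a) x, Ext.comp_assoc _ _ _ (add_zero m) (zero_add n) (by omega)]

variable {N : Type} [AddCommGroup N] [Module E N] {n r : ℕ} {cl : Ex.{w} E M N n}
  {g : (Fin r → E) →ₗ[E] N} {ℓ : (Fin r → M) →ₗ[k] k}

/-- The class `x` has a representative on which the functional `ℓ` vanishes. -/
def Van (cl : Ex.{w} E M N n) (g : (Fin r → E) →ₗ[E] N) (ℓ : (Fin r → M) →ₗ[k] k)
    (x : Ex.{w} E M M n) : Prop :=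
  ∃ c, Rep cl g c x ∧ ℓ c = 0

theorem Van.zero : Van cl g ℓ 0 := ⟨0, Rep.zero, map_zero ℓ⟩

theorem Van.add {x y : Ex.{w} E M M n} (hx : Van cl g ℓ x) (hy : Van cl g ℓ y) :
    Van cl g ℓ (x + y) := by
  obtain ⟨c, hc, h⟩ := hx
  obtain ⟨c', hc', h'⟩ := hy
  exact ⟨c + c', hc.add hc', by rw [map_add, h, h', add_zero]⟩

theorem Van.sc {x : Ex.{w} E M M n} (hx : Van cl g ℓ x) (a : k) : Van cl g ℓ (sc a x) := by
  obtain ⟨c, hc, h⟩ := hx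
  exact ⟨a • c, hc.sc a, by rw [map_smul, h, smul_zero]⟩

theorem Rep.apply_eq {c c' : Fin r → M} {x : Ex.{w} E M M n} (hc : Rep cl g c x)
    (hc' : Rep cl g c' x) (h0 : ∀ c, Rep cl g c 0 → ℓ c = 0) : ℓ c = ℓ c' := by
  have := h0 (c + (-1 : k) • c') (by
    have := hc.add (hc'.sc (-1 : k))
    rwa [sc_neg_one, add_neg_cancel] at this)
  rwa [neg_smul, one_smul, ← sub_eq_add_neg, map_sub, sub_eq_zero] at this

theorem Rep.not_van {c : Fin r → M} {x : Ex.{w} E M M n} (hc : Rep cl g c x)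
    (h0 : ∀ c, Rep cl g c 0 → ℓ c = 0) (h1 : ℓ c = 1) : ¬ Van cl g ℓ x := by
  rintro ⟨c', hc', h⟩
  rw [hc.apply_eq hc' h0, h] at h1
  exact zero_ne_one h1

end Scalars

namespace BasedBimodule

variable {k E M : Type} [Field k] [Ring E] [Algebra k E] [AddCommGroup M]
    [Module k M] [Module E M] [IsScalarTower k E M] (B : BasedBimodule k E M)
    [HasExt.{w} (ModuleCat.{0} E)]

/-- A subspace of the extensions of degree `d` which contains the decomposable ones. -/
structure Decomp (d : ℕ) (P : Ex.{w} E M M d → Prop) : Prop where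
  zero : P 0
  add : ∀ x y, P x → P y → P (x + y)
  scal : ∀ (a : k) x, P x → P (sc a x)
  x0 : ∀ i x, P ((B.x0 i).comp x (zero_add d))
  mul : ∀ (m n : ℕ) (h : m + n = d), 0 < m → 0 < n →
    ∀ (x : Ex.{w} E M M m) (y : Ex.{w} E M M n), P (x.comp y h)

/-- The extension of a property to other degrees. -/
def OnDeg (d : ℕ) (P : Ex.{w} E M M d → Prop) (n : ℕ) (x : Ex.{w} E M M n) : Prop :=
  ∀ h : n = d, P (h ▸ x)

theorem onDeg_iff {d : ℕ} {P : Ex.{w} E M M d → Prop} {x : Ex.{w} E M M d} :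
    OnDeg d P d x ↔ P x := ⟨fun h => h rfl, fun h _ => h⟩

theorem OnDeg.of_ne {d n : ℕ} {P : Ex.{w} E M M d → Prop} {x : Ex.{w} E M M n} (h : n ≠ d) :
    OnDeg d P n x := fun h' => absurd h' h

variable {B} in
theorem Decomp.closed (h2 : (2 : k) ≠ 0) {d : ℕ} (hd : 0 < d) {P : Ex.{w} E M M d → Prop}
    (hP : B.Decomp d P) : Closed k (OnDeg d P) where
  zero n := by
    rintro rfl
    exact hP.zero
  one := .of_ne hd.ne
  add n x y hx hy := by
    rintro rfl
    exact hP.add _ _ (hx rfl) (hy rfl)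
  scal n a x hx := by
    rintro rfl
    exact hP.scal _ _ (hx rfl)
  mul m n x y hx hy h := by
    have key : h ▸ (x.comp y rfl : Ex.{w} E M M (m + n)) = x.comp y h := by
      subst h
      rfl
    rw [key]
    rcases Nat.eq_zero_or_pos m with rfl | hm
    · obtain rfl : n = d := by omega
      refine B.induction0 h2 (P := fun x => P (x.comp y (zero_add n))) ?_ ?_ ?_ ?_ ?_ x
      · rw [Ext.zero_comp]
        exact hP.zero
      · intro x x' hx hx'
        rw [Ext.add_comp]
        exact hP.add _ _ hx hx'
      · intro a x hx
        rw [sc_comp]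
        exact hP.scal _ _ hx
      · rw [hm_id_comp]
        exact hy rfl
      · exact fun i => hP.x0 i y
    · rcases Nat.eq_zero_or_pos n with rfl | hn
      · obtain rfl : m = d := by omega
        refine B.induction0 h2 (P := fun y => P (x.comp y (add_zero m))) ?_ ?_ ?_ ?_ ?_ y
        · rw [Ext.comp_zero]
          exact hP.zero
        · intro y y' hy hy'
          rw [Ext.comp_add]
          exact hP.add _ _ hy hy'
        · intro a y hy
          rw [comp_sc]
          exact hP.scal _ _ hy
        · rw [comp_hm_id]
          exact hx rfl
        · intro i
          have := hP.x0 i x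
          rwa [BasedBimodule.x0, cen_comp] at this
      · exact hP.mul m n h hm hn x y

section Multiples

variable {N : Type} [AddCommGroup N] [Module E N] {n r : ℕ} {cl : Ex.{w} E M N n}
  {g : (Fin r → E) →ₗ[E] N}

theorem van_x0_comp (hcl : Full cl) {ℓ : (Fin r → M) →ₗ[k] k}
    (h : ∀ i : Fin 3, ∀ c x, Rep cl g c x → ℓ (B.za r (zL.getD i []) c) = 0) (i : Fin 3)
    (x : Ex.{w} E M M n) : Van cl g ℓ ((B.x0 i).comp x (zero_add n)) := by
  obtain ⟨c, hc⟩ := exists_rep hcl g x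
  exact ⟨_, hc.central' (B.zL_comm i), h i c x hc⟩

/-- The class `x` has a representative without constant coefficient. -/
def RadRep (cl : Ex.{w} E M N n) (x : Ex.{w} E M M n) : Prop :=
  ∃ φ : N →ₗ[E] M, x = cl.comp (hm φ) (add_zero n) ∧ ∀ v, B.aug (φ v) = 0

variable {B} in
theorem RadRep.comp {N' : Type} [AddCommGroup N'] [Module E N'] {m p : ℕ} {cl' : Ex.{w} E M N' p}
    (hcl' : Full cl') (h : m + n = p) {y : Ex.{w} E M M n} (hy : B.RadRep cl y)
    (x : Ex.{w} E M M m) : B.RadRep cl' (x.comp y h) := by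
  obtain ⟨φ, rfl, hφ⟩ := hy
  obtain ⟨θ, hθ⟩ := hcl'.exists_hm (x.comp cl h)
  refine ⟨φ ∘ₗ θ, ?_, fun v => hφ _⟩
  rw [← comp_hm_hm, ← hθ, Ext.comp_assoc _ _ _ h (add_zero n) (by omega)]

theorem radRep_of_rep (hg : Function.Surjective g) {c : Fin r → M} {x : Ex.{w} E M M n}
    (h : Rep cl g c x) (hc : ∀ w, B.aug (c w) = 0) : B.RadRep cl x := by
  obtain ⟨φ, h1, rfl⟩ := h
  refine ⟨φ, rfl, fun v => ?_⟩
  obtain ⟨u, rfl⟩ := hg v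
  rw [← LinearMap.comp_apply, h1, lc_apply, ← B.mem_rad]
  exact Submodule.sum_mem _ fun w _ => Submodule.smul_mem _ _ (B.mem_rad.2 (hc w))

end Multiples

theorem radRep1 (h2 : (2 : k) ≠ 0) (x : Ex.{w} E M M 1) : B.RadRep B.st1 x := by
  obtain ⟨c, hc⟩ := exists_rep B.full_st1 B.g1 x
  refine B.radRep_of_rep B.g1_surjective hc fun w => ?_
  rw [← B.fn_eq_aug]
  exact (B.spans1 h2).fn_eq_zero' (by revert w; decide +kernel) (by revert w; decide +kernel)
    (B.del_eq_zero_of_rep B.g1_comp hc)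

theorem radRep3 (h2 : (2 : k) ≠ 0) (h3 : (3 : k) ≠ 0) (x : Ex.{w} E M M 3) :
    B.RadRep B.st3 x := by
  obtain ⟨c, hc⟩ := exists_rep B.full_st3 B.g3 x
  refine B.radRep_of_rep B.g3_surjective hc fun w => ?_
  rw [← B.fn_eq_aug]
  exact (B.spans3 h2 h3).fn_eq_zero' (by revert w; decide +kernel) (by revert w; decide +kernel)
    (B.del_eq_zero_of_rep B.g3_comp hc)

section DegreeOne

theorem decomp1 (h2 : (2 : k) ≠ 0) (s : Fin 5) :
    B.Decomp 1 (Van.{w} B.st1 B.g1 (B.fn 3 (F1.getD s []))) where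
  zero := Van.zero
  add _ _ := Van.add
  scal a _ h := h.sc a
  x0 := B.van_x0_comp B.full_st1 fun i c x hc =>
    (B.spans1 h2).fn_eq_zero (B.tab_za (zL_lt i)) (by revert i s; decide +kernel)
      (by revert i s; decide +kernel) (B.del_eq_zero_of_rep B.g1_comp hc)
  mul m n h hm hn := by omega

theorem van_x1 {s s' : Fin 5} (h : s' ≠ s) :
    Van.{w} B.st1 B.g1 (B.fn 3 (F1.getD s [])) (B.x1 s') :=
  ⟨_, B.rep_x1 s', B.fn_cv_eq_zero (by revert s s'; decide +kernel)⟩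

theorem not_van_x1 (s : Fin 5) : ¬ Van.{w} B.st1 B.g1 (B.fn 3 (F1.getD s [])) (B.x1 s) := by
  refine (B.rep_x1 s).not_van (fun c hc => ?_) (B.fn_cv_eq_one (by revert s; decide +kernel))
  obtain ⟨c, rfl⟩ := B.rep1_zero hc
  exact B.fn_comp_eq_zero (B.tab_del 1 3 D1) (by revert s; decide +kernel) c

end DegreeOne

section DegreeTwo

theorem decomp2 (h2 : (2 : k) ≠ 0) (t : Fin 4) :
    B.Decomp 2 (Van.{w} B.st2 B.g2 (B.fn 5 (F2.getD t []))) where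
  zero := Van.zero
  add _ _ := Van.add
  scal a _ h := h.sc a
  x0 := B.van_x0_comp B.full_st2 fun i c x hc =>
    (B.spans2 h2).fn_eq_zero (B.tab_za (zL_lt i)) (by revert i t; decide +kernel)
      (by revert i t; decide +kernel) (B.del_eq_zero_of_rep B.g2_comp hc)
  mul m n h hm hn x y := by
    obtain rfl : m = 1 := by omega
    obtain rfl : n = 1 := by omega
    obtain ⟨φ, hφ, h0⟩ := (B.radRep1 h2 y).comp B.full_st2 h x
    rw [hφ]
    refine ⟨_, Rep.of_hm φ, ?_⟩
    have : F2.getD t [] = [(1, (Fin.castSucc t).1 * 12)] := by revert t; decide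
    rw [this, B.fn_eq_aug]
    exact h0 _

theorem van_x2 {t t' : Fin 4} (h : t' ≠ t) :
    Van.{w} B.st2 B.g2 (B.fn 5 (F2.getD t [])) (B.x2 t') :=
  ⟨_, B.rep_x2 t', B.fn_cv_eq_zero (by revert t t'; decide +kernel)⟩

theorem not_van_x2 (t : Fin 4) : ¬ Van.{w} B.st2 B.g2 (B.fn 5 (F2.getD t [])) (B.x2 t) := by
  refine (B.rep_x2 t).not_van (fun c hc => ?_) (B.fn_cv_eq_one (by revert t; decide +kernel))
  obtain ⟨c, rfl⟩ := B.rep2_zero hc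
  exact B.fn_comp_eq_zero (B.tab_del 3 5 D2) (by revert t; decide +kernel) c

end DegreeTwo

section Products

variable {d : ℕ} {P : Ex.{w} E M M d → Prop}

theorem comp_of_x1 (h2 : (2 : k) ≠ 0) (zero : P 0) (add : ∀ x y, P x → P y → P (x + y))
    (scal : ∀ (a : k) x, P x → P (sc a x)) (x0 : ∀ i x, P ((B.x0 i).comp x (zero_add d))) {n : ℕ}
    (h : 1 + n = d) {y : Ex.{w} E M M n} (hy : ∀ s, P ((B.x1 s).comp y h)) (x : Ex.{w} E M M 1) :
    P (x.comp y h) := by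
  refine B.induction1 h2 (P := fun x => P (x.comp y h)) ?_ ?_ ?_ hy ?_ x
  · rwa [Ext.zero_comp]
  · intro x x' hx hx'
    rw [Ext.add_comp]
    exact add _ _ hx hx'
  · intro a x hx
    rw [sc_comp]
    exact scal _ _ hx
  · intro i s
    rw [Ext.comp_assoc _ _ _ (zero_add 1) h (by omega)]
    exact x0 i _

theorem comp_of_x2 (h2 : (2 : k) ≠ 0) (zero : P 0) (add : ∀ x y, P x → P y → P (x + y))
    (scal : ∀ (a : k) x, P x → P (sc a x)) (x0 : ∀ i x, P ((B.x0 i).comp x (zero_add d))) {n : ℕ}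
    (h : 2 + n = d) {y : Ex.{w} E M M n} (hy : ∀ t, P ((B.x2 t).comp y h)) (x : Ex.{w} E M M 2) :
    P (x.comp y h) := by
  refine B.induction2 h2 (P := fun x => P (x.comp y h)) ?_ ?_ ?_ hy ?_ x
  · rwa [Ext.zero_comp]
  · intro x x' hx hx'
    rw [Ext.add_comp]
    exact add _ _ hx hx'
  · intro a x hx
    rw [sc_comp]
    exact scal _ _ hx
  · intro i t
    rw [Ext.comp_assoc _ _ _ (zero_add 2) h (by omega)]
    exact x0 i _

end Products

section DegreeThree

theorem van3_x0_comp (h2 : (2 : k) ≠ 0) (h3 : (3 : k) ≠ 0) (i : Fin 3) (x : Ex.{w} E M M 3) :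
    Van.{w} B.st3 B.g3 (B.fn 6 F3) ((B.x0 i).comp x (zero_add 3)) :=
  B.van_x0_comp B.full_st3 (fun i c x hc =>
    (B.spans3 h2 h3).fn_eq_zero (B.tab_za (zL_lt i)) (by revert i; decide +kernel)
      (by revert i; decide +kernel) (B.del_eq_zero_of_rep B.g3_comp hc)) i x

theorem decomp3 (h2 : (2 : k) ≠ 0) (h3 : (3 : k) ≠ 0) :
    B.Decomp 3 (Van.{w} B.st3 B.g3 (B.fn 6 F3)) where
  zero := Van.zero
  add _ _ := Van.add
  scal a _ h := h.sc a
  x0 := B.van3_x0_comp h2 h3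
  mul m n h hm hn x y := by
    obtain ⟨rfl, rfl⟩ | ⟨rfl, rfl⟩ : m = 1 ∧ n = 2 ∨ m = 2 ∧ n = 1 := by omega
    · refine B.comp_of_x1 h2 Van.zero (fun _ _ => Van.add) (fun a _ h => h.sc a)
        (B.van3_x0_comp h2 h3) h (fun s => ?_) x
      obtain ⟨c, hc⟩ := exists_rep B.full_st2 B.g2 y
      exact ⟨_, B.x1_mul_rep2 s hc, (B.spans2 h2).fn_eq_zero (B.tab_del _ _ _)
        (by revert s; decide +kernel) (by revert s; decide +kernel)
        (B.del_eq_zero_of_rep B.g2_comp hc)⟩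
    · refine B.comp_of_x2 h2 Van.zero (fun _ _ => Van.add) (fun a _ h => h.sc a)
        (B.van3_x0_comp h2 h3) h (fun t => ?_) x
      obtain ⟨c, hc⟩ := exists_rep B.full_st1 B.g1 y
      exact ⟨_, B.x2_mul_rep1 t hc, (B.spans1 h2).fn_eq_zero (B.tab_del _ _ _)
        (by revert t; decide +kernel) (by revert t; decide +kernel)
        (B.del_eq_zero_of_rep B.g1_comp hc)⟩

theorem not_van_x3 : ¬ Van.{w} B.st3 B.g3 (B.fn 6 F3) B.x3 := by
  refine B.rep_x3.not_van (fun c hc => ?_) (B.fn_cv_eq_one (by decide +kernel))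
  obtain ⟨c, rfl⟩ := B.rep3_zero hc
  exact B.fn_comp_eq_zero (B.tab_del 5 6 D3) (by decide +kernel) c

end DegreeThree

section DegreeFour

/-- The class `x` has a representative whose value on `cyc` has no constant coefficient. -/
def Van4 (x : Ex.{w} E M M 4) : Prop :=
  ∃ φ : LinearMap.ker B.g3 →ₗ[E] M, x = B.st4.comp (hm φ) (add_zero 4) ∧ B.aug (φ B.cyc') = 0

theorem Van4.zero : B.Van4 (0 : Ex.{w} E M M 4) :=
  ⟨0, by rw [hm_zero, Ext.comp_zero], by rw [LinearMap.zero_apply, map_zero]⟩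

variable {B} in
theorem Van4.add {x y : Ex.{w} E M M 4} (hx : B.Van4 x) (hy : B.Van4 y) : B.Van4 (x + y) := by
  obtain ⟨φ, rfl, h⟩ := hx
  obtain ⟨ψ, rfl, h'⟩ := hy
  exact ⟨φ + ψ, by rw [hm_add, Ext.comp_add], by rw [LinearMap.add_apply, map_add, h, h', add_zero]⟩

variable {B} in
theorem Van4.sc {x : Ex.{w} E M M 4} (hx : B.Van4 x) (a : k) : B.Van4 (sc a x) := by
  obtain ⟨φ, rfl, h⟩ := hx
  refine ⟨cen (algebraMap k E a) (algebraMap_comm a) M ∘ₗ φ, by rw [← comp_hm_hm, FKAlg.sc, cen_comp],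
    ?_⟩
  change B.aug (algebraMap k E a • φ B.cyc') = 0
  rw [algebraMap_smul, map_smul, h, smul_zero]

theorem aug_zE_smul (i : Fin 3) (m : M) : B.aug (B.zE (zL.getD i []) • m) = 0 := by
  have h : B.fn 1 [(1, (0 : Fin 1).1 * 12)] (B.za 1 (zL.getD i []) fun _ => m) = 0 :=
    B.fn_comp_eq_zero (B.tab_za (zL_lt i)) (by revert i; decide +kernel) _
  rwa [B.fn_eq_aug] at h

theorem van4_x0_comp (i : Fin 3) (x : Ex.{w} E M M 4) :
    B.Van4 ((B.x0 i).comp x (zero_add 4)) := by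
  obtain ⟨φ, rfl⟩ := B.full_st4.exists_hm x
  exact ⟨cen (B.zE (zL.getD i [])) (B.zL_comm i) M ∘ₗ φ, by rw [← comp_hm_hm, x0, cen_comp],
    B.aug_zE_smul i _⟩

variable {B} in
theorem RadRep.van4 {x : Ex.{w} E M M 4} (h : B.RadRep B.st4 x) : B.Van4 x := by
  obtain ⟨φ, h1, h2⟩ := h
  exact ⟨φ, h1, h2 _⟩

theorem aug_lc_mp (r : ℕ) (L : List LC) (c : Fin r → M)
    (h : allZero (r * 12) (fun i => subst (cut (r * 12) (pullT 1 L) i)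
      (cut (1 * 12) (fnT [(1, 0)]))) = true) : B.aug (lc c (B.mp 1 r L fun _ => 1)) = 0 := by
  have h1 : B.fn 1 [(1, (0 : Fin 1).1 * 12)] (B.del r 1 L c) = 0 :=
    B.fn_comp_eq_zero (B.tab_del r 1 L) h c
  rw [B.fn_eq_aug] at h1
  rw [← LinearMap.comp_apply, ← B.lc_del, lc_apply]
  simpa using h1

theorem cyc_eq : B.cyc = B.mp 1 6 fL fun _ => 1 := by
  rw [mp, lc_apply]
  simp [vecs, cyc]

theorem van4_x2_comp (t : Fin 4) (y : Ex.{w} E M M 2) : B.Van4 ((B.x2 t).comp y rfl) := by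
  obtain ⟨φ, rfl⟩ := B.full_st2.exists_hm y
  obtain ⟨χ₁, χ₂, -, -, h, -, e⟩ :=
    B.exists_lift2 (B.rep_x2 t) (B.y0_cv t) (B.d1_y1 t) (B.d2_y2 t)
  refine ⟨φ ∘ₗ χ₂, ?_, ?_⟩
  · rw [← comp_hm_hm, e, Ext.comp_assoc _ _ _ rfl (add_zero 2) (by omega)]
  · have key : B.mp 5 3 D2 ∘ₗ B.mp 1 5 (kL t) = B.mp 6 3 (Y1.getD t []) ∘ₗ B.mp 1 6 fL :=
      B.mp_comp_mp (by clear h e; revert t; decide +kernel)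
    have : χ₂ B.cyc' = B.g2 (B.mp 1 5 (kL t) fun _ => 1) := Subtype.ext <| by
      rw [h]
      change B.mp 6 3 (Y1.getD t []) B.cyc = _
      rw [cyc_eq]
      exact (LinearMap.congr_fun key _).symm
    rw [LinearMap.comp_apply, this, ← LinearMap.comp_apply, ← lc_eta (φ ∘ₗ B.g2)]
    exact B.aug_lc_mp 5 (kL t) _ (by clear this key h e; revert t; decide +kernel)

theorem decomp4 (h2 : (2 : k) ≠ 0) (h3 : (3 : k) ≠ 0) : B.Decomp 4 (B.Van4 (E := E) (M := M)) where
  zero := Van4.zero B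
  add _ _ := Van4.add
  scal a _ h := h.sc a
  x0 := B.van4_x0_comp
  mul m n h hm hn x y := by
    obtain ⟨rfl, rfl⟩ | ⟨rfl, rfl⟩ | ⟨rfl, rfl⟩ :
      m = 1 ∧ n = 3 ∨ m = 2 ∧ n = 2 ∨ m = 3 ∧ n = 1 := by omega
    · exact ((B.radRep3 h2 h3 y).comp B.full_st4 h x).van4
    · exact B.comp_of_x2 h2 (Van4.zero B) (fun _ _ => Van4.add) (fun a _ h => h.sc a)
        B.van4_x0_comp h (fun t => B.van4_x2_comp t y) x
    · exact ((B.radRep1 h2 y).comp B.full_st4 h x).van4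

theorem not_van_x4 : ¬ B.Van4 (B.x4 : Ex.{w} E M M 4) := by
  rintro ⟨φ, h1, h2⟩
  have h3 : B.st4.comp (hm.{w} (B.om - φ)) (add_zero 4) = 0 := by
    rw [hm_sub, sub_eq_add_neg, Ext.comp_add, Ext.comp_neg, ← h1, x4, add_neg_cancel]
  obtain ⟨F, hF⟩ := B.faithful_st3.exists_restrict _ h3
  have h4 : F B.cyc = B.om B.cyc' - φ B.cyc' := LinearMap.congr_fun hF B.cyc'
  have h5 : B.aug (F B.cyc) = 0 := by
    rw [← lc_eta F, cyc_eq]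
    exact B.aug_lc_mp 6 fL _ (by decide +kernel)
  have h6 : B.om B.cyc' = B.bM.e 0 := by
    have := B.om_smul_cyc 1
    rwa [one_smul, one_smul] at this
  rw [h4, map_sub, h2, sub_zero, h6, B.aug_e, if_pos rfl] at h5
  exact one_ne_zero h5

end DegreeFour

section DegreeZero

theorem rep0_zero {c : Fin 1 → M}
    (h : Rep.{w} (hm (LinearMap.id : M →ₗ[E] M)) B.eps c 0) : c = 0 := by
  obtain ⟨φ, h1, h2⟩ := h
  rw [hm_id_comp, ← hm_zero] at h2
  refine lc_injective (E := E) ?_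
  rw [← h1, ← hm_injective h2, LinearMap.zero_comp, lc_zero]

theorem rep_x0 (i : Fin 3) : Rep.{w} (hm (LinearMap.id : M →ₗ[E] M)) B.eps
    (B.cv 1 (R0.getD (i.1 + 1) [])) (B.x0 i) := by
  have := B.rep_x0_comp (B.rep_one (E := E)) (i := i) (L' := R0.getD (i.1 + 1) [])
    (by revert i; decide +kernel)
  rwa [comp_hm_id] at this

/-- The class `x` is in the span of the generators of degree `0` other than the given one. -/
abbrev Van0 (i : Fin 3) : Ex.{w} E M M 0 → Prop := Van (hm LinearMap.id) B.eps (B.fn 1 (F0.getD i []))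

theorem van_one (i : Fin 3) : B.Van0 i (hm.{w} LinearMap.id) :=
  ⟨_, B.rep_one, B.fn_cv_eq_zero (by revert i; decide +kernel)⟩

theorem van_x0 {i j : Fin 3} (h : j ≠ i) : B.Van0 i (B.x0 j : Ex.{w} E M M 0) :=
  ⟨_, B.rep_x0 j, B.fn_cv_eq_zero (by revert i j; decide +kernel)⟩

theorem fn_x0 (i : Fin 3) : B.fn 1 (F0.getD i []) (B.cv 1 (R0.getD (i.1 + 1) [])) = 1 :=
  B.fn_cv_eq_one (by revert i; decide +kernel)

theorem not_van_x0 (i : Fin 3) : ¬ B.Van0 i (B.x0 i : Ex.{w} E M M 0) :=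
  (B.rep_x0 i).not_van (fun c hc => by rw [B.rep0_zero hc, map_zero]) (B.fn_x0 i)

theorem van_x0_comp_of_ne (h2 : (2 : k) ≠ 0) {i j : Fin 3} (h : j ≠ i) (y : Ex.{w} E M M 0) :
    B.Van0 i ((B.x0 j).comp y (zero_add 0)) := by
  obtain ⟨c, hc⟩ := exists_rep full_id B.eps y
  exact ⟨_, hc.central' (B.zL_comm j), (B.spans0 h2).fn_eq_zero (B.tab_za (zL_lt j))
    (by revert i j; decide +kernel) (by revert i j; decide +kernel)
    (B.del_eq_zero_of_rep B.g0_comp hc)⟩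

theorem Van0.comp (h2 : (2 : k) ≠ 0) {i : Fin 3} {x y : Ex.{w} E M M 0} (hx : B.Van0 i x)
    (hy : B.Van0 i y) : B.Van0 i (x.comp y (zero_add 0)) := by
  obtain ⟨u, hu⟩ := exists_rep full_id B.eps ((B.x0 i).comp y (zero_add 0))
  have key := B.induction0 h2 (P := fun x => ∃ c e,
      Rep.{w} (hm (LinearMap.id : M →ₗ[E] M)) B.eps c x ∧
      Rep.{w} (hm (LinearMap.id : M →ₗ[E] M)) B.eps e (x.comp y (zero_add 0)) ∧
      B.fn 1 (F0.getD i []) e = B.fn 1 (F0.getD i []) c * B.fn 1 (F0.getD i []) u)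
  obtain ⟨c, e, hc, he, h⟩ := key
    ⟨0, 0, .zero, by rw [Ext.zero_comp]; exact .zero, by rw [map_zero, zero_mul]⟩ (by
      rintro x x' ⟨c, e, hc, he, h⟩ ⟨c', e', hc', he', h'⟩
      refine ⟨c + c', e + e', hc.add hc', ?_, by rw [map_add, map_add, h, h', add_mul]⟩
      rw [Ext.add_comp]
      exact he.add he') (by
      rintro a x ⟨c, e, hc, he, h⟩
      refine ⟨a • c, a • e, hc.sc a, ?_, by rw [map_smul, map_smul, h, smul_mul_assoc]⟩
      rw [sc_comp]
      exact he.sc a) (by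
      obtain ⟨c, hc, h⟩ := B.van_one (E := E) i
      obtain ⟨e, he, h'⟩ := hy
      exact ⟨c, e, hc, by rwa [hm_id_comp], by rw [h, h', zero_mul]⟩) (by
      intro j
      by_cases hj : j = i
      · subst hj
        exact ⟨_, u, B.rep_x0 j, hu, by rw [B.fn_x0, one_mul]⟩
      · obtain ⟨c, hc, h⟩ := B.van_x0 (E := E) hj
        obtain ⟨e, he, h'⟩ := B.van_x0_comp_of_ne h2 hj y
        exact ⟨c, e, hc, he, by rw [h, h', zero_mul]⟩) x
  obtain ⟨c', hc', h'⟩ := hx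
  refine ⟨e, he, ?_⟩
  rw [h, hc.apply_eq hc' fun c hc => by rw [B.rep0_zero hc, map_zero], h', zero_mul]

theorem closed0 (h2 : (2 : k) ≠ 0) (i : Fin 3) :
    Closed k (OnDeg 0 (B.Van0 i : Ex.{w} E M M 0 → Prop)) where
  zero n := by
    rintro rfl
    exact Van.zero
  one := onDeg_iff.2 (B.van_one i)
  add n x y hx hy := by
    rintro rfl
    exact (hx rfl).add (hy rfl)
  scal n a x hx := by
    rintro rfl
    exact (hx rfl).sc a
  mul m n x y hx hy h := by
    obtain rfl : m = 0 := by omega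
    obtain rfl : n = 0 := by omega
    exact Van0.comp B h2 (hx rfl) (hy rfl)

end DegreeZero

end BasedBimodule

end FKAlg

namespace FKAlg

open LC Module ModExt CategoryTheory CategoryTheory.Abelian

universe w

namespace BasedBimodule

variable {k E M : Type} [Field k] [Ring E] [Algebra k E] [AddCommGroup M]
    [Module k M] [Module E M] [IsScalarTower k E M] (B : BasedBimodule k E M)
    [HasExt.{w} (ModuleCat.{0} E)]

/-- The fourteen generators. -/
noncomputable def gen : ∀ i : Fin 14, Ex.{w} E M M (hhDegs i)
  | 0 => B.x0 0
  | 1 => B.x0 1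
  | 2 => B.x0 2
  | 3 => B.x1 0
  | 4 => B.x1 1
  | 5 => B.x1 2
  | 6 => B.x1 3
  | 7 => B.x1 4
  | 8 => B.x2 0
  | 9 => B.x2 1
  | 10 => B.x2 2
  | 11 => B.x2 3
  | 12 => B.x3
  | 13 => B.x4

variable {B} in
theorem hasGens {P : ∀ n, Ex.{w} E M M n → Prop} (h : ∀ i, P (hhDegs i) (B.gen i)) :
    B.HasGens P where
  x0 i := match i with
    | 0 => h 0
    | 1 => h 1
    | 2 => h 2
  x1 s := match s with
    | 0 => h 3
    | 1 => h 4
    | 2 => h 5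
    | 3 => h 6
    | 4 => h 7
  x2 t := match t with
    | 0 => h 8
    | 1 => h 9
    | 2 => h 10
    | 3 => h 11
  x3 := h 12
  x4 := h 13

theorem gen_cases {Q : ℕ → ∀ n, Ex.{w} E M M n → Prop} (h0 : ∀ i : Fin 3, Q i 0 (B.x0 i))
    (h1 : ∀ s : Fin 5, Q (3 + s) 1 (B.x1 s)) (h2 : ∀ t : Fin 4, Q (8 + t) 2 (B.x2 t))
    (h3 : Q 12 3 B.x3) (h4 : Q 13 4 B.x4) : ∀ i : Fin 14, Q i (hhDegs i) (B.gen i)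
  | 0 => h0 0
  | 1 => h0 1
  | 2 => h0 2
  | 3 => h1 0
  | 4 => h1 1
  | 5 => h1 2
  | 6 => h1 3
  | 7 => h1 4
  | 8 => h2 0
  | 9 => h2 1
  | 10 => h2 2
  | 11 => h2 3
  | 12 => h3
  | 13 => h4

theorem exists_closed_separating (h2 : (2 : k) ≠ 0) (h3 : (3 : k) ≠ 0) (i : Fin 14) :
    ∃ P : ∀ n, Ex.{w} E M M n → Prop, Closed k P ∧
      (∀ j : Fin 14, j.1 ≠ i.1 → P _ (B.gen j)) ∧ ¬ P _ (B.gen i) := by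
  have ne {m n : ℕ} (h : m ≠ n) {a b : ℕ} {P : Ex.{w} E M M n → Prop} {x : Ex.{w} E M M m} :
      a ≠ b → OnDeg n P m x := fun _ => .of_ne h
  refine B.gen_cases (Q := fun i n x => ∃ P : ∀ n, Ex.{w} E M M n → Prop, Closed k P ∧
    (∀ j : Fin 14, j.1 ≠ i → P _ (B.gen j)) ∧ ¬ P n x) ?_ ?_ ?_ ?_ ?_ i
  · intro i
    refine ⟨_, B.closed0 h2 i, B.gen_cases (Q := fun j n x => j ≠ i → OnDeg 0 _ n x)
      (fun j h => onDeg_iff.2 (B.van_x0 (by rintro rfl; exact h rfl)))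
      (fun _ => ne (by decide)) (fun _ => ne (by decide)) (ne (by decide)) (ne (by decide)),
      fun h => B.not_van_x0 i (onDeg_iff.1 h)⟩
  · intro s
    refine ⟨_, (B.decomp1 h2 s).closed h2 one_pos, B.gen_cases
      (Q := fun j n x => j ≠ 3 + s → OnDeg 1 _ n x) (fun _ => ne (by decide))
      (fun j h => onDeg_iff.2 (B.van_x1 (by rintro rfl; exact h rfl)))
      (fun _ => ne (by decide)) (ne (by decide)) (ne (by decide)),
      fun h => B.not_van_x1 s (onDeg_iff.1 h)⟩
  · intro t
    refine ⟨_, (B.decomp2 h2 t).closed h2 two_pos, B.gen_cases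
      (Q := fun j n x => j ≠ 8 + t → OnDeg 2 _ n x) (fun _ => ne (by decide))
      (fun _ => ne (by decide))
      (fun j h => onDeg_iff.2 (B.van_x2 (by rintro rfl; exact h rfl)))
      (ne (by decide)) (ne (by decide)),
      fun h => B.not_van_x2 t (onDeg_iff.1 h)⟩
  · exact ⟨_, (B.decomp3 h2 h3).closed h2 three_pos, B.gen_cases
      (Q := fun j n x => j ≠ 12 → OnDeg 3 _ n x) (fun _ => ne (by decide))
      (fun _ => ne (by decide)) (fun _ => ne (by decide)) (fun h => absurd rfl h) (ne (by decide)),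
      fun h => B.not_van_x3 (onDeg_iff.1 h)⟩
  · exact ⟨_, (B.decomp4 h2 h3).closed h2 four_pos, B.gen_cases
      (Q := fun j n x => j ≠ 13 → OnDeg 4 _ n x) (fun _ => ne (by decide))
      (fun _ => ne (by decide)) (fun _ => ne (by decide)) (ne (by decide)) (fun h => absurd rfl h),
      fun h => B.not_van_x4 (onDeg_iff.1 h)⟩

end BasedBimodule

variable {k : Type} [Field k]

theorem mk₀_eq_hm {f : AAmod k ⟶ AAmod k} {φ : FK3 k →ₗ[FKAe k] FK3 k} (h : ∀ v, f.hom v = φ v) :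
    Ext.mk₀ f = hm.{1} φ :=
  congrArg Ext.mk₀ (ModuleCat.hom_ext (LinearMap.ext h))

theorem closed_extGen (S : ∀ n : ℕ, Set (HHExt k n)) :
    Closed.{1} k (E := FKAe k) (M := FK3 k) (ExtGen k S) where
  zero := .zero
  one := .one
  add _ := .add
  scal n c x h := by
    rw [sc, ← mk₀_eq_hm (smul_id_hom_apply c)]
    exact .smul c x h
  mul _ _ := .mul

theorem of_extGen {S : ∀ n : ℕ, Set (HHExt k n)} {P : ∀ n : ℕ, HHExt k n → Prop}
    (hP : Closed.{1} k (E := FKAe k) (M := FK3 k) P) (hS : ∀ n, ∀ x ∈ S n, P n x) {n : ℕ}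
    {x : HHExt k n} (h : ExtGen k S n x) : P n x := by
  induction h with
  | of x hx => exact hS _ x hx
  | zero n => exact hP.zero n
  | one => exact hP.one
  | add x y _ _ hx hy => exact hP.add _ _ _ hx hy
  | neg x _ hx =>
    rw [← sc_neg_one (k := k)]
    exact hP.scal _ _ _ hx
  | smul c x _ hx =>
    rw [mk₀_eq_hm (φ := cen (algebraMap k (FKAe k) c) (algebraMap_comm (E := FKAe k) c) (FK3 k))
      (smul_id_hom_apply c)]
    exact hP.scal _ _ _ hx
  | mul x y _ _ hx hy => exact hP.mul _ _ _ _ hx hy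

end FKAlg

open FKAlg in
/-- `HH^•(FK(3))` is a finitely generated `k`-algebra: it admits a minimal
generating set of exactly `14` homogeneous elements, of cohomological degrees
`0,0,0,1,1,1,1,1,2,2,2,2,3,4`. -/
theorem FK3_hochschildCohomology_finitelyGenerated
    (h2 : ringChar k ≠ 2) (h3 : ringChar k ≠ 3) :
    ∃ g : ∀ i : Fin 14, HHExt k (hhDegs i),
      (∀ (n : ℕ) (x : HHExt k n), ExtGen k (famSet k g Set.univ) n x) ∧
      (∀ i : Fin 14, ¬ ∀ (n : ℕ) (x : HHExt k n), ExtGen k (famSet k g {i}ᶜ) n x) := by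
  have h2' : (2 : k) ≠ 0 := Ring.two_ne_zero h2
  have h3' : (3 : k) ≠ 0 := fun h => by
    have h := (ringChar.spec k 3).1 (by exact_mod_cast h)
    rcases (Nat.dvd_prime Nat.prime_three).1 h with h | h
    · exact CharP.ringChar_ne_one h
    · exact h3 h
  have hgen (i : Fin 14) :
      ExtGen k (famSet k (fkBimodule k).gen Set.univ) _ ((fkBimodule k).gen i) :=
    .of _ ⟨i, trivial, rfl, rfl⟩
  refine ⟨(fkBimodule k).gen, BasedBimodule.holds (B := fkBimodule k) h2' h3'
    (closed_extGen _) (BasedBimodule.hasGens hgen), fun i h => ?_⟩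
  obtain ⟨P, hP, hj, hi⟩ := (fkBimodule k).exists_closed_separating (E := FKAe k) h2' h3' i
  refine hi (of_extGen hP ?_ (h _ _))
  rintro n x ⟨j, hne, rfl, rfl⟩
  exact hj j fun h => hne (Fin.ext h)
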